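/- arXiv:2501.14988 — 4 statements merged into one kernel-verified Lean document; each statement's English description precedes it below -/
import Mathlib

section
/- Let κ be a singular cardinal and U an ultrafilter over a set S. If U is κ⁺-decomposable and cf(κ)-decomposable, then U is κ-decomposable. -/
open Cardinal Set

universe u v

/-- An ultrafilter is uniform if all of its members have full cardinality. -/
def Uniform {α : Type u} (U : Ultrafilter α) : Prop := ∀ X ∈ U, #X = #α

/-- An ultrafilter `U` over `S` is `l`-decomposable if there is `f : S → l`
such that preimages of sets of size `< l` are not in `U`. -/
def Decomposable {S : Type u} (U : Ultrafilter S) (l : Cardinal.{v}) : Prop :=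
  ∃ f : S → l.out, ∀ X : Set l.out, #X < l → f ⁻¹' X ∉ U

/-- The character of an ultrafilter: the least cardinality of a base. -/
noncomputable def charU {α : Type u} (U : Ultrafilter α) : Cardinal.{u} :=
  sInf {c | ∃ B : Set (Set α), #B = c ∧ (∀ X ∈ B, X ∈ U) ∧ ∀ Y ∈ U, ∃ X ∈ B, X ⊆ Y}

/-- The ultrafilter number at a cardinal `κ`: the minimal character of a
uniform ultrafilter over (a set of size) `κ`. -/
noncomputable def uNumber (κ : Cardinal.{u}) : Cardinal.{u} :=
  sInf {c | ∃ U : Ultrafilter κ.out, Uniform U ∧ charU U = c}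

structure SucLike (T : Type v) [LinearOrder T] (c : Cardinal.{v}) : Prop where
  inf : ℵ₀ ≤ c
  iic : ∀ x : T, #(Iic x) ≤ c
  big : c < #T

abbrev Suc (c : Cardinal.{v}) : Type v := (Order.succ c).ord.ToType

theorem sucLike_suc {c : Cardinal.{v}} (h : ℵ₀ ≤ c) : SucLike (Suc c) c where
  inf := h
  iic := fun x => by
    have h1 : #(Iio x) < Order.succ c := mk_Iio_toType_ord_lt x
    have h2 : #(Iio x) ≤ c := Order.lt_succ_iff.1 h1
    rw [← Iio_insert]
    exact (mk_insert_le).trans ((add_le_add_left h2 1).trans (by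
      rw [add_one_eq h]))
  big := by
    rw [mk_ord_toType]; exact Order.lt_succ c

theorem mk_suc (c : Cardinal.{v}) : #(Suc c) = Order.succ c := mk_ord_toType _

theorem mk_iUnion_le_of {ι α : Type v} {c : Cardinal.{v}} (hc : ℵ₀ ≤ c) (h : #ι ≤ c)
    (A : ι → Set α) (hA : ∀ i, #(A i) ≤ c) : #(⋃ i, A i) ≤ c := by
  refine (mk_iUnion_le_sum_mk).trans ((sum_le_sum _ _ hA).trans ?_)
  rw [sum_const, lift_id, lift_id]
  exact (mul_le_mul' h le_rfl).trans (mul_eq_self hc).le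

theorem rec_exists {J : Type*} {X : Type*} [LinearOrder J] [WellFoundedLT J]
    (G : ∀ j : J, (∀ i, i < j → X) → X) : ∃ f : J → X, ∀ j, f j = G j (fun i _ => f i) :=
  ⟨WellFoundedLT.fix G, fun j => WellFoundedLT.fix_eq G j⟩

section
variable {T : Type v} [LinearOrder T] {c : Cardinal.{v}}

theorem SucLike.bnd (hT : SucLike T c) (A : Set T) (hA : #A ≤ c) : ∃ b, ∀ a ∈ A, a < b := by
  by_contra h
  push Not at h
  have : (⋃ a : A, Iic a.1) = Set.univ := by
    refine eq_univ_of_forall fun x => ?_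
    obtain ⟨a, ha, hx⟩ := h x
    exact mem_iUnion.2 ⟨⟨a, ha⟩, hx⟩
  have h2 := mk_iUnion_le_of hT.inf hA (fun a : A => Iic a.1) (fun a => hT.iic _)
  rw [this, mk_univ] at h2
  exact absurd hT.big (not_lt.2 h2)

theorem SucLike.bndr (hT : SucLike T c) {ι : Type v} (hι : #ι ≤ c) (g : ι → T) :
    ∃ b, ∀ i, g i < b := by
  obtain ⟨b, hb⟩ := hT.bnd (range g) (mk_range_le.trans hι)
  exact ⟨b, fun i => hb _ ⟨i, rfl⟩⟩

theorem SucLike.iio (hT : SucLike T c) (x : T) : #(Iio x) ≤ c :=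
  (mk_le_mk_of_subset Iio_subset_Iic_self).trans (hT.iic x)

variable [WellFoundedLT T]

theorem wf_min (P : T → Prop) (h : ∃ x, P x) : ∃ x, P x ∧ ∀ y, P y → x ≤ y := by
  obtain ⟨x, hx, hm⟩ := WellFounded.has_min (wellFounded_lt : WellFounded ((· < ·) : T → T → Prop)) {x | P x} h
  exact ⟨x, hx, fun y hy => not_lt.1 (hm y hy)⟩

/-- least strict upper bound -/
theorem SucLike.lsub (hT : SucLike T c) {ι : Type v} (hι : #ι ≤ c) (g : ι → T) :
    ∃ b, (∀ i, g i < b) ∧ ∀ b', (∀ i, g i < b') → b ≤ b' :=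
  wf_min _ (hT.bndr hι g)

theorem SucLike.lub (hT : SucLike T c) {ι : Type v} (hι : #ι ≤ c) (g : ι → T) :
    ∃ b, (∀ i, g i ≤ b) ∧ ∀ b', (∀ i, g i ≤ b') → b ≤ b' :=
  wf_min _ (let ⟨b, hb⟩ := hT.bndr hι g; ⟨b, fun i => (hb i).le⟩)

theorem SucLike.recs (hT : SucLike T c) {J : Type v} [LinearOrder J] [WellFoundedLT J]
    (hJ : ∀ j : J, #(Iio j) ≤ c) (P : Set T) (hP : ∀ x, ∃ y ∈ P, x < y) (b : T → T) :
    ∃ e : J → T, (∀ j, e j ∈ P) ∧ ∀ i j, i < j → b (e i) < e j := by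
  have H : ∀ (j : J) (g : ∀ i, i < j → T), ∃ y, y ∈ P ∧ ∀ i (h : i < j), b (g i h) < y := by
    intro j g
    obtain ⟨x, hx⟩ := hT.bndr (hJ j) (fun i : Iio j => b (g i.1 i.2))
    obtain ⟨y, hy, hxy⟩ := hP x
    exact ⟨y, hy, fun i h => (hx ⟨i, h⟩).trans hxy⟩
  choose G hG using H
  obtain ⟨e, he⟩ := rec_exists G
  refine ⟨e, fun j => ?_, fun i j h => ?_⟩
  · rw [he j]; exact (hG j _).1
  · rw [he j]; exact (hG j (fun i _ => e i)).2 i h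

theorem SucLike.iter (hT : SucLike T c) (H : T → T) (hH : ∀ x, x < H x) (x : T) :
    ∃ y, x < y ∧ ∀ z, z < y → ∃ w, z < w ∧ w < y ∧ H w < y := by
  have hs : ∀ n, H^[n] x < H^[n+1] x := fun n => by
    rw [Function.iterate_succ_apply']; exact hH _
  have hm : StrictMono (fun n => H^[n] x) := strictMono_nat_of_lt_succ hs
  obtain ⟨y, hy, hmin⟩ := hT.lsub (ι := ULift ℕ) (by simpa using hT.inf) (fun n => H^[n.down] x)
  refine ⟨y, hy ⟨0⟩, fun z hz => ?_⟩
  have : ∃ n, z ≤ H^[n] x := by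
    by_contra hc
    push Not at hc
    exact absurd (hmin z (fun i => hc _)) (not_le.2 hz)
  obtain ⟨n, hn⟩ := this
  refine ⟨H^[n+1] x, hn.trans_lt (hs n), hy ⟨n+1⟩, ?_⟩
  have := hy ⟨n+2⟩
  rwa [Function.iterate_succ_apply'] at this

theorem SucLike.unb_fiber (hT : SucLike T c) {Γ : Type v} (hΓ : #Γ ≤ c) (g : T → Γ) :
    ∃ γ, ∀ i, ∃ j, i < j ∧ g j = γ := by
  by_contra h
  push Not at h
  choose i hi using h
  obtain ⟨b, hb⟩ := hT.bndr hΓ i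
  exact hi (g b) b (hb _) rfl

/-- Closed unbounded (contains bottom). -/
def Clb (E : Set T) : Prop :=
  (∀ x, (∀ y < x, ∃ e ∈ E, y < e ∧ e < x) → x ∈ E) ∧ ∀ x, ∃ e ∈ E, x < e

theorem SucLike.clb_inter (hT : SucLike T c) {ι : Type v} (hι : #ι ≤ c) (E : ι → Set T)
    (hE : ∀ i, Clb (E i)) : Clb (⋂ i, E i) := by
  refine ⟨fun x hx => mem_iInter.2 fun i => (hE i).1 x fun y hy => ?_, fun x => ?_⟩
  · obtain ⟨e, he, h⟩ := hx y hy
    exact ⟨e, mem_iInter.1 he i, h⟩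
  · choose h hh hlt using fun i => (hE i).2
    have : ∀ w, ∃ b, w < b ∧ ∀ i, h i w < b := by
      intro w
      obtain ⟨b, hb⟩ := hT.bndr hι (fun i => h i w)
      obtain ⟨b', hb'⟩ := hT.bnd {w, b} ((Cardinal.mk_le_aleph0 (α := ({w, b} : Set T))).trans hT.inf)
      exact ⟨b', hb' w (by simp), fun i => (hb i).trans (hb' b (by simp))⟩
    choose H hH hHi using this
    obtain ⟨y, hxy, hy⟩ := hT.iter H hH x
    refine ⟨y, mem_iInter.2 fun i => (hE i).1 y fun z hz => ?_, hxy⟩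
    obtain ⟨w, hzw, hwy, hHw⟩ := hy z hz
    exact ⟨h i w, hh i w, hzw.trans (hlt i w), (hHi w i).trans hHw⟩

theorem gl_exists (E : Set T) (hE : Clb E) (γ : T) :
    ∃ g ∈ E, g ≤ γ ∧ ∀ e ∈ E, e ≤ γ → e ≤ g := by
  obtain ⟨g, hg, hmin⟩ := wf_min (fun u => ∀ e ∈ E, e ≤ γ → e ≤ u) ⟨γ, fun e _ h => h⟩
  refine ⟨g, ?_, hmin γ (fun e _ h => h), hg⟩
  by_contra hgE
  apply hgE
  refine hE.1 g fun y hy => ?_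
  by_contra hc
  push Not at hc
  refine absurd (hmin y fun e he hle => ?_) (not_le.2 hy)
  by_contra hye
  have h1 := hc e he (not_le.1 hye)
  have h2 := hg e he hle
  exact hgE (le_antisymm h1 h2 ▸ he)

end

theorem club_guess {ν₀ : Cardinal.{v}} (h0 : ℵ₀ ≤ ν₀) {T : Type v} [LinearOrder T]
    [WellFoundedLT T] (hT : SucLike T (Order.succ (Order.succ ν₀))) :
    ∃ C : T → Set T, ∀ E, Clb E → ∃ k, C k ⊆ E ∧ ν₀ < #(C k) ∧ ∀ x ∈ C k, ∃ y ∈ C k, x < y := by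
  by_contra H
  push Not at H
  set ν := Order.succ ν₀ with hν
  have h1 : ℵ₀ ≤ ν := h0.trans (Order.le_succ _)
  let P : T → Set T → Prop := fun k c => (∀ x ∈ c, x < k) ∧ (∀ x < k, ∃ y ∈ c, x < y) ∧ #c ≤ ν
  have hc : ∀ k, ∃ c, (∃ c', P k c') → P k c := by
    intro k
    by_cases h : ∃ c', P k c'
    · obtain ⟨c, hc⟩ := h; exact ⟨c, fun _ => hc⟩
    · exact ⟨∅, fun h' => absurd h' h⟩
  choose c hc using hc
  have hgl : ∀ (E : Set T), ∃ g : T → T, Clb E → ∀ γ, g γ ∈ E ∧ g γ ≤ γ ∧ ∀ e ∈ E, e ≤ γ → e ≤ g γ := by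
    intro E
    by_cases h : Clb E
    · choose g hg using gl_exists E h
      exact ⟨g, fun _ γ => hg γ⟩
    · exact ⟨id, fun h' => absurd h' h⟩
  choose gl hgl using hgl
  choose Nx hNx using fun E : Set T => H (fun k => gl E '' (c k))
  let I := Suc ν
  have hI : SucLike I ν := sucLike_suc h1
  let J := Suc ν₀
  have hJ : SucLike J ν₀ := sucLike_suc h0
  obtain ⟨E, hE⟩ := rec_exists (J := I) (X := Set T)
    (fun j g => ⋂ i : Iio j, (g i.1 i.2 ∩ Nx (g i.1 i.2)))
  have hinter2 : ∀ A B : Set T, Clb A → Clb B → Clb (A ∩ B) := by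
    intro A B hA hB
    have := hT.clb_inter (ι := ULift Bool) ((Cardinal.mk_le_aleph0).trans hT.inf)
      (fun b => if b.down then A else B) (by rintro ⟨_ | _⟩ <;> simp [hA, hB])
    convert this using 1
    ext x
    simp [ULift.forall, and_comm]
  have hEc : ∀ j, Clb (E j) := by
    intro j
    induction j using WellFoundedLT.induction with
    | ind j ih =>
      rw [hE j]
      exact hT.clb_inter ((hI.iio j).trans (Order.le_succ _)) _
        (fun i => hinter2 _ _ (ih i.1 i.2) (hNx _).1)
  have hsub : ∀ i j, i < j → E j ⊆ E i ∩ Nx (E i) := by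
    intro i j hij
    rw [hE j]
    exact iInter_subset (fun i : Iio j => E i.1 ∩ Nx (E i.1)) ⟨i, hij⟩
  have hInf : Clb (⋂ i, E i) := hT.clb_inter (by rw [mk_suc]) _ hEc
  obtain ⟨e, heE, hemono⟩ := hT.recs (J := J)
    (fun j => (hJ.iio j).trans ((Order.le_succ _).trans (Order.le_succ _))) _ hInf.2 id
  obtain ⟨k, hk, hkmin⟩ := hT.lsub (ι := J) (by rw [mk_suc]; exact Order.le_succ _) e
  have hklim : ∀ x < k, ∃ j, x < e j := by
    intro x hx
    by_contra hcon
    push Not at hcon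
    refine absurd (hkmin x fun i => ?_) (not_le.2 hx)
    obtain ⟨b, hb⟩ := hJ.bnd {i} ((Cardinal.mk_le_aleph0 (α := ({i} : Set J))).trans hJ.inf)
    exact (hemono i b (hb i rfl)).trans_le (hcon b)
  have hPk : P k (c k) := by
    apply hc
    refine ⟨range e, ?_, ?_, ?_⟩
    · rintro _ ⟨i, rfl⟩; exact hk i
    · intro x hx
      obtain ⟨j, hj⟩ := hklim x hx
      exact ⟨e j, ⟨j, rfl⟩, hj⟩
    · exact mk_range_le.trans (by rw [mk_suc])
  have hbig : ∀ X : Set T, (∀ x < k, ∃ y ∈ X, x < y ∧ y < k) → ν₀ < #X := by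
    intro X hX
    by_contra hcon
    have hx : ∀ x : X, ∃ j, x.1 < k → x.1 < e j := by
      intro x
      by_cases h : x.1 < k
      · obtain ⟨j, hj⟩ := hklim _ h; exact ⟨j, fun _ => hj⟩
      · obtain ⟨j⟩ : Nonempty J := mk_ne_zero_iff.1 (by rw [mk_suc]; exact (Order.bot_lt_succ _).ne')
        exact ⟨j, fun h' => absurd h' h⟩
    choose j hj using hx
    obtain ⟨b, hb⟩ := hJ.bndr (not_lt.1 hcon) j
    obtain ⟨x, hxX, h1, h2⟩ := hX (e b) (hk b)
    have h3 := hj ⟨x, hxX⟩ h2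
    have h4 := hemono _ _ (hb ⟨x, hxX⟩)
    exact absurd (h1.trans (h3.trans h4)) (lt_irrefl _)
  have hcof : ∀ ζ, ∀ x < k, ∃ y ∈ gl (E ζ) '' (c k), x < y ∧ y < k := by
    intro ζ x hx
    obtain ⟨j, hj⟩ := hklim x hx
    obtain ⟨γ, hγ, hlt⟩ := hPk.2.1 (e j) (hk j)
    have := hgl (E ζ) (hEc ζ) γ
    exact ⟨_, ⟨γ, hγ, rfl⟩, hj.trans_le (this.2.2 _ (mem_iInter.1 (heE j) ζ) hlt.le),
      this.2.1.trans_lt (hPk.1 γ hγ)⟩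
  have hfail : ∀ ζ, ∃ γ : c k, gl (E ζ) γ.1 ∉ Nx (E ζ) := by
    intro ζ
    by_contra hcon
    push Not at hcon
    obtain ⟨x, hx, hmax⟩ := (hNx (E ζ)).2 k (by rintro _ ⟨γ, hγ, rfl⟩; exact hcon ⟨γ, hγ⟩)
      (hbig _ (hcof ζ))
    have hxk : x < k := by
      obtain ⟨γ, hγ, rfl⟩ := hx
      exact (hgl (E ζ) (hEc ζ) γ).2.1.trans_lt (hPk.1 γ hγ)
    obtain ⟨y, hy, hxy, _⟩ := hcof ζ x hxk
    exact absurd (hmax y hy) (not_le.2 hxy)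
  choose γ hγ using hfail
  obtain ⟨γ₀, hγ₀⟩ := hI.unb_fiber hPk.2.2 γ
  obtain ⟨z, ⟨ζ, hζ, rfl⟩, hzmin⟩ := wf_min (fun z : T => ∃ ζ, γ ζ = γ₀ ∧ gl (E ζ) γ₀.1 = z) (by
    obtain ⟨i⟩ : Nonempty I := mk_ne_zero_iff.1 (by rw [mk_suc]; exact (Order.bot_lt_succ _).ne')
    obtain ⟨j, _, hj⟩ := hγ₀ i
    exact ⟨_, j, hj, rfl⟩)
  obtain ⟨j, hij, hj⟩ := hγ₀ ζ
  have h3 := hzmin _ ⟨j, hj, rfl⟩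
  have h4 := hgl (E j) (hEc j) γ₀
  have h5 := hsub _ _ hij h4.1
  have h6 := (hgl (E ζ) (hEc ζ) γ₀).2.2 _ h5.1 h4.2.1
  have h7 := le_antisymm h3 h6
  rw [← h7] at h5
  have h8 := hγ ζ
  rw [hζ] at h8
  exact h8 h5.2

theorem rank_exists {X : Type v} {κ : Cardinal.{v}} (h : #X ≤ κ) :
    ∃ r : X → Ordinal.{v}, Function.Injective r ∧ ∀ x, r x < κ.ord := by
  rw [← mk_ord_toType κ] at h
  obtain ⟨e⟩ := h
  refine ⟨fun x => Ordinal.typein (α := κ.ord.ToType) (· < ·) (e x), fun x y hxy => ?_, fun x => ?_⟩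
  · exact e.injective (Ordinal.typein_injective _ hxy)
  · have := Ordinal.typein_lt_type (α := κ.ord.ToType) (· < ·) (e x)
    simpa using this

theorem mk_rank_lt {X : Type v} (r : X → Ordinal.{v}) (hr : Function.Injective r) (o : Ordinal.{v}) :
    #{x | r x < o} ≤ o.card := by
  have h : lift.{v+1} #{x | r x < o} ≤ lift.{v} #(Iio o) := by
    refine mk_le_of_injective (α := ULift {x | r x < o}) (β := ULift (Iio o))
      (f := fun x => ⟨⟨r x.down.1, x.down.2⟩⟩) ?_
    rintro ⟨⟨x, hx⟩⟩ ⟨⟨y, hy⟩⟩ h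
    have h' : r x = r y := congrArg (fun z : ULift (Iio o) => z.down.1) h
    simp [hr h']
  rw [mk_Iio_ordinal, lift_lift] at h
  exact lift_le.1 h

theorem mk_insert_le' {T : Type v} {c : Cardinal.{v}} (hc : ℵ₀ ≤ c) (A : Set T) (x : T)
    (h : #A ≤ c) : #(insert x A : Set T) ≤ c :=
  (mk_insert_le).trans ((add_le_add_left h 1).trans (by rw [add_one_eq hc]))

/-- E is a small club of delta -/
def CofIn {K : Type v} [LinearOrder K] (κ : Cardinal.{v}) (δ : K) (E : Set K) : Prop :=
  (∀ e ∈ E, e < δ) ∧ (∀ x < δ, ∃ e ∈ E, x < e) ∧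
  (∀ x < δ, (∀ y < x, ∃ e ∈ E, y < e ∧ e < x) → x ∈ E) ∧ #E < κ

theorem seqA {K L : Type v} {κ : Cardinal.{v}} [LinearOrder K] [WellFoundedLT K] [LinearOrder L]
    [Nonempty L]
    (hlim : ∀ m < κ, Order.succ m < κ)
    (hK : SucLike K κ) (μ : L → Cardinal.{v}) (hm : Monotone μ) (hinf : ∀ ρ, ℵ₀ ≤ μ ρ)
    (hlt : ∀ ρ, μ ρ < κ) (hcof : ∀ m < κ, ∃ ρ, m ≤ μ ρ) :
    ∃ f : K → L → K, (∀ α ρ, #(Iic (f α ρ)) ≤ μ ρ) ∧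
      (∀ β α, β < α → ∀ᶠ ρ in Filter.atTop, f β ρ < f α ρ) ∧
      (∀ δ, (∃ E, CofIn κ δ E) → ∃ E : Set K, CofIn κ δ E ∧
        ∀ᶠ ρ in Filter.atTop, ∀ β ∈ E, f β ρ < f δ ρ) := by
  have hE : ∀ δ : K, ∃ E : Set K, (∀ e ∈ E, e < δ) ∧ #E < κ ∧ ((∃ E, CofIn κ δ E) → CofIn κ δ E) := by
    intro δ
    by_cases h : ∃ E, CofIn κ δ E
    · obtain ⟨E, h⟩ := h
      exact ⟨E, h.1, h.2.2.2, fun _ => h⟩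
    · refine ⟨∅, by simp, ?_, fun h' => absurd h' h⟩
      rw [mk_eq_zero]; exact aleph0_pos.trans_le hK.inf
  choose E hE1 hE2 hE3 using hE
  choose r hr hrk using fun α : K => rank_exists (hK.iio α)
  let A : ∀ (α : K) (ρ : L), Set (Iio α) := fun α ρ =>
    {β | r α β < (μ ρ).ord} ∪ {β | β.1 ∈ E α ∧ #(E α) ≤ μ ρ}
  have hA : ∀ α ρ, #(A α ρ) ≤ μ ρ := by
    intro α ρ
    refine (mk_union_le _ _).trans (add_le_of_le (hinf ρ) ?_ ?_)
    · exact (mk_rank_lt _ (hr α) _).trans (by rw [card_ord])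
    · by_cases h : #(E α) ≤ μ ρ
      · refine le_trans ?_ h
        refine mk_le_of_injective (f := fun x => ⟨x.1.1, x.2.1⟩) ?_
        rintro ⟨⟨x, hx⟩, _⟩ ⟨⟨y, hy⟩, _⟩ h
        simpa using h
      · simp [h]
  have H : ∀ (α : K) (g : ∀ β, β < α → L → K) (ρ : L), ∃ b, (∀ i : A α ρ, g i.1.1 i.1.2 ρ < b) ∧
      ∀ b', (∀ i : A α ρ, g i.1.1 i.1.2 ρ < b') → b ≤ b' := fun α g ρ =>
    hK.lsub ((hA α ρ).trans (hlt ρ).le) (fun i : A α ρ => g i.1.1 i.1.2 ρ)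
  choose G hG1 hG2 using H
  obtain ⟨f, hf⟩ := rec_exists G
  have hf1 : ∀ α ρ, ∀ i : A α ρ, f i.1.1 ρ < f α ρ := by
    intro α ρ i
    rw [hf α]; exact hG1 α (fun i _ => f i) ρ i
  have hf2 : ∀ α ρ, ∀ b, (∀ i : A α ρ, f i.1.1 ρ < b) → f α ρ ≤ b := by
    intro α ρ b hb
    rw [hf α]; exact hG2 α (fun i _ => f i) ρ b hb
  refine ⟨f, ?_, ?_, ?_⟩
  · intro α
    induction α using WellFoundedLT.induction with
    | ind α ih =>
      intro ρ
      rw [← Iio_insert]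
      refine mk_insert_le' (hinf ρ) _ _ ?_
      have : Iio (f α ρ) ⊆ ⋃ i : A α ρ, Iic (f i.1.1 ρ) := by
        intro x hx
        by_contra hc
        simp only [mem_iUnion, mem_Iic, not_exists, not_le] at hc
        exact absurd (hf2 α ρ x hc) (not_le.2 hx)
      exact (mk_le_mk_of_subset this).trans (mk_iUnion_le_of (hinf ρ) (hA α ρ) _ (fun i => ih _ i.1.2 ρ))
  · intro β α h
    have h1 := hlim _ (lt_ord.1 (hrk α ⟨β, h⟩))
    obtain ⟨ρ, hρ⟩ := hcof _ h1
    filter_upwards [Filter.eventually_ge_atTop ρ] with σ hσ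
    refine hf1 α σ ⟨⟨β, h⟩, Or.inl ?_⟩
    exact lt_ord.2 ((Order.lt_succ _).trans_le (hρ.trans (hm hσ)))
  · intro δ h
    refine ⟨E δ, hE3 δ h, ?_⟩
    obtain ⟨ρ, hρ⟩ := hcof _ (hE2 δ)
    filter_upwards [Filter.eventually_ge_atTop ρ] with σ hσ β hβ
    exact hf1 δ σ ⟨⟨β, hE1 δ β hβ⟩, Or.inr ⟨hβ, hρ.trans (hm hσ)⟩⟩

section
variable {K : Type v} [LinearOrder K] [WellFoundedLT K]

open Classical in
/-- the least element of `Y` together with the top point that is at least `x` -/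
noncomputable def up (o : K) (Y : Set K) (x : K) : K :=
  if h : ∃ y, y ∈ insert o Y ∧ x ≤ y then (wf_min _ h).choose else o

theorem up_mem (o : K) (Y : Set K) (x : K) : up o Y x ∈ insert o Y := by
  unfold up
  split_ifs with h
  · exact (wf_min _ h).choose_spec.1.1
  · simp

theorem le_up {o : K} (Y : Set K) {x : K} (hx : x ≤ o) : x ≤ up o Y x := by
  have h : ∃ y, y ∈ insert o Y ∧ x ≤ y := ⟨o, by simp, hx⟩
  unfold up
  rw [dif_pos h]
  exact (wf_min _ h).choose_spec.1.2

theorem up_le {o : K} {Y : Set K} {x y : K} (hy : y ∈ insert o Y) (hx : x ≤ y) : up o Y x ≤ y := by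
  have h : ∃ y, y ∈ insert o Y ∧ x ≤ y := ⟨y, hy, hx⟩
  unfold up
  rw [dif_pos h]
  exact (wf_min _ h).choose_spec.2 y ⟨hy, hx⟩

theorem up_le_top {o : K} {Y : Set K} {x : K} (hx : x ≤ o) : up o Y x ≤ o :=
  up_le (by simp) hx

theorem up_mono {o : K} (Y : Set K) {x x' : K} (h : x ≤ x') (hx : x' ≤ o) : up o Y x ≤ up o Y x' :=
  up_le (up_mem o Y x') (h.trans (le_up Y hx))

theorem up_anti {o : K} {Y Y' : Set K} (h : Y ⊆ Y') {x : K} (hx : x ≤ o) :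
    up o Y' x ≤ up o Y x :=
  up_le (insert_subset_insert h (up_mem o Y x)) (le_up Y hx)

end

structure Sq {K L : Type v} [LinearOrder K] [LinearOrder L] (κ : Cardinal.{v}) (o : K)
    (f : K → L → K) : Prop where
  hlim : ∀ m < κ, Order.succ m < κ
  hK : SucLike K κ
  hL : ℵ₀ ≤ #L
  hLκ : #L < κ
  lt_o : ∀ α ρ, f α ρ < o
  mono : ∀ β α, β < α → ∀ᶠ ρ in Filter.atTop, f β ρ < f α ρ
  capt : ∀ δ, (∃ E, CofIn κ δ E) → ∃ E : Set K, CofIn κ δ E ∧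
        ∀ᶠ ρ in Filter.atTop, ∀ β ∈ E, f β ρ < f δ ρ

theorem Sq.mono_le {K L : Type v} [LinearOrder K] [LinearOrder L] {κ : Cardinal.{v}} {o : K}
    {f : K → L → K} (S : Sq κ o f) {β α : K} (h : β ≤ α) :
    ∀ᶠ ρ in Filter.atTop, f β ρ ≤ f α ρ := by
  rcases h.eq_or_lt with rfl | h
  · exact Filter.Eventually.of_forall fun _ => le_rfl
  · exact (S.mono _ _ h).mono fun _ h => h.le

theorem SucLike.gt {T : Type v} [LinearOrder T] {c : Cardinal.{v}} (hT : SucLike T c) (x : T) :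
    ∃ y, x < y := by
  obtain ⟨b, hb⟩ := hT.bnd {x} ((Cardinal.mk_le_aleph0 (α := ({x} : Set T))).trans hT.inf)
  exact ⟨b, hb x rfl⟩

theorem SucLike.gt2 {T : Type v} [LinearOrder T] {c : Cardinal.{v}} (hT : SucLike T c) (x y : T) :
    ∃ z, x < z ∧ y < z := by
  obtain ⟨b, hb⟩ := hT.gt (max x y)
  exact ⟨b, (le_max_left _ _).trans_lt hb, (le_max_right _ _).trans_lt hb⟩

theorem Sq.stab {K L : Type v} [LinearOrder K] [WellFoundedLT K] [LinearOrder L] [Nonempty L]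
    {κ : Cardinal.{v}} {o : K} {f : K → L → K} (S : Sq κ o f) (Y : Set K) (hY : #Y < κ) :
    ∃ α₀, ∀ α, α₀ ≤ α → ∀ᶠ ρ in Filter.atTop, up o Y (f α ρ) = up o Y (f α₀ ρ) := by
  by_contra hcon
  push Not at hcon
  have hnx : ∀ α, ∃ α', α < α' ∧ ∃ᶠ ρ in Filter.atTop, up o Y (f α ρ) < up o Y (f α' ρ) := by
    intro α
    obtain ⟨α', hle, hfr⟩ := hcon α
    rcases hle.eq_or_lt with rfl | hlt
    · simp at hfr
    · refine ⟨α', hlt, (hfr.and_eventually (S.mono _ _ hlt)).mono ?_⟩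
      rintro ρ ⟨h1, h2⟩
      exact lt_of_le_of_ne (up_mono Y h2.le (S.lt_o _ _).le) (Ne.symm h1)
  choose nx hnx1 hnx2 using hnx
  have hcap : ∀ P : Set K, ∃ σ, (∃ σ', ∀ᶠ ρ in Filter.atTop, ∀ p ∈ P, f p ρ ≤ f σ' ρ) →
      ∀ᶠ ρ in Filter.atTop, ∀ p ∈ P, f p ρ ≤ f σ ρ := by
    intro P
    by_cases h : ∃ σ', ∀ᶠ ρ in Filter.atTop, ∀ p ∈ P, f p ρ ≤ f σ' ρ
    · obtain ⟨σ, hσ⟩ := h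
      exact ⟨σ, fun _ => hσ⟩
    · obtain ⟨x⟩ : Nonempty K := ⟨o⟩
      exact ⟨x, fun h' => absurd h' h⟩
  choose cap hcap using hcap
  set ν₀ := max #L #Y with hν₀
  have h0 : ℵ₀ ≤ ν₀ := S.hL.trans (le_max_left _ _)
  have hν₀κ : ν₀ < κ := max_lt S.hLκ hY
  set ν₂ := Order.succ (Order.succ ν₀) with hν₂
  have hν₂κ : Order.succ ν₂ < κ := S.hlim _ (S.hlim _ (S.hlim _ hν₀κ))
  let T := Suc ν₂
  have hT : SucLike T ν₂ := sucLike_suc (h0.trans ((Order.le_succ _).trans (Order.le_succ _)))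
  have hTκ : #T < κ := by rw [mk_suc]; exact hν₂κ
  obtain ⟨C, hC⟩ := club_guess h0 hT
  have hZ : ∀ (Q : T → Set K) (x : K), ∃ b, x < b ∧ ∀ k, cap (Q k) < b := by
    intro Q x
    obtain ⟨b, hb⟩ := S.hK.bndr hTκ.le (fun k => cap (Q k))
    obtain ⟨z, hz1, hz2⟩ := S.hK.gt2 x b
    exact ⟨z, hz1, fun k => (hb k).trans hz2⟩
  choose Z hZ1 hZ2 using hZ
  have hLb : ∀ (j : T) (g : Iio j → K), ∃ b, (∀ i, g i ≤ b) ∧ ∀ b', (∀ i, g i ≤ b') → b ≤ b' :=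
    fun j g => S.hK.lub ((mk_set_le _).trans hTκ.le) g
  choose lb hlb1 hlb2 using hLb
  obtain ⟨ξ, hξ⟩ := rec_exists (J := T) (X := K) (fun j g => lb j (fun i : Iio j =>
    nx (Z (fun k => {p | ∃ m, ∃ hm : m ≤ i.1, m ∈ C k ∧ g m (hm.trans_lt i.2) = p}) (g i.1 i.2))))
  set Q : T → T → Set K := fun i k => {p | ∃ m, ∃ _ : m ≤ i, m ∈ C k ∧ ξ m = p} with hQ
  set ζ : T → K := fun i => Z (Q i) (ξ i) with hζ
  set N : T → K := fun i => nx (ζ i) with hN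
  have hξ1 : ∀ i j, i < j → N i ≤ ξ j := by
    intro i j hij
    rw [hξ j]
    exact hlb1 j (fun i : Iio j => N i.1) ⟨i, hij⟩
  have hξ2 : ∀ j b, (∀ i < j, N i ≤ b) → ξ j ≤ b := by
    intro j b hb
    rw [hξ j]
    exact hlb2 j (fun i : Iio j => N i.1) b (fun i => hb i.1 i.2)
  have hξ3 : ∀ j x, x < ξ j → ∃ i < j, x < N i := by
    intro j x hx
    by_contra hc
    push Not at hc
    exact absurd (hξ2 j x hc) (not_le.2 hx)
  have hξζ : ∀ i, ξ i < ζ i := fun i => hZ1 _ _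
  have hζN : ∀ i, ζ i < N i := fun i => hnx1 _
  have hmono : StrictMono ξ := fun i j hij => ((hξζ i).trans (hζN i)).trans_le (hξ1 i j hij)
  obtain ⟨δ, hδ1, hδ2⟩ := S.hK.lsub hTκ.le ξ
  have hδ3 : ∀ x < δ, ∃ j, x < ξ j := by
    intro x hx
    by_contra hc
    push Not at hc
    refine absurd (hδ2 x fun i => ?_) (not_le.2 hx)
    obtain ⟨j, hj⟩ := hT.gt i
    exact (hmono hj).trans_le (hc j)
  have hcofin : CofIn κ δ (range ξ) := by
    refine ⟨?_, ?_, ?_, mk_range_le.trans_lt hTκ⟩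
    · rintro _ ⟨i, rfl⟩; exact hδ1 i
    · intro x hx
      obtain ⟨j, hj⟩ := hδ3 x hx
      exact ⟨_, ⟨j, rfl⟩, hj⟩
    · intro x hx hlimx
      obtain ⟨j, hj, hjmin⟩ := wf_min (fun j => x ≤ ξ j) (by
        obtain ⟨j, hj⟩ := hδ3 x hx
        exact ⟨j, hj.le⟩)
      rcases hj.eq_or_lt with h | h
      · exact ⟨j, h.symm⟩
      · obtain ⟨i, hij, hi⟩ := hξ3 j x h
        have hix : ξ i < x := by
          by_contra hc
          exact absurd (hjmin i (not_lt.1 hc)) (not_le.2 hij)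
        obtain ⟨_, ⟨m, rfl⟩, hm1, hm2⟩ := hlimx _ hix
        have := hξ1 i m (hmono.lt_iff_lt.1 hm1)
        exact absurd (hi.trans_le this) (not_lt.2 hm2.le)
  obtain ⟨E, hE, hEf⟩ := S.capt δ ⟨_, hcofin⟩
  have hClb : Clb {i | ξ i ∈ E} := by
    constructor
    · intro i hi
      refine hE.2.2.1 _ (hδ1 i) fun y hy => ?_
      obtain ⟨m, hm, hym⟩ := hξ3 i y hy
      obtain ⟨e, he, hme, hei⟩ := hi m hm
      exact ⟨ξ e, he, hym.trans_le (hξ1 _ _ hme), hmono hei⟩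
    · intro x
      have hH : ∀ w, ∃ w', w < w' ∧ ∃ e ∈ E, ξ w < e ∧ e < ξ w' := by
        intro w
        obtain ⟨e, he, hwe⟩ := hE.2.1 _ (hδ1 w)
        obtain ⟨w', hw'⟩ := hδ3 e (hE.1 e he)
        exact ⟨w', hmono.lt_iff_lt.1 (hwe.trans hw'), e, he, hwe, hw'⟩
      choose H hH1 e he hwe hew using hH
      obtain ⟨y, hxy, hy⟩ := hT.iter H hH1 x
      refine ⟨y, ?_, hxy⟩
      refine hE.2.2.1 _ (hδ1 y) fun b hb => ?_
      obtain ⟨m, hm, hbm⟩ := hξ3 y b hb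
      obtain ⟨w, hmw, hwy, hHw⟩ := hy m hm
      exact ⟨e w, he w, (hbm.trans_le (hξ1 _ _ hmw)).trans (hwe w), (hew w).trans (hmono hHw)⟩
  obtain ⟨k, hkE, hkbig, hknm⟩ := hC _ hClb
  have hsel : ∀ i : C k, ∃ i' ∈ C k, ∃ σ, i.1 < i' ∧ (∀ j ∈ C k, i.1 < j → i' ≤ j) ∧
      (∀ m ∈ C k, m ≤ i.1 → f (ξ m) σ ≤ f (ζ i) σ) ∧
      up o Y (f (ζ i) σ) < up o Y (f (ξ i') σ) := by
    rintro ⟨i, hi⟩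
    obtain ⟨i', ⟨hi', hii'⟩, hmin⟩ := wf_min (fun j => j ∈ C k ∧ i < j) (hknm i hi)
    have h1 := hcap (Q i k) ⟨δ, hEf.mono (by
      rintro ρ hρ _ ⟨m, _, hm, rfl⟩
      exact (hρ _ (hkE hm)).le)⟩
    have h2 := S.mono _ _ (show cap (Q i k) < ζ i from hZ2 _ _ _)
    have h3 : ∃ᶠ ρ in Filter.atTop, up o Y (f (ζ i) ρ) < up o Y (f (N i) ρ) := hnx2 (ζ i)
    have h4 := S.mono_le (hξ1 i i' hii')
    obtain ⟨σ, hσ3, ⟨hσ1, hσ2⟩, hσ4⟩ := (h3.and_eventually ((h1.and h2).and h4)).exists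
    refine ⟨i', hi', σ, hii', fun j hj hij => hmin j ⟨hj, hij⟩, fun m hm hmi => ?_, ?_⟩
    · exact (hσ1 _ ⟨m, hmi, hm, rfl⟩).trans hσ2.le
    · exact hσ3.trans_le (up_mono Y hσ4 (S.lt_o _ _).le)
  choose i' hi' σ hσ1 hσ2 hσ3 hσ4 using hsel
  have key : ∀ a b : C k, a.1 < b.1 → σ a = σ b →
      up o Y (f (ζ a) (σ a)) < up o Y (f (ζ b) (σ b)) := by
    intro a b hab hs
    refine (hσ4 a).trans_le ?_
    rw [hs]
    exact up_mono Y (hσ3 b _ (hi' a) (hσ2 a b.1 b.2 hab)) (S.lt_o _ _).le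
  have hinj : Function.Injective (fun i : C k =>
      ((σ i, ⟨up o Y (f (ζ i) (σ i)), up_mem _ _ _⟩) : L × (insert o Y : Set K))) := by
    intro a b hab
    simp only [Prod.mk.injEq, Subtype.mk.injEq] at hab
    rcases lt_trichotomy a.1 b.1 with h | h | h
    · exact absurd hab.2 (key a b h hab.1).ne
    · exact Subtype.ext h
    · exact absurd hab.2 (key b a h hab.1.symm).ne'
  have hle := mk_le_of_injective hinj
  rw [mk_prod, lift_id, lift_id] at hle
  refine absurd (hle.trans ?_) (not_le.2 hkbig)
  exact (mul_le_mul' (le_max_left _ _) (mk_insert_le' h0 _ _ (le_max_right _ _))).trans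
    (mul_eq_self h0).le

theorem Sq.minY {K L : Type v} [LinearOrder K] [WellFoundedLT K] [LinearOrder L] [Nonempty L]
    {κ : Cardinal.{v}} {o : K} {f : K → L → K} (S : Sq κ o f) (a : Set K → K)
    (ha : ∀ Y : Set K, #Y < κ → ∀ α, a Y ≤ α →
      ∀ᶠ ρ in Filter.atTop, up o Y (f α ρ) = up o Y (f (a Y) ρ)) :
    ∃ Y : Set K, #Y ≤ #L ∧ ∀ Y', Y ⊆ Y' → #Y' < κ →
      ∀ᶠ ρ in Filter.atTop, up o Y' (f (a Y') ρ) = up o Y (f (a Y) ρ) := by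
  by_contra hcon
  push Not at hcon
  have hnext : ∀ Y : Set K, ∃ (Y'' : Set K) (α' : K), #Y ≤ #L → Y ⊆ Y'' ∧ #Y'' ≤ #L ∧
      ∀ α₁, α' ≤ α₁ → ∃ᶠ ρ in Filter.atTop, up o Y'' (f α₁ ρ) < up o Y (f α₁ ρ) := by
    intro Y
    by_cases hY : #Y ≤ #L
    · obtain ⟨Y', hsub, hY', hfr⟩ := hcon Y hY
      set α := max (a Y) (a Y') with hα
      refine ⟨Y ∪ range (fun ρ => up o Y' (f α ρ)), α, fun _ => ⟨subset_union_left, ?_, ?_⟩⟩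
      · exact (mk_union_le _ _).trans (add_le_of_le S.hL hY mk_range_le)
      · intro α₁ hα₁
        have h1 := ha Y' hY' α₁ ((le_max_right _ _).trans hα₁)
        have h2 := ha Y (hY.trans_lt S.hLκ) α₁ ((le_max_left _ _).trans hα₁)
        have h3 := ha Y' hY' α (le_max_right _ _)
        refine (hfr.and_eventually (h1.and (h2.and h3))).mono ?_
        rintro ρ ⟨hne, e1, e2, e3⟩
        have h4 : up o (Y ∪ range (fun ρ => up o Y' (f α ρ))) (f α₁ ρ) ≤ up o Y' (f α₁ ρ) := by
          refine up_le (mem_insert_of_mem _ (Or.inr ⟨ρ, ?_⟩)) (le_up _ (S.lt_o _ _).le)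
          show up o Y' (f α ρ) = _
          rw [e1, e3]
        refine h4.trans_lt (lt_of_le_of_ne (up_anti hsub (S.lt_o _ _).le) ?_)
        rw [e1, e2]; exact hne
    · exact ⟨∅, o, fun h => absurd h hY⟩
  choose nxt α' hnext using hnext
  let I := Suc #L
  have hI : SucLike I #L := sucLike_suc S.hL
  obtain ⟨Y, hY⟩ := rec_exists (J := I) (X := Set K) (fun j g => ⋃ i : Iio j, nxt (g i.1 i.2))
  have hYc : ∀ j, #(Y j) ≤ #L := by
    intro j
    induction j using WellFoundedLT.induction with
    | ind j ih =>
      rw [hY j]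
      exact mk_iUnion_le_of S.hL (hI.iio j) _ (fun i => (hnext _ (ih i.1 i.2)).2.1)
  have hsub : ∀ i j, i < j → nxt (Y i) ⊆ Y j := by
    intro i j hij
    rw [hY j]
    exact subset_iUnion (fun i : Iio j => nxt (Y i.1)) ⟨i, hij⟩
  obtain ⟨α, hα⟩ := S.hK.bndr (ι := I) (by rw [mk_suc]; exact (S.hlim _ S.hLκ).le)
    (fun i => α' (Y i))
  choose ρ hρ using fun i => ((hnext _ (hYc i)).2.2 α (hα i).le).exists
  obtain ⟨ρ₀, hρ₀⟩ := hI.unb_fiber le_rfl ρ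
  obtain ⟨i₀⟩ : Nonempty I := mk_ne_zero_iff.1 (by rw [mk_suc]; exact (Order.bot_lt_succ _).ne')
  obtain ⟨z, ⟨i, hi, rfl⟩, hmin⟩ := wf_min (fun z => ∃ i, ρ i = ρ₀ ∧ up o (Y i) (f α ρ₀) = z) (by
    obtain ⟨j, _, hj⟩ := hρ₀ i₀
    exact ⟨_, j, hj, rfl⟩)
  obtain ⟨j, hij, hj⟩ := hρ₀ i
  have h1 := hmin _ ⟨j, hj, rfl⟩
  have h2 := hρ i
  rw [hi] at h2
  have h3 := up_anti (hsub i j hij) (S.lt_o α ρ₀).le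
  exact absurd (h1.trans h3) (not_le.2 h2)

theorem Sq.exF {K L : Type v} [LinearOrder K] [WellFoundedLT K] [LinearOrder L] [Nonempty L]
    {κ : Cardinal.{v}} {o : K} {f : K → L → K} (S : Sq κ o f) :
    ∃ F : L → K, (∀ ρ, F ρ ≤ o) ∧ (∀ α, ∀ᶠ ρ in Filter.atTop, f α ρ < F ρ) ∧
      ∀ X : Set K, #X < κ → ∃ α₀, ∀ α, α₀ ≤ α → ∀ᶠ ρ in Filter.atTop, ∀ x ∈ X,
        f α ρ ≤ x → F ρ ≤ x := by
  have hst : ∀ Y : Set K, ∃ a, #Y < κ → ∀ α, a ≤ α →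
      ∀ᶠ ρ in Filter.atTop, up o Y (f α ρ) = up o Y (f a ρ) := by
    intro Y
    by_cases h : #Y < κ
    · obtain ⟨a, ha⟩ := S.stab Y h
      exact ⟨a, fun _ => ha⟩
    · exact ⟨o, fun h' => absurd h' h⟩
  choose a ha using hst
  obtain ⟨Y, hY, hmin⟩ := S.minY a ha
  have hinf : ℵ₀ ≤ κ := S.hK.inf
  refine ⟨fun ρ => up o Y (f (a Y) ρ), fun ρ => up_le_top (S.lt_o _ _).le, ?_, ?_⟩
  · intro α
    obtain ⟨β, h1, h2⟩ := S.hK.gt2 α (a Y)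
    filter_upwards [S.mono _ _ h1, ha Y (hY.trans_lt S.hLκ) β h2.le] with ρ e1 e2
    rw [← e2]
    exact e1.trans_le (le_up _ (S.lt_o _ _).le)
  · intro X hX
    have hc : #(Y ∪ X : Set K) < κ :=
      (mk_union_le _ _).trans_lt (add_lt_of_lt hinf (hY.trans_lt S.hLκ) hX)
    refine ⟨a (Y ∪ X), fun α hα => ?_⟩
    filter_upwards [ha _ hc α hα, hmin _ subset_union_left hc] with ρ e1 e2 x hx hle
    rw [← e2, ← e1]
    exact up_le (mem_insert_of_mem _ (Or.inr hx)) hle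

/-- eventual cofinality of the values -/
theorem cofF {K L : Type v} [LinearOrder K] [WellFoundedLT K] [LinearOrder L] [Nonempty L]
    {κ : Cardinal.{v}} {o : K} {f : K → L → K} (S : Sq κ o f) (F : L → K)
    (h2 : ∀ α, ∀ᶠ ρ in Filter.atTop, f α ρ < F ρ)
    (h3 : ∀ X : Set K, #X < κ → ∃ α₀, ∀ α, α₀ ≤ α → ∀ᶠ ρ in Filter.atTop, ∀ x ∈ X,
        f α ρ ≤ x → F ρ ≤ x) (m : Cardinal.{v}) (hm : m < κ) :
    ∀ᶠ ρ in Filter.atTop, ∀ A : Set K, #A ≤ m → (∀ a ∈ A, a < F ρ) →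
      ∃ b < F ρ, ∀ a ∈ A, a ≤ b := by
  have hA : ∀ ρ, ∃ A : Set K, #A ≤ m ∧ ((∃ A : Set K, #A ≤ m ∧ (∀ a ∈ A, a < F ρ) ∧
      ∀ b < F ρ, ∃ a ∈ A, b < a) → (∀ a ∈ A, a < F ρ) ∧
      ∀ b < F ρ, ∃ a ∈ A, b < a) := by
    intro ρ
    by_cases h : ∃ A : Set K, #A ≤ m ∧ (∀ a ∈ A, a < F ρ) ∧ ∀ b < F ρ, ∃ a ∈ A, b < a
    · obtain ⟨A, h, h'⟩ := h
      exact ⟨A, h, fun _ => h'⟩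
    · exact ⟨∅, by rw [mk_eq_zero]; exact zero_le, fun h' => absurd h' h⟩
  choose A hA1 hA2 using hA
  obtain ⟨α, hα⟩ := h3 (⋃ ρ, A ρ) ((mk_iUnion_le_of (S.hL.trans (le_max_left #L m))
    (le_max_left _ _) A (fun ρ => (hA1 ρ).trans (le_max_right _ _))).trans_lt (max_lt S.hLκ hm))
  filter_upwards [hα α le_rfl, h2 α] with ρ e1 e2
  by_contra hc
  push Not at hc
  obtain ⟨B, hB1, hB2, hB3⟩ := hc
  obtain ⟨e3, e4⟩ := hA2 ρ ⟨B, hB1, hB2, hB3⟩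
  obtain ⟨x, hx, hlt⟩ := e4 _ e2
  exact absurd (e1 x (mem_iUnion.2 ⟨ρ, hx⟩) hlt.le) (not_le.2 (e3 x hx))

theorem dec_of {S : Type u} {U : Ultrafilter S} {κ : Cardinal.{v}} {W : Type v} (hW : #W = κ)
    (g : S → W) (hg : ∀ X : Set W, #X < κ → ¬ ∀ᶠ s in (U : Filter S), g s ∈ X) :
    Decomposable U κ := by
  have : #W = #κ.out := by rw [hW, mk_out]
  obtain ⟨e⟩ := Cardinal.eq.1 this
  refine ⟨fun s => e (g s), fun X hX hmem => hg (e ⁻¹' X) ?_ hmem⟩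
  rwa [mk_preimage_equiv]

/-- a regular family -/
def Rg {S : Type u} (U : Ultrafilter S) (K : Type v) [LinearOrder K] (κ : Cardinal.{v}) : Prop :=
  ∃ B : S → Set K, ∃ H : Set K, (∀ s, #(B s) < κ) ∧ (∀ x, ∃ y ∈ H, x < y) ∧
    ∀ α ∈ H, ∀ᶠ s in (U : Filter S), α ∈ B s

theorem dec_of_rg {S : Type u} {U : Ultrafilter S} {K L : Type v} [LinearOrder K] [WellFoundedLT K]
    [LinearOrder L] [Nonempty L]
    {κ : Cardinal.{v}} {o : K} {f : K → L → K} (Sf : Sq κ o f) (ho : #(Iio o) = κ)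
    (h : S → L) (hh : ∀ ρ, ∀ᶠ s in (U : Filter S), ρ ≤ h s) (hR : Rg U K κ) :
    Decomposable U κ := by
  obtain ⟨F, hF1, hF2, hF3⟩ := Sf.exF
  obtain ⟨B, H, hB, hH, hBH⟩ := hR
  choose ρ hρ using fun s => Filter.eventually_atTop.1 (cofF Sf F hF2 hF3 _ (hB s))
  set h' : S → L := fun s => max (h s) (ρ s) with hh'
  have hg : ∀ s, ∃ b < F (h' s), ∀ α ∈ B s, f α (h' s) < F (h' s) → f α (h' s) ≤ b := by
    intro s
    obtain ⟨b, hb, hb2⟩ := hρ s (h' s) (le_max_right _ _)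
      ((fun α => f α (h' s)) '' {α ∈ B s | f α (h' s) < F (h' s)})
      (mk_image_le.trans (mk_le_mk_of_subset (sep_subset _ _)))
      (by rintro _ ⟨α, ⟨_, h⟩, rfl⟩; exact h)
    exact ⟨b, hb, fun α hα hlt => hb2 _ ⟨α, ⟨hα, hlt⟩, rfl⟩⟩
  choose g hg1 hg2 using hg
  refine dec_of ho (fun s => ⟨g s, (hg1 s).trans_le (hF1 _)⟩) fun X hX hae => ?_
  obtain ⟨α₀, hα₀⟩ := hF3 (Subtype.val '' X) (mk_image_le.trans_lt hX)
  obtain ⟨α, hα, hlt⟩ := hH α₀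
  obtain ⟨ρ₁, hρ₁⟩ := Filter.eventually_atTop.1 ((hα₀ α hlt.le).and (hF2 α))
  obtain ⟨s, h1, h2, h3⟩ := (hae.and ((hBH α hα).and (hh ρ₁))).exists
  obtain ⟨e1, e2⟩ := hρ₁ (h' s) (h3.trans (le_max_left _ _))
  have := e1 (g s) ⟨_, h1, rfl⟩ (hg2 s α h2 e2)
  exact absurd this (not_le.2 (hg1 s))

theorem rg_of {S : Type u} {U : Ultrafilter S} {K : Type v} [LinearOrder K] [WellFoundedLT K]
    {κ : Cardinal.{v}} (hK : SucLike K κ) (A : S → Set K) (hA : ∀ s, #(A s) < κ)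
    (h : ∀ α, ∃ β, ∀ᶠ s in (U : Filter S), ∃ x ∈ A s, α ≤ x ∧ x < β) : Rg U K κ := by
  choose b hb using h
  obtain ⟨e, -, he⟩ := hK.recs (J := K) hK.iio Set.univ
    (fun x => by obtain ⟨y, hy⟩ := hK.gt x; exact ⟨y, trivial, hy⟩) b
  refine ⟨fun s => {i | ∃ x ∈ A s, e i ≤ x ∧ x < b (e i)}, Set.univ, fun s => ?_,
    fun x => by obtain ⟨y, hy⟩ := hK.gt x; exact ⟨y, trivial, hy⟩, fun i _ => hb (e i)⟩
  refine lt_of_le_of_lt ?_ (hA s)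
  have hc : ∀ i : {i | ∃ x ∈ A s, e i ≤ x ∧ x < b (e i)}, ∃ x : A s, e i ≤ x ∧ x < b (e i) := by
    rintro ⟨i, x, hx, h⟩
    exact ⟨⟨x, hx⟩, h⟩
  choose c hc1 hc2 using hc
  refine mk_le_of_injective (f := c) ?_
  intro i j hij
  rcases lt_trichotomy i.1 j.1 with h | h | h
  · have := (hc2 i).trans ((he _ _ h).trans_le (hc1 j))
    rw [hij] at this
    exact absurd this (lt_irrefl _)
  · exact Subtype.ext h
  · have := (hc2 j).trans ((he _ _ h).trans_le (hc1 i))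
    rw [hij] at this
    exact absurd this (lt_irrefl _)

theorem cof_small {X L : Type v} {κ : Cardinal.{v}} [LinearOrder X] (hX : #X ≤ κ)
    (hlim : ∀ m < κ, Order.succ m < κ) (hLκ : #L < κ)
    (μ : L → Cardinal.{v}) (hlt : ∀ ρ, μ ρ < κ) (hcof : ∀ m < κ, ∃ ρ, m ≤ μ ρ) :
    ∃ A : Set X, #A < κ ∧ ∀ x, ∃ e ∈ A, x ≤ e := by
  obtain ⟨r, hr, hrκ⟩ := rank_exists hX
  by_cases h : ∃ ρ, ∀ x, ∃ e ∈ {x | r x < (μ ρ).ord}, x ≤ e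
  · obtain ⟨ρ, hρ⟩ := h
    refine ⟨_, lt_of_le_of_lt (mk_rank_lt r hr _) ?_, hρ⟩
    rw [card_ord]; exact hlt ρ
  · push Not at h
    choose b hb using h
    refine ⟨range b, mk_range_le.trans_lt hLκ, fun x => ?_⟩
    obtain ⟨ρ, hρ⟩ := hcof _ (hlim _ (lt_ord.1 (hrκ x)))
    exact ⟨_, ⟨ρ, rfl⟩, (hb ρ x (lt_ord.2 ((Order.lt_succ _).trans_le hρ))).le⟩

theorem rg_of_least {S : Type u} {U : Ultrafilter S} {K L : Type v} [LinearOrder K]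
    [WellFoundedLT K] {κ : Cardinal.{v}} (hK : SucLike K κ)
    (hlim : ∀ m < κ, Order.succ m < κ) (hLκ : #L < κ)
    (μ : L → Cardinal.{v}) (hlt : ∀ ρ, μ ρ < κ) (hcof : ∀ m < κ, ∃ ρ, m ≤ μ ρ)
    (δ : S → K) (hδ : ∀ β, ∀ᶠ s in (U : Filter S), β < δ s)
    (hl : ∀ g : S → K, (∀ᶠ s in (U : Filter S), g s < δ s) →
      ∃ β, ∀ᶠ s in (U : Filter S), g s < β) : Rg U K κ := by
  choose A hA hA2 using fun s => cof_small (hK.iio (δ s)) hlim hLκ μ hlt hcof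
  refine rg_of hK (fun s => Subtype.val '' A s) (fun s => mk_image_le.trans_lt (hA s)) fun α => ?_
  have : ∀ s, ∃ x, α < δ s → (x ∈ Subtype.val '' A s ∧ α ≤ x ∧ x < δ s) := by
    intro s
    by_cases h : α < δ s
    · obtain ⟨e, he, hle⟩ := hA2 s ⟨α, h⟩
      exact ⟨e.1, fun _ => ⟨⟨e, he, rfl⟩, hle, e.2⟩⟩
    · exact ⟨α, fun h' => absurd h' h⟩
  choose g hg using this
  obtain ⟨β, hβ⟩ := hl g ((hδ α).mono fun s hs => (hg s hs).2.2)
  refine ⟨β, ?_⟩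
  filter_upwards [hβ, hδ α] with s h1 h2
  exact ⟨g s, (hg s h2).1, (hg s h2).2.1, h1⟩

theorem fin_of_anti {K : Type v} [LinearOrder K] [WellFoundedLT K] (N : Set K) (g : K → K)
    (h : ∀ i ∈ N, ∀ j ∈ N, i < j → g j < g i) : N.Finite := by
  by_contra hN
  have : Infinite N := Set.infinite_coe_iff.2 hN
  obtain ⟨e, he⟩ := exists_increasing_or_nonincreasing_subseq (α := N) (· < ·) (Infinite.natEmbedding N)
  rcases he with he | he
  · obtain ⟨z, ⟨n, rfl⟩, hz⟩ := wf_min (fun z => ∃ n, g (Infinite.natEmbedding N (e n)).1 = z) ⟨_, 0, rfl⟩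
    exact absurd (hz _ ⟨n+1, rfl⟩) (not_le.2 (h _ (Subtype.prop _) _ (Subtype.prop _)
      (he n (n+1) (Nat.lt_succ_self n))))
  · obtain ⟨z, ⟨n, rfl⟩, hz⟩ := wf_min (fun z => ∃ n, (Infinite.natEmbedding N (e n)).1 = z) ⟨_, 0, rfl⟩
    have h1 := hz _ ⟨n+1, rfl⟩
    have h2 := he n (n+1) (Nat.lt_succ_self n)
    have h3 : Infinite.natEmbedding N (e n) = Infinite.natEmbedding N (e (n+1)) :=
      le_antisymm h1 (not_lt.1 h2)
    have h4 := e.injective ((Infinite.natEmbedding N).injective h3)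
    omega

theorem dec_nonleast {S : Type u} {U : Ultrafilter S} {K : Type v} [LinearOrder K]
    [WellFoundedLT K] {κ : Cardinal.{v}} (hK : SucLike K κ) (hκ : ℵ₀ < κ) {o : K}
    (ho : #(Iio o) = κ) (hnr : ¬ Rg U K κ)
    (δ : S → K) (hδ : ∀ β, ∀ᶠ s in (U : Filter S), β < δ s)
    (hnl : ∀ δ : S → K, (∀ β, ∀ᶠ s in (U : Filter S), β < δ s) →
      ∃ g : S → K, (∀ᶠ s in (U : Filter S), g s < δ s) ∧ ∀ β, ∀ᶠ s in (U : Filter S), β < g s) :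
    Decomposable U κ := by
  have hNR : ∀ A : S → Set K, (∀ s, #(A s) < κ) → ∀ γ, ∃ α, γ < α ∧ ∀ β,
      ∀ᶠ s in (U : Filter S), ∀ x ∈ A s, α ≤ x → x < β → False := by
    intro A hA γ
    by_contra hc
    refine hnr (rg_of hK A hA fun α => ?_)
    push Not at hc
    obtain ⟨z, hz1, hz2⟩ := hK.gt2 γ α
    obtain ⟨β, hβ⟩ := hc z hz1
    refine ⟨β, hβ.mono ?_⟩
    rintro s ⟨x, hx, h1, h2, -⟩
    exact ⟨x, hx, hz2.le.trans h1, h2⟩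
  have hφ : ∀ d : K, ∃ φ : K → Ordinal.{v}, ∀ x₀, #{x | x < d ∧ φ x ≤ φ x₀} < κ := by
    intro d
    obtain ⟨r, hr, hrκ⟩ := rank_exists (hK.iio d)
    classical
    refine ⟨fun x => if h : x < d then r ⟨x, h⟩ else 0, fun x₀ => ?_⟩
    set p := (if h : x₀ < d then r ⟨x₀, h⟩ else 0) with hp
    have hpκ : p < κ.ord := by
      rw [hp]
      split_ifs with h
      · exact hrκ _
      · rw [lt_ord, Ordinal.card_zero]; exact aleph0_pos.trans hκ
    have : {x | x < d ∧ (if h : x < d then r ⟨x, h⟩ else 0) ≤ p} ⊆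
        Subtype.val '' {x : Iio d | r x < Order.succ p} := by
      rintro x ⟨hx, hle⟩
      rw [dif_pos hx] at hle
      exact ⟨⟨x, hx⟩, Order.lt_succ_iff.2 hle, rfl⟩
    refine (mk_le_mk_of_subset this).trans_lt (mk_image_le.trans_lt
      ((mk_rank_lt r hr _).trans_lt ?_))
    rw [← lt_ord]
    exact (isSuccLimit_ord hκ.le).succ_lt hpκ
  choose φ hφ using hφ
  let Q : S → K → K → K → Prop := fun s α β y =>
    β ≤ y ∧ y < δ s ∧ ∀ x, α ≤ x → x < β → φ (δ s) y < φ (δ s) x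
  choose aa haa1 haa2 using fun s α β => wf_min (fun y => y = δ s ∨ Q s α β y) ⟨δ s, Or.inl rfl⟩
  have haaδ : ∀ s α β, aa s α β ≤ δ s := fun s α β => haa2 s α β _ (Or.inl rfl)
  have hanti : ∀ s α α₂ β, α ≤ α₂ → aa s α₂ β ≤ aa s α β := by
    intro s α α₂ β h
    refine haa2 _ _ _ _ ?_
    rcases haa1 s α β with h1 | ⟨h1, h2, h3⟩
    · exact Or.inl h1
    · exact Or.inr ⟨h1, h2, fun x hx => h3 x (h.trans hx)⟩
  have hstep : ∀ α, ∃ b, ∀ t, b ≤ t → ∀ᶠ s in (U : Filter S), aa s b t < aa s α t := by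
    intro α
    obtain ⟨α', hα', hNR1⟩ := hNR (fun s => {x | x < δ s ∧ φ (δ s) x ≤ φ (δ s) α})
      (fun s => hφ _ _) α
    have hup : ∀ β, ∀ᶠ s in (U : Filter S), β < aa s α α' := by
      intro β
      obtain ⟨β', hβ'⟩ := hK.gt β
      filter_upwards [hNR1 β', hδ β] with s h1 h2
      by_contra hc
      rcases haa1 s α α' with h | ⟨h3, h4, h5⟩
      · rw [h] at hc; exact hc h2
      · exact h1 _ ⟨h4, (h5 α le_rfl hα').le⟩ h3 ((not_lt.1 hc).trans_lt hβ')
    obtain ⟨d, hd1, hd2⟩ := hnl _ hup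
    obtain ⟨b, hb, hNR2⟩ := hNR (fun s => {x | x < δ s ∧ φ (δ s) x ≤ φ (δ s) (d s)})
      (fun s => hφ _ _) α'
    refine ⟨b, fun t ht => ?_⟩
    filter_upwards [hd1, hd2 t, hNR2 t] with s h1 h2 h3
    have hdδ : d s < δ s := h1.trans_le (haaδ _ _ _)
    have e1 : aa s b t ≤ d s := by
      refine haa2 _ _ _ _ (Or.inr ⟨h2.le, hdδ, fun x hbx hxt => ?_⟩)
      by_contra hc
      exact h3 x ⟨hxt.trans (h2.trans hdδ), not_lt.1 hc⟩ hbx hxt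
    have e2 : aa s α α' ≤ aa s α t := by
      refine haa2 _ _ _ _ ?_
      rcases haa1 s α t with h | ⟨h4, h5, h6⟩
      · exact Or.inl h
      · exact Or.inr ⟨(hb.le.trans ht).trans h4, h5,
          fun x hx hx' => h6 x hx (hx'.trans_le (hb.le.trans ht))⟩
    exact e1.trans_lt (h1.trans_le e2)
  choose b hb using hstep
  obtain ⟨e, -, he⟩ := hK.recs (J := K) hK.iio Set.univ
    (fun x => by obtain ⟨y, hy⟩ := hK.gt x; exact ⟨y, trivial, hy⟩) b
  set t := e o with ht
  let N : S → Set K := fun s => {i | aa s (b (e i)) t < aa s (e i) t}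
  have hfin : ∀ s, (N s).Finite := by
    intro s
    refine fin_of_anti _ (fun i => aa s (e i) t) ?_
    intro i hi j hj hij
    exact (hanti _ _ _ _ (he i j hij).le).trans_lt hi
  have hfin' : ∀ s, {i : Iio o | i.1 ∈ N s}.Finite := fun s =>
    (hfin s).preimage (Subtype.val_injective.injOn)
  have hinfI : Infinite (Iio o) := by
    rw [infinite_iff, ho]; exact hκ.le
  refine dec_of (W := Finset (Iio o)) (by rw [mk_finset_of_infinite, ho])
    (fun s => (hfin' s).toFinset) fun X hX hae => ?_
  have hU : #(⋃ F : X, (↑F.1 : Set (Iio o))) < κ := by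
    refine (mk_iUnion_le_of (le_max_left ℵ₀ #X) (le_max_right _ _) _ fun F => ?_).trans_lt
      (max_lt hκ hX)
    exact le_max_of_le_left ((Finset.finite_toSet F.1).lt_aleph0.le)
  have : ∃ γ : Iio o, γ ∉ ⋃ F : X, (↑F.1 : Set (Iio o)) := by
    by_contra hc
    push Not at hc
    rw [Set.eq_univ_of_forall hc, mk_univ, ho] at hU
    exact lt_irrefl _ hU
  obtain ⟨γ, hγ⟩ := this
  obtain ⟨s, h1, h2⟩ := (hae.and (hb (e γ.1) t (he _ _ γ.2).le)).exists
  refine hγ (mem_iUnion.2 ⟨⟨_, h1⟩, ?_⟩)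
  simpa [N] using h2

theorem dec_to {S : Type u} {U : Ultrafilter S} {c : Cardinal.{v}} (h : Decomposable U c)
    {W : Type v} (hW : #W = c) :
    ∃ g : S → W, ∀ X : Set W, #X < c → ∀ᶠ s in (U : Filter S), g s ∉ X := by
  have : #c.out = #W := by rw [hW, mk_out]
  obtain ⟨e⟩ := Cardinal.eq.1 this
  obtain ⟨f, hf⟩ := h
  refine ⟨fun s => e (f s), fun X hX => ?_⟩
  have h1 := hf (e ⁻¹' X) (by rwa [mk_preimage_equiv])
  exact Ultrafilter.compl_mem_iff_notMem.2 h1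

theorem exists_iio {c m : Cardinal.{v}} (h : m < c) : ∃ x : c.ord.ToType, #(Iio x) = m := by
  obtain ⟨x, hx⟩ := Ordinal.typein_surj (α := c.ord.ToType) (· < ·) (o := m.ord)
    (by rw [Ordinal.type_toType]; exact ord_lt_ord.2 h)
  refine ⟨x, ?_⟩
  have h1 := Ordinal.card_typein (r := ((· < ·) : c.ord.ToType → c.ord.ToType → Prop)) x
  rw [hx, card_ord] at h1
  exact h1.symm

/-- For singular `κ`: a `κ⁺`-decomposable and `cf(κ)`-decomposable ultrafilter
is `κ`-decomposable. -/
theorem stmt12 {S : Type u} (κ : Cardinal.{v}) (hκ : ℵ₀ ≤ κ)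
    (hsing : κ.ord.cof < κ) (U : Ultrafilter S)
    (h1 : Decomposable U (Order.succ κ)) (h2 : Decomposable U κ.ord.cof) :
    Decomposable U κ := by
  have hlim : ∀ m < κ, Order.succ m < κ := by
    intro m hm
    rcases lt_or_ge m ℵ₀ with h | h
    · exact (isSuccLimit_aleph0.succ_lt h).trans_le hκ
    · refine lt_of_le_of_ne (Order.succ_le_of_lt hm) ?_
      rintro rfl
      exact hsing.ne (isRegular_succ h).cof_ord
  have hcofinf : ℵ₀ ≤ κ.ord.cof := Ordinal.aleph0_le_cof.2 (isSuccLimit_ord hκ)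
  have hκ' : ℵ₀ < κ := hcofinf.trans_lt hsing
  obtain ⟨L, hLc, hLt⟩ := Ordinal.exists_ord_cof_eq κ.ord.ToType
  rw [Ordinal.cof_toType] at hLt
  have hLcard : #L = κ.ord.cof := by
    have := congrArg Ordinal.card hLt
    simpa using this
  have hLne : Nonempty L := mk_ne_zero_iff.1 (by
    rw [hLcard]; exact (aleph0_pos.trans_le hcofinf).ne')
  let μ : L → Cardinal.{v} := fun ρ => max ℵ₀ #(Iic ρ.1)
  have hm : Monotone μ := fun a b hab =>
    max_le_max le_rfl (mk_le_mk_of_subset (Iic_subset_Iic.2 hab))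
  have hinf : ∀ ρ, ℵ₀ ≤ μ ρ := fun ρ => le_max_left _ _
  have hlt : ∀ ρ, μ ρ < κ := by
    intro ρ
    refine max_lt hκ' ?_
    rw [← Iio_insert]
    exact mk_insert_le.trans_lt (add_lt_of_lt hκ (mk_Iio_toType_ord_lt _)
      (one_lt_aleph0.trans hκ'))
  have hcof : ∀ m < κ, ∃ ρ, m ≤ μ ρ := by
    intro m hm
    obtain ⟨x, hx⟩ := exists_iio hm
    obtain ⟨y, hy, hxy⟩ := hLc x
    refine ⟨⟨y, hy⟩, le_max_of_le_right ?_⟩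
    rw [← hx]
    exact mk_le_mk_of_subset fun z hz => (le_of_lt hz).trans hxy
  have hK : SucLike (Suc κ) κ := sucLike_suc hκ
  obtain ⟨f, hf1, hf2, hf3⟩ := seqA hlim hK μ hm hinf hlt hcof
  obtain ⟨o, ho⟩ : ∃ o : Suc κ, #(Iio o) = κ := exists_iio (Order.lt_succ κ)
  have Sf : Sq κ o f := {
    hlim := hlim
    hK := hK
    hL := by rw [hLcard]; exact hcofinf
    hLκ := by rw [hLcard]; exact hsing
    lt_o := by
      intro α ρ
      by_contra hc
      have : Iio o ⊆ Iic (f α ρ) := fun z hz => (le_of_lt hz).trans (not_lt.1 hc)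
      have := mk_le_mk_of_subset this
      rw [ho] at this
      exact absurd (this.trans (hf1 α ρ)) (not_le.2 (hlt ρ))
    mono := hf2
    capt := hf3 }
  obtain ⟨h, hh⟩ := dec_to h2 hLcard
  have hh' : ∀ ρ, ∀ᶠ s in (U : Filter S), ρ ≤ h s := by
    intro ρ
    have := mk_Iio_lt ρ (by rw [hLcard, hLt])
    rw [hLcard] at this
    exact (hh _ this).mono fun s hs => not_lt.1 hs
  obtain ⟨δ, hδ⟩ := dec_to h1 (mk_suc κ)
  have hδ' : ∀ β, ∀ᶠ s in (U : Filter S), β < δ s := by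
    intro β
    exact (hδ (Iic β) (Order.lt_succ_of_le (hK.iic β))).mono fun s hs => not_le.1 hs
  by_cases hR : Rg U (Suc κ) κ
  · exact dec_of_rg Sf ho h hh' hR
  · refine dec_nonleast hK hκ' ho hR δ hδ' fun d hd => ?_
    by_contra hc
    push Not at hc
    refine hR (rg_of_least hK hlim Sf.hLκ μ hlt hcof d hd fun g hg => ?_)
    obtain ⟨β, hβ⟩ := hc g hg
    obtain ⟨β', hβ'⟩ := hK.gt β
    exact ⟨β', hβ.mono fun s hs => hs.trans_lt hβ'⟩
end

section
/- If κ is a singular cardinal of countable cofinality, then u(κ) ≤ u(κ⁺). -/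
open Cardinal Set

universe u v

namespace Stmt14

theorem exists_rec {I A : Type*} [LinearOrder I] [WellFoundedLT I]
    {P : (i : I) → (Iio i → A) → A → Prop} (h : ∀ i (g : Iio i → A), ∃ a, P i g a) :
    ∃ f : I → A, ∀ i, P i (fun k => f k) (f i) := by
  choose step hstep using h
  let f : I → A := (wellFounded_lt (α := I)).fix (fun i ih => step i (fun k => ih k.1 k.2))
  have hf : ∀ i, f i = step i (fun k => f k) := by
    intro i
    exact WellFounded.fix_eq _ _ _
  refine ⟨f, fun i => ?_⟩
  have := hstep i (fun k => f k)
  rw [← hf i] at this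
  exact this

/-- The successor cardinal as a well-order. -/
abbrev TT (c : Cardinal.{u}) : Type u := (Order.succ c).ord.ToType

theorem mk_TT (c : Cardinal.{u}) : #(TT c) = Order.succ c := mk_ord_toType _

theorem mk_Iio_ord {c : Cardinal.{u}} (k : c.ord.ToType) : #(Iio k) < c :=
  Cardinal.mk_Iio_ord_toType k

theorem TT_Iio {c : Cardinal.{u}} (i : TT c) : #(Iio i) ≤ c :=
  Order.lt_succ_iff.mp (mk_Iio_ord i)

theorem TT_bdd {c : Cardinal.{u}} (hc : ℵ₀ ≤ c) (S : Set (TT c)) (hS : #S ≤ c) :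
    ∃ b, ∀ s ∈ S, s < b := by
  by_contra! hcon
  have h1 : Order.cof (TT c) ≤ #S := Order.cof_le (fun b => by
    obtain ⟨s, hs, h⟩ := hcon b
    exact ⟨s, hs, h⟩)
  have h2 : Order.cof (TT c) = Order.succ c := by
    rw [Ordinal.cof_toType]
    exact (isRegular_succ hc).cof_eq
  rw [h2] at h1
  exact absurd (h1.trans hS) (not_le.mpr (Order.lt_succ c))

theorem stab_mono {c : Cardinal.{u}} (hc : ℵ₀ ≤ c) {B : Type u} [LinearOrder B] (h : TT c → B)
    (hm : Monotone h) (hr : #(range h) ≤ c) : ∃ i0, ∀ i ≥ i0, h i = h i0 := by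
  choose p hp using fun y : range h => y.2
  obtain ⟨i0, hi0⟩ := TT_bdd hc (range p) (mk_range_le.trans hr)
  refine ⟨i0, fun i hi => le_antisymm ?_ (hm hi)⟩
  have := hp ⟨h i, i, rfl⟩
  simp only at this
  rw [← this]
  exact hm (hi0 _ ⟨_, rfl⟩).le

theorem stab_anti {I B : Type*} [LinearOrder I] [Nonempty I] [LinearOrder B] [WellFoundedLT B]
    (h : I → B) (hm : Antitone h) : ∃ i0, ∀ i ≥ i0, h i = h i0 := by
  obtain ⟨y, ⟨i0, rfl⟩, hmin⟩ := (wellFounded_lt (α := B)).has_min (range h) (range_nonempty h)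
  exact ⟨i0, fun i hi => le_antisymm (hm hi) (not_lt.mp (hmin _ ⟨i, rfl⟩))⟩

/-- Every function to a set of size at most `κ` is almost everywhere in a set of size at most `μ`. -/
def Cov {D : Type u} (μ κ : Cardinal.{u}) (U : Ultrafilter D) : Prop :=
  ∀ A : Type u, #A ≤ κ → ∀ F : D → A, ∃ X : Set A, #X ≤ μ ∧ ∀ᶠ α in U, F α ∈ X

theorem Cov.stab {D : Type u} {μ κ c : Cardinal.{u}} {U : Ultrafilter D} (hcov : Cov μ κ U)
    (hc : ℵ₀ ≤ c) (hμ : μ ≤ c) (hcκ : c < κ) {B : Type u} (h : TT c → D → B)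
    (hst : ∀ᶠ α in U, ∃ i0, ∀ i ≥ i0, h i α = h i0 α) :
    ∃ i0, ∀ i ≥ i0, ∀ᶠ α in U, h i α = h i0 α := by
  classical
  have : Nonempty (TT c) := by
    rw [← mk_ne_zero_iff, mk_TT]; exact (Order.succ_ne_bot c)
  have hst' : ∃ F : D → TT c, ∀ᶠ α in U, ∀ i ≥ F α, h i α = h (F α) α := by
    have : ∀ α, ∃ j, (∃ i0, ∀ i ≥ i0, h i α = h i0 α) → ∀ i ≥ j, h i α = h j α := by
      intro α
      by_cases hh : ∃ i0, ∀ i ≥ i0, h i α = h i0 α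
      · obtain ⟨j, hj⟩ := hh
        exact ⟨j, fun _ => hj⟩
      · exact ⟨Classical.arbitrary _, fun h => absurd h hh⟩
    choose F hF using this
    exact ⟨F, hst.mono fun α hα => hF α hα⟩
  obtain ⟨F, hF⟩ := hst'
  obtain ⟨X, hX, hXU⟩ := hcov (TT c) (by rw [mk_TT]; exact Order.succ_le_of_lt hcκ) F
  obtain ⟨b, hb⟩ := TT_bdd hc X (hX.trans hμ)
  refine ⟨b, fun i hi => ?_⟩
  filter_upwards [hF, hXU] with α h1 h2
  rw [h1 i ((hb _ h2).le.trans hi), h1 b (hb _ h2).le]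

theorem exists_seq {κ : Cardinal.{u}} (hκ : ℵ₀ ≤ κ) {I : Type u} [LinearOrder I] [WellFoundedLT I]
    (hI : ∀ i : I, #(Iio i) ≤ κ) (b : TT κ → TT κ) :
    ∃ β : I → TT κ, ∀ i, ∀ k < i, b (β k) < β i := by
  obtain ⟨f, hf⟩ := exists_rec (I := I) (A := TT κ) (P := fun i g a => ∀ k, b (g k) < a)
    (fun i g => by
      obtain ⟨a, ha⟩ := TT_bdd hκ (range (fun k => b (g k))) (mk_range_le.trans (hI i))
      exact ⟨a, fun k => ha _ ⟨k, rfl⟩⟩)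
  exact ⟨f, fun i k hk => hf i ⟨k, hk⟩⟩

end Stmt14



namespace Stmt14

theorem mk_iUnion_le_of {I A : Type u} {μ : Cardinal.{u}} (hμ : ℵ₀ ≤ μ) (hI : #I ≤ μ)
    (f : I → Set A) (hf : ∀ i, #(f i) ≤ μ) : #(⋃ i, f i) ≤ μ := by
  refine (mk_iUnion_le f).trans ?_
  refine (mul_le_mul' hI (ciSup_le' hf)).trans ?_
  rw [mul_eq_self hμ]

theorem exists_inj (κ : Cardinal.{u}) (hκ : ℵ₀ ≤ κ) : ∃ e : TT κ → TT κ → κ.ord.ToType,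
    ∀ α, InjOn (e α) (Iio α) := by
  have hne : Nonempty κ.ord.ToType := by
    rw [← mk_ne_zero_iff, mk_ord_toType]; exact (aleph0_pos.trans_le hκ).ne'
  have : ∀ α : TT κ, ∃ e : TT κ → κ.ord.ToType, InjOn e (Iio α) := by
    intro α
    have h : #(Iio α) ≤ #κ.ord.ToType := by rw [mk_ord_toType]; exact TT_Iio α
    obtain ⟨f⟩ := h
    classical
    refine ⟨fun ζ => if h : ζ < α then f ⟨ζ, h⟩ else Classical.arbitrary _, ?_⟩
    intro x hx y hy hxy
    simp only [mem_Iio] at hx hy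
    simp only [hx, hy, dite_true] at hxy
    have := f.injective hxy
    exact congrArg Subtype.val this
  choose e he using this
  exact ⟨e, he⟩

section phi
variable {κ : Cardinal.{u}} (e : TT κ → TT κ → κ.ord.ToType)

def ZZ (X : Set κ.ord.ToType) (β α : TT κ) : Set (TT κ) :=
  {ζ | ζ = α ∨ (β < ζ ∧ ζ < α ∧ e α ζ ∈ X)}

noncomputable def phi (X : Set κ.ord.ToType) (β α : TT κ) : TT κ :=
  (wellFounded_lt (α := TT κ)).min (ZZ e X β α) ⟨α, Or.inl rfl⟩

theorem phi_mem (X : Set κ.ord.ToType) (β α : TT κ) : phi e X β α ∈ ZZ e X β α :=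
  WellFounded.min_mem _ _ _

theorem phi_le {X : Set κ.ord.ToType} {β α ζ : TT κ} (h : ζ ∈ ZZ e X β α) : phi e X β α ≤ ζ :=
  WellFounded.min_le _ h

theorem phi_le_self {X : Set κ.ord.ToType} {β α : TT κ} : phi e X β α ≤ α :=
  phi_le e (Or.inl rfl)

theorem phi_mono {X : Set κ.ord.ToType} {β β' α : TT κ} (h : β ≤ β') :
    phi e X β α ≤ phi e X β' α := by
  apply phi_le
  rcases phi_mem e X β' α with h1 | ⟨h1, h2⟩
  · exact Or.inl h1
  · exact Or.inr ⟨h.trans_lt h1, h2⟩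

theorem phi_anti {X Y : Set κ.ord.ToType} {β α : TT κ} (h : X ⊆ Y) :
    phi e Y β α ≤ phi e X β α := by
  apply phi_le
  rcases phi_mem e X β α with h1 | ⟨h1, h2, h3⟩
  · exact Or.inl h1
  · exact Or.inr ⟨h1, h2, h h3⟩

theorem phi_card (he : ∀ α, InjOn (e α) (Iio α)) {μ : Cardinal.{u}} (hμ : ℵ₀ ≤ μ)
    {X : Set κ.ord.ToType} (hX : #X ≤ μ) (α : TT κ) {I : Type u} (β : I → TT κ) :
    #(range (fun i => phi e X (β i) α)) ≤ μ := by
  have h1 : range (fun i => phi e X (β i) α) ⊆ insert α {ζ | ζ < α ∧ e α ζ ∈ X} := by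
    rintro _ ⟨i, rfl⟩
    rcases phi_mem e X (β i) α with h1 | ⟨h1, h2, h3⟩
    · exact Or.inl h1
    · exact Or.inr ⟨h2, h3⟩
  refine (mk_le_mk_of_subset h1).trans ?_
  refine mk_insert_le.trans ?_
  refine add_le_of_le hμ ?_ (one_le_aleph0.trans hμ)
  refine le_trans ?_ hX
  refine mk_le_of_injective (f := fun z => ⟨e α z.1, z.2.2⟩) ?_
  rintro ⟨a, ha⟩ ⟨b, hb⟩ hab
  simp only [Subtype.mk.injEq] at hab ⊢
  exact he α ha.1 hb.1 hab

end phi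

theorem exists_gt_TT {c : Cardinal.{u}} (hc : ℵ₀ ≤ c) (i : TT c) : ∃ j, i < j := by
  obtain ⟨b, hb⟩ := TT_bdd hc {i} (by rw [mk_singleton]; exact one_le_aleph0.trans hc)
  exact ⟨b, hb i rfl⟩

theorem wn_aux {κ μ : Cardinal.{u}} (hμ : ℵ₀ ≤ μ) (hμκ : μ < κ) (U : Ultrafilter (TT κ))
    (hU : ∀ β : TT κ, ∀ᶠ α in U, β < α) (hcov : Cov μ κ U) :
    ∃ φ : TT κ → TT κ, (∀ β, ∀ᶠ α in U, β < φ α) ∧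
      ∀ ψ : TT κ → TT κ, (∀ᶠ α in U, ψ α < φ α) → ∃ γ, ∀ᶠ α in U, ψ α ≤ γ := by
  have hκ : ℵ₀ ≤ κ := hμ.trans hμκ.le
  obtain ⟨e, he⟩ := exists_inj κ hκ
  have hneT : Nonempty (TT κ) := by
    rw [← mk_ne_zero_iff, mk_TT]; exact (Order.succ_ne_bot κ)
  have claim1 : ∀ X : Set κ.ord.ToType, #X ≤ μ → ∃ β0, ∀ β ≥ β0, ∀ᶠ α in U,
      phi e X β α = phi e X β0 α := by
    intro X hX
    by_contra! hcon
    choose b hb hb' using hcon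
    obtain ⟨β, hβ⟩ := exists_seq hκ (I := TT μ) (fun i => (TT_Iio i).trans hμκ.le) b
    have hmono : Monotone β := by
      intro k i hk
      rcases hk.eq_or_lt with rfl | hk
      · exact le_rfl
      · exact (hb _).le.trans (hβ i k hk).le
    obtain ⟨i0, hi0⟩ := hcov.stab hμ le_rfl hμκ (fun i α => phi e X (β i) α)
      (Filter.Eventually.of_forall fun α =>
        stab_mono hμ (fun i => phi e X (β i) α) (fun i j hij => phi_mono e (hmono hij))
          (phi_card e he hμ hX α β))
    obtain ⟨i, hi⟩ := exists_gt_TT hμ i0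
    have hF : ∀ᶠ _α : TT κ in U, False := by
      filter_upwards [hi0 i hi.le, hb' (β i0)] with α hα hne
      refine hne (le_antisymm ?_ (phi_mono e (hb _)))
      rw [← hα]
      exact phi_mono e (hβ i i0 hi).le
    exact hF.exists.choose_spec
  choose! β0 hβ0 using claim1
  have hUp : ∀ X : Set κ.ord.ToType, #X ≤ μ → ∀ β, ∀ᶠ α in U, β < phi e X (β0 X) α := by
    intro X hX β
    filter_upwards [hβ0 X hX (max β (β0 X)) (le_max_right _ _), hU β] with α h1 h2
    rw [← h1]
    rcases phi_mem e X (max β (β0 X)) α with h3 | ⟨h3, -⟩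
    · rw [h3]; exact h2
    · exact (le_max_left _ _).trans_lt h3
  by_contra! hcon
  have hstep : ∀ X : Set κ.ord.ToType, #X ≤ μ → ∃ X' : Set κ.ord.ToType, #X' ≤ μ ∧
      ∀ Y : Set κ.ord.ToType, #Y ≤ μ → X' ⊆ Y →
        ∀ᶠ α in U, phi e Y (β0 Y) α < phi e X (β0 X) α := by
    intro X hX
    obtain ⟨ψ, hψ1, hψ2⟩ := hcon _ (hUp X hX)
    obtain ⟨X', hX', hX'2⟩ := hcov κ.ord.ToType (by rw [mk_ord_toType]) (fun α => e α (ψ α))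
    refine ⟨X', hX', fun Y hY hXY => ?_⟩
    have h3 : ∀ᶠ α in U, β0 Y < ψ α := by
      exact hψ2 (β0 Y)
    filter_upwards [hψ1, hX'2, h3] with α h1 h2 h3
    refine lt_of_le_of_lt ?_ h1
    exact phi_le e (Or.inr ⟨h3, h1.trans_le (phi_le_self e), hXY h2⟩)
  choose! X' hX' hXX using hstep
  obtain ⟨X, hX⟩ := exists_rec (I := TT μ) (A := {X : Set κ.ord.ToType // #X ≤ μ})
    (P := fun i g a => ∀ k, X' (g k).1 ∪ (g k).1 ⊆ a.1)
    (fun i g => by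
      refine ⟨⟨⋃ k, X' (g k).1 ∪ (g k).1, mk_iUnion_le_of hμ (TT_Iio i) _ fun k => ?_⟩, fun k => ?_⟩
      · refine (mk_union_le _ _).trans (add_le_of_le hμ (hX' _ (g k).2) (g k).2)
      · exact subset_iUnion (fun k => X' (g k).1 ∪ (g k).1) k)
  have hXlt : ∀ i, ∀ k < i, X' (X k).1 ∪ (X k).1 ⊆ (X i).1 := fun i k hk => hX i ⟨k, hk⟩
  obtain ⟨βs, hβs⟩ := TT_bdd hκ (range (fun i => β0 (X i).1))
    (mk_range_le.trans (by rw [mk_TT]; exact Order.succ_le_of_lt hμκ))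
  have hne : Nonempty (TT μ) := by
    rw [← mk_ne_zero_iff, mk_TT]; exact (Order.succ_ne_bot μ)
  obtain ⟨i0, hi0⟩ := hcov.stab hμ le_rfl hμκ (fun i α => phi e (X i).1 βs α)
      (Filter.Eventually.of_forall fun α =>
        stab_anti (fun i => phi e (X i).1 βs α) (fun k i hk => by
          rcases hk.eq_or_lt with rfl | hk
          · exact le_rfl
          · exact phi_anti e (subset_union_right.trans (hXlt i k hk))))
  obtain ⟨i, hi⟩ := exists_gt_TT hμ i0
  have hF : ∀ᶠ _α : TT κ in U, False := by
    filter_upwards [hi0 i hi.le, hβ0 _ (X i).2 βs (hβs _ ⟨i, rfl⟩).le,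
      hβ0 _ (X i0).2 βs (hβs _ ⟨i0, rfl⟩).le,
      hXX _ (X i0).2 _ (X i).2 (subset_union_left.trans (hXlt i i0 hi))] with α h1 h2 h3 h4
    rw [← h2, ← h3, h1] at h4
    exact lt_irrefl _ h4
  exact hF.exists.choose_spec

theorem wn {κ μ : Cardinal.{u}} (hμ : ℵ₀ ≤ μ) (hμκ : μ < κ) (U : Ultrafilter (TT κ))
    (hU : ∀ β : TT κ, ∀ᶠ α in U, β < α) (hcov : Cov μ κ U) :
    ∃ V : Ultrafilter (TT κ), (∀ β : TT κ, ∀ᶠ α in V, β < α) ∧ Cov μ κ V ∧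
      ∀ ψ : TT κ → TT κ, (∀ᶠ α in V, ψ α < α) → ∃ γ, ∀ᶠ α in V, ψ α ≤ γ := by
  obtain ⟨φ, h1, h2⟩ := wn_aux hμ hμκ U hU hcov
  refine ⟨U.map φ, h1, ?_, ?_⟩
  · intro A hA F
    obtain ⟨X, hX, hXU⟩ := hcov A hA (F ∘ φ)
    exact ⟨X, hX, hXU⟩
  · intro ψ hψ
    exact h2 (ψ ∘ φ) hψ

end Stmt14



namespace Stmt14

/-- Sets of size less than `#(Iio r)` below `r` are bounded below `r`. -/
def Reg {K : Type u} [LinearOrder K] (r : K) : Prop :=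
  ∀ S : Set K, S ⊆ Iio r → #S < #(Iio r) → ∃ b < r, ∀ s ∈ S, s ≤ b

/-- `r` is an initial point. -/
def Ini {K : Type u} [LinearOrder K] (r : K) : Prop := ∀ s < r, #(Iio s) < #(Iio r)

theorem exists_rep {κ l : Cardinal.{u}} (h : l < κ) : ∃ χ : κ.ord.ToType,
    Ordinal.typein (α := κ.ord.ToType) (· < ·) χ = l.ord := by
  apply Ordinal.typein_surj
  rw [Ordinal.type_toType]
  exact ord_lt_ord.mpr h

theorem mk_Iio_typein {K : Type u} [LinearOrder K] [WellFoundedLT K] (χ : K) :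
    #(Iio χ) = (Ordinal.typein (α := K) (· < ·) χ).card := by
  rw [← Ordinal.type_Iio_lt, Ordinal.card_type]

theorem exists_cofun_one {κ : Cardinal.{u}} (hcof : κ.ord.cof < κ) (α : TT κ) :
    ∃ χ : κ.ord.ToType, Reg χ ∧ Ini χ ∧ ∃ c : κ.ord.ToType → TT κ,
      (∀ ι < χ, c ι < α) ∧ (∀ ζ < α, ∃ ι < χ, ζ ≤ c ι) ∧
      ∀ ι ι', ι ≤ ι' → ι' < χ → c ι ≤ c ι' := by
  classical
  set l := Order.cof (Iio α) with hl
  have hlκ : l < κ := by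
    refine lt_of_le_of_ne ((Order.cof_le_cardinalMk _).trans (TT_Iio α)) fun h => ?_
    have := Order.cof_ord_cof (Iio α)
    rw [← hl, h] at this
    exact hcof.ne this
  obtain ⟨χ, hχ⟩ := exists_rep hlκ
  have hcard : #(Iio χ) = l := by rw [mk_Iio_typein, hχ, card_ord]
  have hcofχ : Order.cof (Iio χ) = l := by
    rw [← Ordinal.cof_type, Ordinal.type_Iio_lt, hχ, hl, Order.cof_ord_cof]
  refine ⟨χ, ?_, ?_, ?_⟩
  · intro S hS hlt
    by_contra! hcon
    have h1 : Order.cof (Iio χ) ≤ #((Subtype.val : Iio χ → _) ⁻¹' S) := Order.cof_le (fun b => by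
      obtain ⟨s, hs, h⟩ := hcon b.1 b.2
      exact ⟨⟨s, hS hs⟩, hs, h.le⟩)
    rw [hcofχ, ← hcard] at h1
    refine absurd (h1.trans ?_) (not_le.mpr hlt)
    exact mk_preimage_of_injective _ _ Subtype.val_injective
  · intro s hs
    have h2 := (Ordinal.typein_lt_typein (α := κ.ord.ToType) (· < ·)).mpr hs
    rw [hχ, lt_ord, ← mk_Iio_typein] at h2
    rwa [hcard]
  · obtain ⟨s, hs, hst⟩ := Ordinal.exists_ord_cof_eq (Iio α)
    rw [← hl, ← hχ, ← Ordinal.type_Iio_lt, Ordinal.type_eq] at hst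
    obtain ⟨f⟩ := hst
    have hfm : ∀ a b, f.symm a ≤ f.symm b ↔ a ≤ b := by
      intro a b
      rw [← not_lt, ← not_lt]
      exact not_congr f.symm.map_rel_iff
    refine ⟨fun ι => if h : ι < χ then (f.symm ⟨ι, h⟩).1.1 else α, ?_, ?_, ?_⟩
    · intro ι hι
      simp only [hι, dite_true]
      exact (f.symm ⟨ι, hι⟩).1.2
    · intro ζ hζ
      obtain ⟨y, hy, hy'⟩ := hs ⟨ζ, hζ⟩
      refine ⟨(f ⟨y, hy⟩).1, (f ⟨y, hy⟩).2, ?_⟩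
      have h3 : (f ⟨y, hy⟩).1 < χ := (f ⟨y, hy⟩).2
      simp only [h3, dite_true]
      rw [RelIso.symm_apply_apply]
      exact hy'
    · intro ι ι' h h'
      simp only [h.trans_lt h', h', dite_true]
      exact (hfm ⟨ι, h.trans_lt h'⟩ ⟨ι', h'⟩).mpr h

theorem exists_cofun {κ : Cardinal.{u}} (hcof : κ.ord.cof < κ) :
    ∃ (χ : TT κ → κ.ord.ToType) (c : TT κ → κ.ord.ToType → TT κ),
      (∀ α, Reg (χ α)) ∧ (∀ α, Ini (χ α)) ∧
      (∀ α, ∀ ι < χ α, c α ι < α) ∧ (∀ α, ∀ ζ < α, ∃ ι < χ α, ζ ≤ c α ι) ∧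
      ∀ α ι ι', ι ≤ ι' → ι' < χ α → c α ι ≤ c α ι' := by
  choose χ h1 h2 c h3 h4 h5 using exists_cofun_one hcof
  exact ⟨χ, c, h1, h2, h3, h4, h5⟩

end Stmt14



namespace Stmt14

structure Ctx {κ : Cardinal.{u}} (μ : Cardinal.{u}) (U : Ultrafilter (TT κ)) where
  hμ : ℵ₀ ≤ μ
  hμκ : μ < κ
  hU : ∀ β : TT κ, ∀ᶠ α in U, β < α
  hcov : Cov μ κ U
  hwn : ∀ ψ : TT κ → TT κ, (∀ᶠ α in U, ψ α < α) → ∃ γ, ∀ᶠ α in U, ψ α ≤ γ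
  χ : TT κ → κ.ord.ToType
  c : TT κ → κ.ord.ToType → TT κ
  reg : ∀ α, Reg (χ α)
  ini : ∀ α, Ini (χ α)
  c_lt : ∀ α, ∀ ι < χ α, c α ι < α
  c_cof : ∀ α, ∀ ζ < α, ∃ ι < χ α, ζ ≤ c α ι
  c_mono : ∀ α ι ι', ι ≤ ι' → ι' < χ α → c α ι ≤ c α ι'

namespace Ctx

variable {κ : Cardinal.{u}} {μ : Cardinal.{u}} {U : Ultrafilter (TT κ)} (C : Ctx μ U)

theorem hκ (C : Ctx μ U) : ℵ₀ ≤ κ := C.hμ.trans C.hμκ.le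

theorem neT (_C : Ctx μ U) : Nonempty (TT κ) := by
  rw [← mk_ne_zero_iff, mk_TT]; exact (Order.succ_ne_bot κ)

theorem neK (C : Ctx μ U) : Nonempty κ.ord.ToType := by
  rw [← mk_ne_zero_iff, mk_ord_toType]; exact (aleph0_pos.trans_le C.hκ).ne'

noncomputable def t (β α : TT κ) : κ.ord.ToType :=
  (wellFounded_lt (α := κ.ord.ToType)).min {ι | ι = C.χ α ∨ (ι < C.χ α ∧ β ≤ C.c α ι)}
    ⟨_, Or.inl rfl⟩

theorem t_mem (β α : TT κ) : C.t β α = C.χ α ∨ (C.t β α < C.χ α ∧ β ≤ C.c α (C.t β α)) :=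
  WellFounded.min_mem (wellFounded_lt (α := κ.ord.ToType))
    {ι | ι = C.χ α ∨ (ι < C.χ α ∧ β ≤ C.c α ι)} ⟨_, Or.inl rfl⟩

theorem t_min {β α : TT κ} {ι : κ.ord.ToType} (h : ι = C.χ α ∨ (ι < C.χ α ∧ β ≤ C.c α ι)) :
    C.t β α ≤ ι :=
  WellFounded.min_le (wellFounded_lt (α := κ.ord.ToType))
    (s := {ι | ι = C.χ α ∨ (ι < C.χ α ∧ β ≤ C.c α ι)}) h

theorem t_le (β α : TT κ) : C.t β α ≤ C.χ α := C.t_min (Or.inl rfl)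

theorem t_mono {β β' α : TT κ} (h : β ≤ β') : C.t β α ≤ C.t β' α := by
  apply C.t_min
  rcases C.t_mem β' α with h1 | ⟨h1, h2⟩
  · exact Or.inl h1
  · exact Or.inr ⟨h1, h.trans h2⟩

theorem t_lt {β α : TT κ} (h : β < α) : C.t β α < C.χ α := by
  obtain ⟨ι, h1, h2⟩ := C.c_cof α β h
  exact (C.t_min (Or.inr ⟨h1, h2⟩)).trans_lt h1

theorem le_ct {β α : TT κ} (h : β < α) : β ≤ C.c α (C.t β α) := by
  rcases C.t_mem β α with h1 | h1
  · exact absurd h1 (C.t_lt h).ne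
  · exact h1.2

theorem exγ (β : TT κ) : ∃ γ, ∀ᶠ α in U, C.c α (C.t β α) < γ := by
  obtain ⟨γ, hγ⟩ := C.hwn (fun α => C.c α (C.t β α)) (by
    filter_upwards [C.hU β] with α hα
    exact C.c_lt α _ (C.t_lt hα))
  obtain ⟨γ', h⟩ := exists_gt_TT C.hκ γ
  exact ⟨γ', hγ.mono fun α hα => lt_of_le_of_lt hα h⟩

noncomputable def γ (β : TT κ) : TT κ := (C.exγ β).choose

theorem hγ (β : TT κ) : ∀ᶠ α in U, C.c α (C.t β α) < C.γ β := (C.exγ β).choose_spec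

theorem lt_γ (β : TT κ) : β < C.γ β := by
  obtain ⟨α, h1, h2⟩ := ((C.hU β).and (C.hγ β)).exists
  exact (C.le_ct h1).trans_lt h2

theorem F1 (k : κ.ord.ToType) : ∀ᶠ α in U, k < C.χ α := by
  by_contra hcon
  rw [← Ultrafilter.eventually_not] at hcon
  set d := max μ (#(Iio k)) with hd
  have hdκ : d < κ := max_lt C.hμκ (mk_Iio_ord k)
  have hdω : ℵ₀ ≤ d := C.hμ.trans (le_max_left _ _)
  obtain ⟨β, hβ⟩ := exists_seq C.hκ (I := TT d) (fun i => (TT_Iio i).trans hdκ.le) C.γ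
  have hmono : Monotone β := by
    intro k i hk
    rcases hk.eq_or_lt with rfl | hk
    · exact le_rfl
    · exact (C.lt_γ _).le.trans (hβ i k hk).le
  obtain ⟨i0, hi0⟩ := C.hcov.stab hdω (le_max_left _ _) hdκ (fun i α => C.t (β i) α) (by
    filter_upwards [hcon] with α hα
    refine stab_mono hdω (fun i => C.t (β i) α) (fun i j hij => C.t_mono (hmono hij)) ?_
    have h1 : range (fun i => C.t (β i) α) ⊆ insert k (Iio k) := by
      rintro _ ⟨i, rfl⟩
      have := (C.t_le (β i) α).trans (not_lt.mp hα)
      rcases this.eq_or_lt with h | h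
      · exact Or.inl h
      · exact Or.inr h
    refine (mk_le_mk_of_subset h1).trans (mk_insert_le.trans ?_)
    exact add_le_of_le hdω (le_max_right _ _) (one_le_aleph0.trans hdω))
  obtain ⟨i, hi⟩ := exists_gt_TT hdω i0
  have hF : ∀ᶠ _α : TT κ in U, False := by
    filter_upwards [hi0 i hi.le, C.hU (β i), C.hγ (β i0)] with α h1 h2 h3
    have h4 := C.le_ct h2
    rw [h1] at h4
    exact lt_irrefl _ (h4.trans_lt (h3.trans (hβ i i0 hi)))
  exact hF.exists.choose_spec

theorem F2 : ∃ R : Set κ.ord.ToType, #R ≤ μ ∧ (∀ r ∈ R, μ < #(Iio r)) ∧ (∀ r ∈ R, Reg r) ∧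
    (∀ r ∈ R, Ini r) ∧ ∀ᶠ α in U, C.χ α ∈ R := by
  obtain ⟨X, hX, hXU⟩ := C.hcov κ.ord.ToType (by rw [mk_ord_toType]) C.χ
  obtain ⟨k, hk⟩ := exists_rep C.hμκ
  refine ⟨{r ∈ X | μ < #(Iio r) ∧ Reg r ∧ Ini r}, (mk_le_mk_of_subset (sep_subset _ _)).trans hX,
    fun r hr => hr.2.1, fun r hr => hr.2.2.1, fun r hr => hr.2.2.2, ?_⟩
  filter_upwards [hXU, C.F1 k] with α h1 h2
  refine ⟨h1, ?_, C.reg α, C.ini α⟩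
  have := C.ini α k h2
  rwa [mk_Iio_typein, hk, card_ord] at this

end Ctx

structure Ctx2 {κ : Cardinal.{u}} (μ : Cardinal.{u}) (U : Ultrafilter (TT κ)) extends Ctx μ U where
  R : Set κ.ord.ToType
  hR : #R ≤ μ
  hRμ : ∀ r ∈ R, μ < #(Iio r)
  hRreg : ∀ r ∈ R, Reg r
  hRini : ∀ r ∈ R, Ini r
  hRχ : ∀ᶠ α in U, χ α ∈ R

namespace Ctx2

variable {κ : Cardinal.{u}} {μ : Cardinal.{u}} {U : Ultrafilter (TT κ)} (C : Ctx2 μ U)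

def PR (g : κ.ord.ToType → κ.ord.ToType) : Prop := ∀ r ∈ C.R, g r < r

theorem F3 (ν G : TT κ → κ.ord.ToType) (hν : ∀ᶠ α in U, ν α ∈ C.R) (hG : ∀ᶠ α in U, G α < ν α) :
    ∃ g, C.PR g ∧ ∀ᶠ α in U, G α ≤ g (ν α) := by
  have := C.neK
  obtain ⟨X, hX, hXU⟩ := C.hcov κ.ord.ToType (by rw [mk_ord_toType]) G
  have h : ∀ r, r ∈ C.R → ∃ b, b < r ∧ ∀ s ∈ X ∩ Iio r, s ≤ b := fun r hr =>
    C.hRreg r hr (X ∩ Iio r) inter_subset_right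
      (((mk_le_mk_of_subset inter_subset_left).trans hX).trans_lt (C.hRμ r hr))
  choose! g hg hg2 using h
  refine ⟨g, hg, ?_⟩
  filter_upwards [hν, hG, hXU] with α h1 h2 h3
  exact hg2 _ h1 _ ⟨h3, h2⟩

theorem bound {I : Type u} (hI : #I ≤ μ) (g : I → κ.ord.ToType → κ.ord.ToType)
    (hg : ∀ i, C.PR (g i)) : ∃ G, C.PR G ∧ ∀ i, ∀ r ∈ C.R, g i r ≤ G r := by
  have := C.neK
  have h : ∀ r, r ∈ C.R → ∃ b, b < r ∧ ∀ s ∈ range (fun i => g i r), s ≤ b := fun r hr =>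
    C.hRreg r hr _ (by rintro _ ⟨i, rfl⟩; exact hg i r hr)
      ((mk_range_le.trans hI).trans_lt (C.hRμ r hr))
  choose! G hG hG2 using h
  exact ⟨G, hG, fun i r hr => hG2 r hr _ ⟨i, rfl⟩⟩

theorem exx (β : TT κ) : ∃ x, C.PR x ∧ ∀ᶠ α in U, C.t β α ≤ x (C.χ α) :=
  C.F3 C.χ (C.t β) C.hRχ ((C.hU β).mono fun _ h => C.t_lt h)

theorem F4 (x : TT κ → κ.ord.ToType → κ.ord.ToType)
    (hx : ∀ β, ∀ᶠ α in U, C.t β α ≤ x β (C.χ α)) (g : κ.ord.ToType → κ.ord.ToType) (hg : C.PR g) :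
    ∃ β, ∀ᶠ α in U, g (C.χ α) < x β (C.χ α) := by
  by_contra! hcon
  obtain ⟨γ, hγ⟩ := C.hwn (fun α => C.c α (g (C.χ α))) (by
    filter_upwards [C.hRχ] with α hα
    exact C.c_lt α _ (hg _ hα))
  obtain ⟨β, hβ⟩ := exists_gt_TT C.hκ γ
  have hF : ∀ᶠ _α : TT κ in U, False := by
    filter_upwards [C.hRχ, hγ, hcon β, hx β, C.hU β] with α h1 h2 h3 h4 h5
    have h6 := C.c_mono α _ _ (h4.trans h3) (hg _ h1)
    exact lt_irrefl _ (hβ.trans_le ((C.le_ct h5).trans (h6.trans h2)))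
  exact hF.exists.choose_spec

theorem F5 (ν : TT κ → κ.ord.ToType) (hν : ∀ᶠ α in U, ν α ∈ C.R) (hχν : ∀ᶠ α in U, C.χ α < ν α)
    (f : TT κ → κ.ord.ToType → κ.ord.ToType) (hf : ∀ ξ, C.PR (f ξ)) :
    ∃ g, C.PR g ∧ ∀ ξ, ∀ᶠ α in U, f ξ (ν α) ≤ g (ν α) := by
  classical
  have := C.neK
  obtain ⟨a0⟩ := C.neT
  obtain ⟨β, hβ⟩ := exists_seq C.hκ (I := TT κ) (fun i => TT_Iio i) C.γ
  have hy : ∃ y : TT κ → κ.ord.ToType → κ.ord.ToType, (∀ z, C.PR (y z)) ∧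
      ∀ i z, β i ≤ z → z < C.γ (β i) → y z = f i := by
    refine ⟨fun z => if h : ∃ i, β i ≤ z ∧ z < C.γ (β i) then f h.choose else f a0, ?_, ?_⟩
    · intro z
      dsimp only
      split_ifs with h
      · exact hf _
      · exact hf _
    · intro i z h1 h2
      have h : ∃ i, β i ≤ z ∧ z < C.γ (β i) := ⟨i, h1, h2⟩
      simp only [h, dite_true]
      have h3 := h.choose_spec
      congr 1
      rcases lt_trichotomy h.choose i with h4 | h4 | h4
      · exact absurd (h3.2.trans ((hβ _ _ h4).trans_le h1)) (lt_irrefl _)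
      · exact h4
      · exact absurd (h2.trans ((hβ _ _ h4).trans_le h3.1)) (lt_irrefl _)
  obtain ⟨y, hyP, hy⟩ := hy
  have hG : ∀ α, ν α ∈ C.R ∧ C.χ α < ν α →
      ∃ b, b < ν α ∧ ∀ s ∈ (fun ι => y (C.c α ι) (ν α)) '' Iio (C.χ α), s ≤ b := by
    rintro α ⟨h1, h2⟩
    refine C.hRreg _ h1 _ ?_ ?_
    · rintro _ ⟨ι, -, rfl⟩
      exact hyP _ _ h1
    · exact mk_image_le.trans_lt (C.hRini _ h1 _ h2)
  choose! G hG1 hG2 using hG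
  obtain ⟨g, hg, hGg⟩ := C.F3 ν G hν (by
    filter_upwards [hν, hχν] with α h1 h2
    exact hG1 α ⟨h1, h2⟩)
  refine ⟨g, hg, fun ξ => ?_⟩
  filter_upwards [hν, hχν, hGg, C.hU (β ξ), C.hγ (β ξ)] with α h1 h2 h3 h4 h5
  refine le_trans ?_ h3
  have h6 := hy ξ _ (C.le_ct h4) h5
  have h7 := hG2 α ⟨h1, h2⟩ _ ⟨C.t (β ξ) α, C.t_lt h4, rfl⟩
  simp only [h6] at h7
  exact h7

theorem exf (k : ℕ → κ.ord.ToType) (hk : ∀ y, ∃ n, y < k n)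
    (x : TT κ → κ.ord.ToType → κ.ord.ToType) (hx : ∀ β, C.PR (x β)) :
    ∃ f : TT κ → κ.ord.ToType → κ.ord.ToType, (∀ β, C.PR (f β)) ∧
      (∀ β, ∀ r ∈ C.R, x β r ≤ f β r) ∧
      ∀ β, ∀ ξ < β, ∃ b, ∀ r ∈ C.R, b < r → f ξ r ≤ f β r := by
  have := C.neK
  obtain ⟨e, he⟩ := exists_inj κ C.hκ
  have hl : ∀ r, r ∈ C.R → ∃ b, b < r ∧ ∀ s ∈ {s | s < r ∧ s ∈ range k}, s ≤ b := by
    intro r hr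
    refine C.hRreg r hr _ (fun s hs => hs.1) ?_
    refine lt_of_le_of_lt ?_ (C.hμ.trans_lt (C.hRμ r hr))
    rw [le_aleph0_iff_set_countable]
    exact (countable_range k).mono fun s hs => hs.2
  choose! l hl hl2 using hl
  obtain ⟨f, hf⟩ := exists_rec (I := TT κ) (A := {g // C.PR g})
    (P := fun β g a => ∀ r ∈ C.R, x β r ≤ a.1 r ∧ ∀ ξ, e β ξ.1 < l r → (g ξ).1 r ≤ a.1 r)
    (fun β g => by
      have h : ∀ r, r ∈ C.R → ∃ b, b < r ∧
          ∀ s ∈ insert (x β r) ((fun ξ => (g ξ).1 r) '' {ξ | e β ξ.1 < l r}), s ≤ b := by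
        intro r hr
        refine C.hRreg r hr _ ?_ ?_
        · rintro s (rfl | ⟨ξ, -, rfl⟩)
          · exact hx _ _ hr
          · exact (g ξ).2 r hr
        · have hinf : ℵ₀ ≤ #(Iio r) := C.hμ.trans (C.hRμ r hr).le
          refine mk_insert_le.trans_lt (add_lt_of_lt hinf ?_ (one_lt_aleph0.trans_le hinf))
          refine mk_image_le.trans_lt (lt_of_le_of_lt ?_ (C.hRini r hr (l r) (hl r hr)))
          refine mk_le_of_injective (f := fun z => ⟨e β z.1.1, z.2⟩) ?_
          rintro ⟨⟨a, ha⟩, ha'⟩ ⟨⟨b, hb⟩, hb'⟩ hab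
          simp only [Subtype.mk.injEq] at hab ⊢
          exact he β ha hb (congrArg Subtype.val hab)
      choose! G hG hG2 using h
      refine ⟨⟨G, hG⟩, fun r hr => ⟨hG2 r hr _ (mem_insert _ _), fun ξ hξ => ?_⟩⟩
      exact hG2 r hr _ (mem_insert_of_mem _ ⟨ξ, hξ, rfl⟩))
  refine ⟨fun β => (f β).1, fun β => (f β).2, fun β r hr => (hf β r hr).1, fun β ξ hξ => ?_⟩
  obtain ⟨n, hn⟩ := hk (e β ξ)
  refine ⟨k n, fun r hr hnr => (hf β r hr).2 ⟨ξ, hξ⟩ ?_⟩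
  exact hn.trans_le (hl2 r hr _ ⟨hnr, n, rfl⟩)

theorem contra (C : Ctx2 μ U) (k : ℕ → κ.ord.ToType) (hk : ∀ y, ∃ n, y < k n) : False := by
  have := C.neK
  have := C.neT
  choose x hxP hx using C.exx
  obtain ⟨f, hfP, hxf, hf⟩ := C.exf k hk x hxP
  have step : ∀ G, C.PR G → ∃ (β : TT κ) (ν : TT κ → κ.ord.ToType)
      (g : κ.ord.ToType → κ.ord.ToType),
      C.PR g ∧ (∀ᶠ α in U, C.χ α < ν α) ∧ (∀ α, ν α ∈ C.R) ∧ (∀ α, G (ν α) < f β (ν α)) ∧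
      ∀ ξ, ∀ᶠ α in U, f ξ (ν α) ≤ g (ν α) := by
    intro G hG
    obtain ⟨β, hβ⟩ := C.F4 x hx G hG
    have hub : ∀ y, ∃ r, r ∈ C.R ∧ G r < f β r ∧ y < r := by
      intro y
      obtain ⟨α, h1, h2, h3⟩ := (hβ.and (C.hRχ.and (C.F1 y))).exists
      exact ⟨C.χ α, h2, h1.trans_le (hxf β _ h2), h3⟩
    choose n hn1 hn2 hn3 using hub
    obtain ⟨g, hg, hg2⟩ := C.F5 (fun α => n (C.χ α)) (Filter.Eventually.of_forall fun α => hn1 _)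
      (Filter.Eventually.of_forall fun α => hn3 _) f hfP
    exact ⟨β, fun α => n (C.χ α), g, hg, Filter.Eventually.of_forall fun α => hn3 _,
      fun α => hn1 _, fun α => hn2 _, hg2⟩
  choose! β ν g hg hν1 hν2 hν3 hν4 using step
  obtain ⟨G, hG⟩ := exists_rec (I := TT μ) (A := {G // C.PR G})
    (P := fun i h a => ∀ k, ∀ r ∈ C.R, g (h k).1 r ≤ a.1 r)
    (fun i h => by
      obtain ⟨G, hG, hG2⟩ := C.bound (TT_Iio i) (fun k => g (h k).1) (fun k => hg _ (h k).2)
      exact ⟨⟨G, hG⟩, hG2⟩)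
  obtain ⟨ξ, hξ⟩ := TT_bdd C.hκ (range (fun i => β (G i).1))
    (mk_range_le.trans (by rw [mk_TT]; exact Order.succ_le_of_lt C.hμκ))
  have hr : ∀ i, ∃ r, r ∈ C.R ∧ (G i).1 r < f ξ r ∧ f ξ r ≤ g (G i).1 r := by
    intro i
    obtain ⟨b, hb⟩ := hf ξ (β (G i).1) (hξ _ ⟨i, rfl⟩)
    obtain ⟨α, h1, h2, h3⟩ := ((C.F1 b).and ((hν1 _ (G i).2).and (hν4 _ (G i).2 ξ))).exists
    refine ⟨ν (G i).1 α, hν2 _ (G i).2 α, ?_, h3⟩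
    exact (hν3 _ (G i).2 α).trans_le (hb _ (hν2 _ (G i).2 α) (h1.trans h2))
  choose r hrR hr1 hr2 using hr
  have key : ∀ k i, k < i → r k ≠ r i := by
    intro k i hki heq
    have h1 := hG i ⟨k, hki⟩ (r i) (hrR i)
    have h2 := hr2 k
    have h3 := hr1 i
    rw [heq] at h2
    exact lt_irrefl _ (h3.trans_le (h2.trans h1))
  have hinj : Function.Injective (fun i => (⟨r i, hrR i⟩ : C.R)) := by
    intro i j hij
    simp only [Subtype.mk.injEq] at hij
    rcases lt_trichotomy i j with h | h | h
    · exact absurd hij (key _ _ h)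
    · exact h
    · exact absurd hij.symm (key _ _ h)
  have := mk_le_of_injective hinj
  rw [mk_TT] at this
  exact absurd (this.trans C.hR) (not_le.mpr (Order.lt_succ μ))

end Ctx2

theorem exists_cofseq {κ : Cardinal.{u}} (hcof : κ.ord.cof = ℵ₀) (hκ : ℵ₀ < κ) :
    ∃ k : ℕ → κ.ord.ToType, ∀ y, ∃ n, y < k n := by
  have hgt : ∀ y : κ.ord.ToType, ∃ z, y < z := by
    intro y
    by_contra! hcon
    have h1 : (univ : Set κ.ord.ToType) ⊆ insert y (Iio y) := by
      intro z _
      rcases (hcon z).eq_or_lt with h | h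
      · exact Or.inl h
      · exact Or.inr h
    have h2 := (mk_le_mk_of_subset h1).trans mk_insert_le
    rw [mk_univ, mk_ord_toType] at h2
    exact absurd h2 (not_le.mpr (add_lt_of_lt hκ.le (mk_Iio_ord y) (one_lt_aleph0.trans hκ)))
  obtain ⟨s, hs, hs'⟩ := Order.exists_cof_eq κ.ord.ToType
  rw [Ordinal.cof_toType, hcof] at hs'
  have hc : s.Countable := by
    rw [← le_aleph0_iff_set_countable]; exact hs'.le
  have hne : s.Nonempty := by
    rw [nonempty_iff_ne_empty]
    rintro rfl
    simp at hs'
    exact aleph0_ne_zero hs'.symm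
  obtain ⟨k, rfl⟩ := hc.exists_eq_range hne
  refine ⟨k, fun y => ?_⟩
  obtain ⟨z, hz⟩ := hgt y
  obtain ⟨_, ⟨n, rfl⟩, hn⟩ := hs z
  exact ⟨n, hz.trans_le hn⟩

theorem no_cov {κ μ : Cardinal.{u}} (hcof : κ.ord.cof = ℵ₀) (hκ : ℵ₀ < κ) (hμ : ℵ₀ ≤ μ)
    (hμκ : μ < κ) (U : Ultrafilter (TT κ)) (hU : ∀ β : TT κ, ∀ᶠ α in U, β < α) :
    ¬ Cov μ κ U := by
  intro hcov
  obtain ⟨V, h1, h2, h3⟩ := wn hμ hμκ U hU hcov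
  obtain ⟨χ, c, h4, h5, h6, h7, h8⟩ := exists_cofun (κ := κ) (by rw [hcof]; exact hκ)
  let C : Ctx μ V := ⟨hμ, hμκ, h1, h2, h3, χ, c, h4, h5, h6, h7, h8⟩
  obtain ⟨R, g1, g2, g3, g4, g5⟩ := C.F2
  let D : Ctx2 μ V := ⟨C, R, g1, g2, g3, g4, g5⟩
  obtain ⟨k, hk⟩ := exists_cofseq hcof hκ
  exact D.contra k hk

end Stmt14

namespace Stmt14

theorem uNumber_le {A : Type u} {κ c : Cardinal.{u}} (hA : #A = κ) (V : Ultrafilter A)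
    (hV : ∀ X ∈ V, κ ≤ #X) {I : Type u} (b : I → Set A) (hb : ∀ i, b i ∈ V)
    (hb2 : ∀ Y ∈ V, ∃ i, b i ⊆ Y) (hI : #I ≤ c) : uNumber κ ≤ c := by
  have : #A = #κ.out := by rw [mk_out, hA]
  obtain ⟨e⟩ := Cardinal.eq.mp this
  have h1 : Uniform (V.map e) := by
    intro X hX
    rw [Ultrafilter.mem_map] at hX
    refine le_antisymm (mk_set_le X) ?_
    rw [mk_out]
    exact (hV _ hX).trans (mk_preimage_of_injective _ _ e.injective)
  have h2 : charU (V.map e) ≤ #(range (fun i => e '' b i)) := by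
    refine csInf_le' ⟨range (fun i => e '' b i), rfl, ?_, ?_⟩
    · rintro _ ⟨i, rfl⟩
      rw [Ultrafilter.mem_map]
      exact Filter.mem_of_superset (hb i) (subset_preimage_image _ _)
    · intro Y hY
      obtain ⟨i, hi⟩ := hb2 _ hY
      exact ⟨_, ⟨i, rfl⟩, image_subset_iff.mpr hi⟩
  have h3 : uNumber κ ≤ charU (V.map e) := csInf_le' ⟨V.map e, h1, rfl⟩
  exact h3.trans (h2.trans (mk_range_le.trans hI))

theorem exists_uniform {κ : Cardinal.{u}} (hκ : κ.IsRegular) :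
    ∃ U : Ultrafilter κ.out, Uniform U := by
  have hne : (Filter.cocardinal κ.out hκ).NeBot := by
    rw [Filter.neBot_iff]
    intro h
    have : (∅ : Set κ.out) ∈ Filter.cocardinal κ.out hκ := by rw [h]; trivial
    rw [Filter.mem_cocardinal, compl_empty, mk_univ, mk_out] at this
    exact lt_irrefl _ this
  refine ⟨Ultrafilter.of (Filter.cocardinal κ.out hκ), fun X hX => ?_⟩
  refine le_antisymm (mk_set_le X) ?_
  rw [mk_out]
  by_contra hcon
  have h1 := Ultrafilter.of_le (Filter.cocardinal κ.out hκ)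
    (Filter.compl_mem_cocardinal_of_card_lt (hreg := hκ) (not_le.mp hcon))
  exact Ultrafilter.compl_notMem_iff.mpr hX h1

theorem main_aux {κ : Cardinal.{u}} (hcof : κ.ord.cof = ℵ₀) (hκ : ℵ₀ < κ) (W : Ultrafilter (TT κ))
    (hW : ∀ X ∈ W, κ < #X) {I : Type u} (b : I → Set (TT κ)) (hb : ∀ i, b i ∈ W)
    (hb2 : ∀ Y ∈ W, ∃ i, b i ⊆ Y) : uNumber κ ≤ #I := by
  have hU : ∀ β : TT κ, ∀ᶠ α in W, β < α := by
    intro β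
    by_contra hcon
    rw [← Ultrafilter.eventually_not] at hcon
    have h1 := hW _ hcon
    have h2 : {α | ¬ β < α} ⊆ insert β (Iio β) := by
      intro z hz
      rcases (not_lt.mp hz).eq_or_lt with h | h
      · exact Or.inl h
      · exact Or.inr h
    refine absurd h1 (not_lt.mpr ((mk_le_mk_of_subset h2).trans (mk_insert_le.trans ?_)))
    exact add_le_of_le hκ.le (TT_Iio β) (one_le_aleph0.trans hκ.le)
  have hF : ∀ μ : Cardinal.{u}, ℵ₀ ≤ μ → μ < κ → ∃ F : TT κ → κ.ord.ToType,
      ∀ X : Set κ.ord.ToType, #X ≤ μ → ¬ ∀ᶠ α in W, F α ∈ X := by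
    intro μ h1 h2
    have h3 := no_cov hcof hκ h1 h2 W hU
    unfold Cov at h3
    push Not at h3
    obtain ⟨A, hA, F, hF⟩ := h3
    rw [← mk_ord_toType κ] at hA
    obtain ⟨j⟩ := hA
    refine ⟨fun α => j (F α), fun X hX hcon => ?_⟩
    have h4 := hF (j ⁻¹' X) ((mk_preimage_of_injective _ _ j.injective).trans hX)
    obtain ⟨α, g1, g2⟩ := (hcon.and h4).exists
    exact g2 g1
  obtain ⟨k, hk⟩ := exists_cofseq hcof hκ
  let m : ℕ → Cardinal.{u} := fun n =>
    (Finset.range (n + 1)).sup' ⟨0, by simp⟩ (fun n => max ℵ₀ (#(Iio (k n))))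
  have hm1 : ∀ n, m n < κ := by
    intro n
    refine (Finset.sup'_lt_iff _).mpr ?_
    intro i _
    exact max_lt hκ (mk_Iio_ord _)
  have hm2 : ∀ i n, i ≤ n → max ℵ₀ (#(Iio (k i))) ≤ m n := by
    intro i n hin
    exact Finset.le_sup' (fun n => max ℵ₀ (#(Iio (k n)))) (by simp; omega)
  have hm3 : ∀ l < κ, ∃ n0, ∀ n ≥ n0, l ≤ m n := by
    intro l hl
    obtain ⟨y, hy⟩ := exists_rep hl
    obtain ⟨n0, hn0⟩ := hk y
    refine ⟨n0, fun n hn => le_trans ?_ (hm2 n0 n hn)⟩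
    refine le_trans ?_ (le_max_right _ _)
    have : #(Iio y) = l := by rw [mk_Iio_typein, hy, card_ord]
    rw [← this]
    exact mk_le_mk_of_subset (Iio_subset_Iio hn0.le)
  choose F hF using fun n => hF (m n) ((le_max_left _ _).trans (hm2 0 n (Nat.zero_le _))) (hm1 n)
  have hIκ : κ < #I := by
    by_contra hcon
    have hne : ∀ i, ∃ x, x ∈ b i := fun i => Ultrafilter.nonempty_of_mem (hb i)
    choose p hp using hne
    have h1 : range p ∉ W := fun h => (hW _ h).not_ge (mk_range_le.trans (not_lt.mp hcon))
    obtain ⟨i, hi⟩ := hb2 _ (Ultrafilter.compl_mem_iff_notMem.mpr h1)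
    exact hi (hp i) ⟨i, rfl⟩
  have hinf : Infinite κ.ord.ToType := by
    rw [infinite_iff, mk_ord_toType]; exact hκ.le
  by_cases hσ : ∀ P : ℕ → TT κ → Prop, (∀ n, ∀ᶠ α in W, P n α) → ∀ᶠ α in W, ∀ n, P n α
  · -- the countably complete case
    have hcont : (2 : Cardinal.{u}) ^ ℵ₀ ≤ κ := by
      by_contra hcon
      have h1 : #(TT κ) ≤ #(ULift.{u} (ℕ → Bool)) := by
        rw [mk_TT]
        refine (Order.succ_le_of_lt (not_le.mp hcon)).trans ?_
        simp
      obtain ⟨j⟩ := h1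
      have h2 : ∀ n : ℕ, ∃ v : Bool, ∀ᶠ α in W, (j α).down n = v := by
        intro n
        by_cases h : ∀ᶠ α in W, (j α).down n = true
        · exact ⟨true, h⟩
        · rw [← Ultrafilter.eventually_not] at h
          exact ⟨false, h.mono fun α hα => by simpa using hα⟩
      choose v hv using h2
      have h3 := hW _ (hσ _ hv)
      have h4 : {α | ∀ n, (j α).down n = v n}.Subsingleton := by
        intro x hx y hy
        apply j.injective
        apply ULift.down_injective
        funext n
        rw [hx n, hy n]
      have h5 : #{α | ∀ n, (j α).down n = v n} ≤ 1 := mk_le_one_iff_set_subsingleton.mpr h4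
      exact absurd (h3.trans_le h5) (not_lt.mpr (one_le_aleph0.trans hκ.le))
    let H := Filter.hyperfilter ℕ
    let V : Ultrafilter (ULift.{u} ℕ × κ.ord.ToType) :=
      H.bind (fun n => W.map (fun α => (ULift.up n, F n α)))
    have hV : ∀ Y, Y ∈ V ↔ ∀ᶠ n in H, ∀ᶠ α in W, (ULift.up n, F n α) ∈ Y := fun Y => Iff.rfl
    refine uNumber_le (A := ULift.{u} ℕ × κ.ord.ToType) ?_ V ?_
      (I := ULift.{u} {S : Set ℕ // S ∈ H} × I)
      (fun q => {p | p.1.down ∈ q.1.down.1 ∧ ∃ α ∈ b q.2, p.2 = F p.1.down α}) ?_ ?_ ?_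
    · rw [mk_prod, lift_id, lift_id, mk_ord_toType]
      simp only [mk_uLift, mk_nat, lift_aleph0]
      exact mul_eq_right hκ.le hκ.le aleph0_ne_zero
    · intro X hX
      by_contra hcon
      have h1 : #(Prod.snd '' X) < κ := mk_image_le.trans_lt (not_le.mp hcon)
      obtain ⟨n0, hn0⟩ := hm3 _ h1
      have h2 : ∀ᶠ n in H, n0 ≤ n := Nat.hyperfilter_le_atTop (Filter.eventually_ge_atTop n0)
      obtain ⟨n, h3, h4⟩ := (h2.and ((hV X).mp hX)).exists
      exact hF n _ (hn0 n h3) (h4.mono fun α hα => ⟨_, hα, rfl⟩)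
    · rintro ⟨⟨S, hS⟩, i⟩
      rw [hV]
      filter_upwards [hS] with n hn
      filter_upwards [hb i] with α hα
      exact ⟨hn, α, hα, rfl⟩
    · intro Y hY
      rw [hV] at hY
      have h1 := hσ (fun n α => (∀ᶠ α in W, (ULift.up n, F n α) ∈ Y) → (ULift.up n, F n α) ∈ Y) (by
        intro n
        by_cases h : ∀ᶠ α in W, (ULift.up n, F n α) ∈ Y
        · exact h.mono fun α hα _ => hα
        · exact Filter.Eventually.of_forall fun α h' => absurd h' h)
      obtain ⟨i, hi⟩ := hb2 _ h1
      refine ⟨⟨⟨⟨_, hY⟩⟩, i⟩, ?_⟩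
      rintro ⟨⟨n⟩, y⟩ ⟨hn, α, hα, hy⟩
      simp only at hy
      subst hy
      exact hi hα n hn
    · rw [mk_prod, lift_id, lift_id]
      refine (mul_le_mul_left ?_ _).trans (mul_eq_right (hκ.le.trans hIκ.le)
        (hcont.trans hIκ.le) ?_).le
      · have h1 : #{S : Set ℕ // S ∈ H} ≤ 2 ^ ℵ₀ := by
          refine (mk_subtype_le _).trans ?_
          simp
        rw [mk_uLift]
        refine (lift_le.mpr h1).trans ?_
        simp
      · exact (power_ne_zero _ two_ne_zero)
  · -- the case where `W` is not countably complete
    push Not at hσ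
    obtain ⟨P, hP, hP2⟩ := hσ
    have hg : ∃ g : TT κ → ℕ, ∀ n, ∀ᶠ α in W, n ≤ g α := by
      refine ⟨fun α => sInf {n | ¬ P n α}, fun n => ?_⟩
      have h1 : ∀ᶠ α in W, ∀ i ∈ Finset.range n, P i α := by
        rw [Filter.eventually_all_finset]
        exact fun i _ => hP i
      filter_upwards [h1, hP2] with α h2 h3
      have h4 : sInf {n | ¬ P n α} ∈ {n | ¬ P n α} := Nat.sInf_mem h3
      by_contra hcon
      exact h4 (h2 _ (Finset.mem_range.mpr (not_le.mp hcon)))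
    obtain ⟨g, hg⟩ := hg
    let G : TT κ → List κ.ord.ToType := fun α => (List.range (g α + 1)).map (fun n => F n α)
    refine uNumber_le (A := List κ.ord.ToType) (by rw [mk_list_eq_mk, mk_ord_toType]) (W.map G) ?_
      (I := I) (fun i => G '' b i) ?_ ?_ le_rfl
    · intro X hX
      by_contra hcon
      have h1 : max ℵ₀ (#X) < κ := max_lt hκ (not_le.mp hcon)
      have h2 : #(⋃ l : X, {a | a ∈ l.1}) ≤ max ℵ₀ (#X) := by
        refine mk_iUnion_le_of (le_max_left _ _) (le_max_right _ _) _ fun l => ?_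
        refine le_trans ?_ (le_max_left _ _)
        rw [le_aleph0_iff_set_countable]
        exact (List.finite_toSet l.1).countable
      obtain ⟨n0, hn0⟩ := hm3 _ h1
      refine hF n0 _ (h2.trans (hn0 n0 le_rfl)) ?_
      filter_upwards [hX, hg n0] with α h3 h4
      refine mem_iUnion.mpr ⟨⟨G α, h3⟩, ?_⟩
      exact List.mem_map.mpr ⟨n0, List.mem_range.mpr (by omega), rfl⟩
    · intro i
      rw [Ultrafilter.mem_map]
      exact Filter.mem_of_superset (hb i) (subset_preimage_image _ _)
    · intro Y hY
      obtain ⟨i, hi⟩ := hb2 _ hY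
      exact ⟨i, image_subset_iff.mpr hi⟩

end Stmt14

/-- If `κ` is singular of countable cofinality then `u(κ) ≤ u(κ⁺)`. -/
theorem stmt14 (κ : Cardinal.{u}) (hcof : κ.ord.cof = ℵ₀) (hκ : ℵ₀ < κ) :
    uNumber κ ≤ uNumber (Order.succ κ) := by
  have hreg := isRegular_succ hκ.le
  obtain ⟨U, hU, hUc⟩ : ∃ U : Ultrafilter (Order.succ κ).out,
      Uniform U ∧ charU U = uNumber (Order.succ κ) := by
    obtain ⟨U0, hU0⟩ := Stmt14.exists_uniform hreg
    exact csInf_mem (s := {c | ∃ U : Ultrafilter (Order.succ κ).out, Uniform U ∧ charU U = c})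
      ⟨_, U0, hU0, rfl⟩
  obtain ⟨B, hB, hB1, hB2⟩ : ∃ B : Set (Set (Order.succ κ).out), #B = charU U ∧
      (∀ X ∈ B, X ∈ U) ∧ ∀ Y ∈ U, ∃ X ∈ B, X ⊆ Y :=
    csInf_mem (s := {c | ∃ B : Set (Set (Order.succ κ).out), #B = c ∧
      (∀ X ∈ B, X ∈ U) ∧ ∀ Y ∈ U, ∃ X ∈ B, X ⊆ Y})
      ⟨_, {X | X ∈ U}, rfl, fun X hX => hX, fun Y hY => ⟨Y, hY, subset_rfl⟩⟩
  rw [← hUc, ← hB]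
  have : #(Order.succ κ).out = #(Stmt14.TT κ) := by rw [mk_out, Stmt14.mk_TT]
  obtain ⟨e⟩ := Cardinal.eq.mp this
  refine Stmt14.main_aux hcof hκ (U.map e) ?_ (fun X : B => e '' X.1) ?_ ?_
  · intro X hX
    have h1 := hU _ (Ultrafilter.mem_map.mp hX)
    rw [mk_out] at h1
    refine (Order.lt_succ κ).trans_le ?_
    rw [← h1]
    exact mk_preimage_of_injective _ _ e.injective
  · rintro ⟨X, hX⟩
    rw [Ultrafilter.mem_map]
    exact Filter.mem_of_superset (hB1 X hX) (subset_preimage_image _ _)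
  · intro Y hY
    obtain ⟨X, hX, hXY⟩ := hB2 _ (Ultrafilter.mem_map.mp hY)
    exact ⟨⟨X, hX⟩, image_subset_iff.mpr hXY⟩
end

section
/- Let κ be a singular cardinal and λ < κ a cardinal such that μ^λ ≤ κ⁺ for every cardinal μ < κ. If κ⁺ carries a κ-indecomposable uniform ultrafilter, then κ^λ ≤ κ⁺. -/
open Cardinal Set

universe u v

namespace St15

theorem mk_iUnion_le_mul {ι α : Type u} (f : ι → Set α) (a b : Cardinal.{u})
    (h1 : #ι ≤ a) (h2 : ∀ i, #(f i) ≤ b) : #(⋃ i, f i) ≤ a * b := by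
  refine (mk_iUnion_le f).trans (mul_le_mul' h1 ?_)
  exact ciSup_le' h2

theorem J_enum {c : Cardinal.{u}} {μ : Cardinal.{u}} (h : μ < c) :
    ∃ j : c.ord.ToType, #(Iio j) = μ := by
  have h' : μ.ord < Ordinal.type (α := c.ord.ToType) (· < ·) := by
    rw [Ordinal.type_toType]; exact ord_lt_ord.2 h
  refine ⟨Ordinal.enum (α := c.ord.ToType) (· < ·) ⟨μ.ord, h'⟩, ?_⟩
  have := Ordinal.card_typein (r := ((· < ·) : c.ord.ToType → c.ord.ToType → Prop))
    (Ordinal.enum (α := c.ord.ToType) (· < ·) ⟨μ.ord, h'⟩)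
  rw [Ordinal.typein_enum, card_ord] at this
  exact this.symm

theorem J_lt {c : Cardinal.{u}} (j : c.ord.ToType) : #(Iio j) < c := by
  simpa using mk_Iio_lt j

theorem J_noMax {c : Cardinal.{u}} (h : ℵ₀ ≤ c) (j : c.ord.ToType) : ∃ k, j < k := by
  have := noMaxOrder h
  exact exists_gt j

theorem J_bdd {c : Cardinal.{u}} (h : c.IsRegular) (A : Set c.ord.ToType) (hA : #A < c) :
    ∃ b, ∀ a ∈ A, a < b := by
  by_contra hcon
  push Not at hcon
  have : IsCofinal A := fun b => by
    obtain ⟨a, ha, hb⟩ := hcon b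
    exact ⟨a, ha, hb⟩
  have h2 := Order.cof_le this
  rw [Ordinal.cof_toType, h.cof_ord] at h2
  exact absurd hA (not_lt.2 h2)

theorem L1 {κ : Cardinal.{u}} (hsing : κ.ord.cof < κ) {W : Type u} [LinearOrder W] [WellFoundedLT W]
    (a : W) (ha : #(Iio a) ≤ κ) : ∃ C : Set W, (∀ c ∈ C, c < a) ∧ #C < κ ∧ ∀ x < a, ∃ c ∈ C, x ≤ c := by
  obtain ⟨s, hs, hs'⟩ := Order.exists_cof_eq (Iio a)
  have h1 : Order.cof (Iio a) < κ := by
    refine lt_of_le_of_ne ((Order.cof_le_cardinalMk _).trans ha) ?_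
    intro h
    have := Order.cof_ord_cof (Iio a)
    rw [h] at this
    exact hsing.ne this
  refine ⟨Subtype.val '' s, ?_, ?_, ?_⟩
  · rintro _ ⟨c, _, rfl⟩; exact c.2
  · exact mk_image_le.trans_lt (hs' ▸ h1)
  · intro x hx
    obtain ⟨c, hc, h⟩ := hs ⟨x, hx⟩
    exact ⟨c, ⟨c, hc, rfl⟩, h⟩

abbrev W (κ : Cardinal.{u}) : Type u := (Order.succ κ).ord.ToType

theorem W_Iio {κ : Cardinal.{u}} (a : W κ) : #(Iio a) ≤ κ := Order.lt_succ_iff.1 (J_lt a)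

theorem W_bdd {κ : Cardinal.{u}} (hκ : ℵ₀ ≤ κ) (A : Set (W κ)) (hA : #A ≤ κ) :
    ∃ b, ∀ a ∈ A, a < b :=
  J_bdd (isRegular_succ hκ) A (Order.lt_succ_iff.2 hA)

theorem W_bdd' {κ : Cardinal.{u}} (hκ : ℵ₀ ≤ κ) {ι : Type u} (hι : #ι ≤ κ) (f : ι → W κ) :
    ∃ b, ∀ i, f i < b := by
  obtain ⟨b, hb⟩ := W_bdd hκ (range f) (mk_range_le.trans hι)
  exact ⟨b, fun i => hb _ ⟨i, rfl⟩⟩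

theorem W_gt {κ : Cardinal.{u}} (hκ : ℵ₀ ≤ κ) (a : W κ) : ∃ b, a < b :=
  J_noMax (hκ.trans (Order.le_succ κ)) a

/-- pigeonhole -/
theorem W_pigeon {κ : Cardinal.{u}} (hκ : ℵ₀ ≤ κ) {ι : Type u} (hι : #ι ≤ κ) (f : W κ → ι) :
    ∃ p, ∀ a, ∃ b, a < b ∧ f b = p := by
  by_contra hcon
  push Not at hcon
  choose g hg using hcon
  obtain ⟨b, hb⟩ := W_bdd' hκ hι g
  exact hg (f b) b (hb _) rfl

def Ind {κ : Cardinal.{u}} (U : Ultrafilter (W κ)) : Prop :=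
  ∀ (γ : Type u) (t : W κ → γ), #γ ≤ κ → ∃ X : Set γ, #X < κ ∧ ∀ᶠ β in (U : Filter (W κ)), t β ∈ X

theorem step1 {κ : Cardinal.{u}} (hκ : ℵ₀ ≤ κ) (hsing : κ.ord.cof < κ) (U : Ultrafilter (W κ))
    (hC : ∀ C : W κ → Set (W κ), (∀ β, #(C β) < κ) → ∃ γ, ∀ γ', ∀ᶠ β in (U : Filter (W κ)),
      ∀ c ∈ C β, γ < c → γ' < c)
    (g : W κ → W κ) (hg : ∀ γ, ∀ᶠ β in (U : Filter (W κ)), γ < g β) :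
    ∃ f : W κ → W κ, (∀ γ, ∀ᶠ β in (U : Filter (W κ)), γ < f β) ∧
      ∀ᶠ β in (U : Filter (W κ)), f β < g β := by
  classical
  choose C hC1 hC2 hC3 using fun β => L1 hsing (g β) (W_Iio (g β))
  obtain ⟨γ, hγ⟩ := hC C hC2
  obtain ⟨x, hx⟩ := W_gt hκ γ
  have key : ∀ β, ∃ c, x < g β → c ∈ C β ∧ γ < c := by
    intro β
    by_cases h : x < g β
    · obtain ⟨c, hc, hxc⟩ := hC3 β x h
      exact ⟨c, fun _ => ⟨hc, hx.trans_le hxc⟩⟩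
    · exact ⟨x, fun h' => absurd h' h⟩
  choose f hf using key
  refine ⟨f, ?_, ?_⟩
  · intro γ'
    filter_upwards [hγ γ', hg x] with β h1 h2
    exact h1 _ (hf β h2).1 (hf β h2).2
  · filter_upwards [hg x] with β h2
    exact hC1 β _ (hf β h2).1

theorem step2 {κ : Cardinal.{u}} (hκ : ℵ₀ ≤ κ) (hsing : κ.ord.cof < κ) (U : Ultrafilter (W κ))
    (hU : ∀ a, ∀ᶠ β in (U : Filter (W κ)), a < β)
    (hC : ∀ C : W κ → Set (W κ), (∀ β, #(C β) < κ) → ∃ γ, ∀ γ', ∀ᶠ β in (U : Filter (W κ)),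
      ∀ c ∈ C β, γ < c → γ' < c)
    {ι : Type u} (hι : #ι < κ) (F : ι → W κ → W κ) :
    ∃ f : W κ → W κ, (∀ γ, ∀ᶠ β in (U : Filter (W κ)), γ < f β) ∧
      ∃ γ, ∀ᶠ β in (U : Filter (W κ)), ∀ i, γ < F i β → f β < F i β := by
  classical
  obtain ⟨γ, hγ⟩ := hC (fun β => range fun i => F i β) (fun β => mk_range_le.trans_lt hι)
  have key : ∀ β : W κ, ∃ m : W κ, (m = β ∨ ∃ i, m = F i β ∧ γ < m) ∧ ∀ i, γ < F i β → m ≤ F i β := by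
    intro β
    obtain ⟨m, hm, hm'⟩ := (wellFounded_lt (α := W κ)).has_min
      {m | m = β ∨ ∃ i, m = F i β ∧ γ < m} ⟨β, Or.inl rfl⟩
    exact ⟨m, hm, fun i hi => not_lt.1 (hm' _ (Or.inr ⟨i, rfl, hi⟩))⟩
  choose g hg1 hg2 using key
  obtain ⟨f, hf1, hf2⟩ := step1 hκ hsing U hC g (by
    intro γ'
    filter_upwards [hγ γ', hU γ'] with β h1 h2
    rcases hg1 β with h | ⟨i, hi, hi'⟩
    · rw [h]; exact h2
    · exact h1 _ ⟨i, hi.symm⟩ hi')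
  refine ⟨f, hf1, γ, ?_⟩
  filter_upwards [hf2] with β h1 i hi
  exact h1.trans_le (hg2 β i hi)

theorem fin_of_anti {J V : Type*} [LinearOrder J] [WellFoundedLT J] [LinearOrder V] [WellFoundedLT V]
    (B : Set J) (f : J → V) (h : ∀ ξ ∈ B, ∀ η ∈ B, η < ξ → f ξ < f η) : B.Finite := by
  have : WellFoundedGT B := by
    refine ⟨Subrelation.wf (r := InvImage (· < ·) (fun b : B => f b)) ?_ (InvImage.wf _ wellFounded_lt)⟩
    intro a b hab
    exact h _ a.2 _ b.2 hab
  exact Finite.of_wellFoundedLT_wellFoundedGT B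

theorem L2 {κ : Cardinal.{u}} (hκ : ℵ₀ ≤ κ) (hsing : κ.ord.cof < κ) (U : Ultrafilter (W κ))
    (hU : ∀ a, ∀ᶠ β in (U : Filter (W κ)), a < β) (hInd : Ind U) :
    ∃ C : W κ → Set (W κ), (∀ β, #(C β) < κ) ∧ ∀ γ, ∃ γ', ∀ᶠ β in (U : Filter (W κ)),
      ∃ c ∈ C β, γ < c ∧ c ≤ γ' := by
  classical
  by_contra hcon
  have hC : ∀ C : W κ → Set (W κ), (∀ β, #(C β) < κ) → ∃ γ, ∀ γ', ∀ᶠ β in (U : Filter (W κ)),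
      ∀ c ∈ C β, γ < c → γ' < c := by
    intro C h
    by_contra h2
    push Not at h2
    refine hcon ⟨C, h, fun γ => ?_⟩
    obtain ⟨γ', h'⟩ := h2 γ
    refine ⟨γ', ?_⟩
    exact h'
  have hst := fun (ξ : κ.ord.ToType) (F : Iio ξ → W κ → W κ) =>
    step2 hκ hsing U hU hC (J_lt ξ) F
  choose S hS1 hS2 using hst
  let f : κ.ord.ToType → W κ → W κ :=
    (wellFounded_lt (α := κ.ord.ToType)).fix (fun ξ ih => S ξ (fun η => ih η.1 η.2))
  have hf : ∀ ξ, f ξ = S ξ (fun η => f η.1) := fun ξ => WellFounded.fix_eq _ _ _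
  have hf1 : ∀ ξ γ, ∀ᶠ β in (U : Filter (W κ)), γ < f ξ β := by
    intro ξ; rw [hf]; exact hS1 ξ _
  have hf2 : ∀ ξ, ∃ γ, ∀ᶠ β in (U : Filter (W κ)), ∀ η < ξ, γ < f η β → f ξ β < f η β := by
    intro ξ
    obtain ⟨γ, h⟩ := hS2 ξ (fun η => f η.1)
    refine ⟨γ, ?_⟩
    rw [hf]
    filter_upwards [h] with β hβ η hη h3
    exact hβ ⟨η, hη⟩ h3
  choose γ hγ using hf2
  obtain ⟨γ', hγ'⟩ := W_bdd' hκ (by simp : #κ.ord.ToType ≤ κ) γ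
  let B : W κ → Set κ.ord.ToType := fun β =>
    {ξ | γ' < f ξ β ∧ ∀ η < ξ, γ ξ < f η β → f ξ β < f η β}
  have hB : ∀ β, (B β).Finite := by
    intro β
    refine fin_of_anti (B β) (fun ξ => f ξ β) ?_
    intro ξ hξ η hη h
    exact hξ.2 η h ((hγ' ξ).trans hη.1)
  have hB2 : ∀ ξ, ∀ᶠ β in (U : Filter (W κ)), ξ ∈ B β := by
    intro ξ
    filter_upwards [hf1 ξ γ', hγ ξ] with β h1 h2
    exact ⟨h1, h2⟩
  have hJ : #κ.ord.ToType = κ := by simp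
  have : Infinite κ.ord.ToType := by rw [infinite_iff, hJ]; exact hκ
  have hκ' : ℵ₀ < κ := by
    refine lt_of_le_of_ne hκ ?_
    rintro rfl
    simp at hsing
  obtain ⟨X, hX, hX'⟩ := hInd _ (fun β => (hB β).toFinset) (by rw [mk_finset_of_infinite, hJ])
  have hlt : #(⋃ s : X, (↑(s : Finset κ.ord.ToType) : Set κ.ord.ToType)) < κ := by
    refine (mk_iUnion_le_mul _ #X ℵ₀ le_rfl ?_).trans_lt (mul_lt_of_lt hκ hX hκ')
    intro s
    exact (Cardinal.lt_aleph0_of_finite _).le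
  obtain ⟨ξ, hξ⟩ : ∃ ξ, ξ ∉ ⋃ s : X, (↑(s : Finset κ.ord.ToType) : Set κ.ord.ToType) := by
    by_contra h
    push Not at h
    rw [eq_univ_of_forall h, mk_univ, hJ] at hlt
    exact lt_irrefl _ hlt
  obtain ⟨β, h1, h2⟩ := (hX'.and (hB2 ξ)).exists
  apply hξ
  exact mem_iUnion.2 ⟨⟨_, h1⟩, by simpa using h2⟩

theorem L3 {κ : Cardinal.{u}} (hκ : ℵ₀ ≤ κ) (hsing : κ.ord.cof < κ) (U : Ultrafilter (W κ))
    (hU : ∀ a, ∀ᶠ β in (U : Filter (W κ)), a < β) (hInd : Ind U) :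
    ∃ B : W κ → Set (W κ), (∀ β, #(B β) < κ) ∧ ∀ α, ∀ᶠ β in (U : Filter (W κ)), α ∈ B β := by
  classical
  obtain ⟨C, hC, h⟩ := L2 hκ hsing U hU hInd
  choose nxt hn using h
  have hst := fun (ξ : W κ) (F : Iio ξ → W κ) => W_bdd' hκ (W_Iio ξ) F
  choose S hS using hst
  let G : W κ → W κ :=
    (wellFounded_lt (α := W κ)).fix (fun ξ ih => S ξ (fun η => nxt (ih η.1 η.2)))
  have hG : ∀ ξ, G ξ = S ξ (fun η => nxt (G η.1)) := fun ξ => WellFounded.fix_eq _ _ _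
  have hG' : ∀ ξ, ∀ η < ξ, nxt (G η) < G ξ := by
    intro ξ η h
    rw [hG ξ]
    exact hS ξ (fun η => nxt (G η.1)) ⟨η, h⟩
  let B : W κ → Set (W κ) := fun β => {ξ | ∃ c ∈ C β, G ξ < c ∧ c ≤ nxt (G ξ)}
  refine ⟨B, fun β => ?_, fun α => hn (G α)⟩
  choose c hc1 hc2 hc3 using fun ξ : B β => ξ.2
  refine lt_of_le_of_lt ?_ (hC β)
  refine mk_le_of_injective (f := fun ξ : B β => (⟨c ξ, hc1 ξ⟩ : C β)) ?_
  intro ξ η h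
  have h : c ξ = c η := congrArg Subtype.val h
  by_contra hne
  rcases lt_or_gt_of_ne (fun h => hne (Subtype.ext h) : ξ.1 ≠ η.1) with h' | h'
  · have := (hc3 ξ).trans_lt ((hG' _ _ h').trans (hc2 η))
    exact this.ne h
  · have := (hc3 η).trans_lt ((hG' _ _ h').trans (hc2 ξ))
    exact this.ne h.symm

theorem case0 {κ l : Cardinal.{u}} (hκ : ℵ₀ ≤ κ) (hpow : ∀ μ < κ, μ ^ l ≤ Order.succ κ)
    (hb : ∀ F : l.out → κ.ord.ToType, ∃ b, ∀ x, F x < b) : κ ^ l ≤ Order.succ κ := by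
  have h1 : κ ^ l = #(l.out → κ.ord.ToType) := by simp
  have hJ : #κ.ord.ToType = κ := by simp
  rw [h1]
  refine (mk_le_of_surjective (f := fun s : (Σ b : κ.ord.ToType, (l.out → Iio b)) =>
    fun x => (s.2 x).1) ?_).trans ?_
  · intro F
    obtain ⟨b, hb⟩ := hb F
    exact ⟨⟨b, fun x => ⟨F x, hb x⟩⟩, rfl⟩
  · rw [mk_sigma]
    refine (sum_le_mk_mul_iSup _).trans ?_
    refine (mul_le_mul' (b := Order.succ κ) (d := Order.succ κ) ?_ (ciSup_le' ?_)).trans ?_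
    · rw [hJ]; exact Order.le_succ κ
    · intro b
      have : #(l.out → Iio b) = #(Iio b) ^ l := by simp
      rw [this]
      exact hpow _ (J_lt b)
    · exact (mul_eq_self (hκ.trans (Order.le_succ κ))).le

theorem pow_aux {a b c l : Cardinal.{u}} (h1 : a ≤ b) (h2 : c ≤ l) : (a + 1) ^ c ≤ (b + 1) ^ l := by
  refine (power_le_power_right (add_le_add_left h1 1)).trans ?_
  refine power_le_power_left ?_ h2
  simp

theorem caseI {κ l : Cardinal.{u}} (hκ : ℵ₀ ≤ κ) (hpow : ∀ μ < κ, μ ^ l ≤ Order.succ κ)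
    (K : Set κ.ord.ToType) (hK : ∀ b, ∃ i ∈ K, b < i) (hKl : #K ≤ l)
    (hκ' : ℵ₀ < κ)
    (U : Ultrafilter (W κ)) (B : W κ → Set (W κ)) (hB : ∀ β, #(B β) < κ)
    (hB2 : ∀ α, ∀ᶠ β in (U : Filter (W κ)), α ∈ B β)
    (hbd : ∀ t : W κ → κ.ord.ToType, ∃ b, ∀ᶠ β in (U : Filter (W κ)), t β < b) :
    κ ^ l ≤ Order.succ κ := by
  classical
  have h1 : κ ^ l = #(l.out → κ.ord.ToType) := by simp
  have hJ : #κ.ord.ToType = κ := by simp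
  have hW : #(W κ) = Order.succ κ := by simp
  have hpow' : ∀ μ < κ, (μ + 1) ^ l ≤ Order.succ κ := fun μ h =>
    hpow _ (add_lt_of_lt hκ h (one_lt_aleph0.trans hκ'))
  have hc : ∀ i : K, ∃ c : (l.out → Option (Iio i.1)) → W κ, Function.Injective c := by
    intro i
    have : #(l.out → Option (Iio i.1)) ≤ #(W κ) := by
      rw [hW]
      have : #(l.out → Option (Iio i.1)) = (#(Iio i.1) + 1) ^ l := by simp
      rw [this]
      exact hpow' _ (J_lt _)
    obtain ⟨e⟩ := this
    exact ⟨e, e.injective⟩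
  choose c hc using hc
  let R : (l.out → κ.ord.ToType) → ∀ i : K, l.out → Option (Iio i.1) := fun F i x =>
    if h : F x < i.1 then some ⟨F x, h⟩ else none
  choose t ht using fun β => J_enum (hB β)
  obtain ⟨b, hb⟩ := hbd t
  have hgood : ∀ᶠ β in (U : Filter (W κ)), #(B β) ≤ #(Iio b) := by
    filter_upwards [hb] with β h
    rw [← ht β]
    exact mk_le_mk_of_subset (fun x hx => lt_trans hx h)
  have hne : Nonempty κ.ord.ToType := ⟨b⟩
  have hunb : ∀ F : l.out → κ.ord.ToType, ∃ β, #(B β) ≤ #(Iio b) ∧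
      ∀ a : κ.ord.ToType, ∃ i : K, a < i.1 ∧ c i (R F i) ∈ B β := by
    intro F
    by_contra hcon
    push Not at hcon
    have : ∀ β, ∃ a : κ.ord.ToType, #(B β) ≤ #(Iio b) → ∀ i : K, a < i.1 → c i (R F i) ∉ B β := by
      intro β
      by_cases h : #(B β) ≤ #(Iio b)
      · obtain ⟨a, ha⟩ := hcon β h
        exact ⟨a, fun _ => ha⟩
      · exact ⟨b, fun h' => absurd h' h⟩
    choose s hs using this
    obtain ⟨a, ha⟩ := hbd s
    obtain ⟨i, hi, hai⟩ := hK a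
    obtain ⟨β, ⟨h1, h2⟩, h3⟩ := ((ha.and hgood).and (hB2 (c ⟨i, hi⟩ (R F ⟨i, hi⟩)))).exists
    exact hs β h2 ⟨i, hi⟩ (h1.trans hai) h3
  rw [h1]
  let dec : (Σ β : {β // #(B β) ≤ #(Iio b)}, (K → Option (B β.1))) → (l.out → κ.ord.ToType) :=
    fun s x => Classical.epsilon (fun y => ∃ (i : K) (w : B s.1.1) (F' : l.out → κ.ord.ToType),
      s.2 i = some w ∧ c i (R F' i) = w.1 ∧ F' x = y ∧ y < i.1)
  refine (mk_le_of_surjective (f := dec) ?_).trans ?_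
  · intro F
    obtain ⟨β, hβ, h⟩ := hunb F
    refine ⟨⟨⟨β, hβ⟩, fun i => if h : c i (R F i) ∈ B β then some ⟨_, h⟩ else none⟩, ?_⟩
    funext x
    have hex : ∃ y, ∃ (i : K) (w : B β) (F' : l.out → κ.ord.ToType),
      (if h : c i (R F i) ∈ B β then some (⟨_, h⟩ : B β) else none) = some w ∧
        c i (R F' i) = w.1 ∧ F' x = y ∧ y < i.1 := by
      obtain ⟨i, hi, hi'⟩ := h (F x)
      exact ⟨F x, i, ⟨_, hi'⟩, F, by rw [dif_pos hi'], rfl, rfl, hi⟩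
    have := Classical.epsilon_spec hex
    obtain ⟨i, w, F', e1, e2, e3, e4⟩ := this
    change Classical.epsilon _ = F x
    by_cases hm : c i (R F i) ∈ B β
    · rw [dif_pos hm] at e1
      have e1 := Option.some.inj e1
      have e5 : c i (R F' i) = c i (R F i) := by rw [e2, ← e1]
      have e6 := congrFun (hc i e5) x
      simp only [R] at e6
      rw [dif_pos (by rw [e3]; exact e4)] at e6
      by_cases hF : F x < i.1
      · rw [dif_pos hF] at e6
        have e7 := congrArg Subtype.val (Option.some.inj e6)
        exact e3.symm.trans e7
      · rw [dif_neg hF] at e6; cases e6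
    · rw [dif_neg hm] at e1; cases e1
  · rw [mk_sigma]
    refine (sum_le_mk_mul_iSup _).trans ?_
    refine (mul_le_mul' (b := Order.succ κ) (d := Order.succ κ) ?_ (ciSup_le' ?_)).trans ?_
    · rw [← hW]; exact mk_subtype_le _
    · intro β
      have : #(K → Option (B β.1)) = (#(B β.1) + 1) ^ #K := by simp
      rw [this]
      exact (pow_aux β.2 hKl).trans (hpow' _ (J_lt b))
    · exact (mul_eq_self (hκ.trans (Order.le_succ κ))).le

theorem closureT {V P K : Type u} {l : Cardinal.{u}} (hl : ℵ₀ ≤ l) (hK : #K ≤ l)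
    (hP : #P ≤ 2 ^ l) (Φ : (K → V) → P → K → V) (v0 : V) :
    ∃ T : Set V, v0 ∈ T ∧ #T ≤ 2 ^ l ∧ ∀ g, (∀ i, g i ∈ T) → ∀ p i, Φ g p i ∈ T := by
  classical
  let Z := (Order.succ l).ord.ToType
  let S : Z → Set V := (wellFounded_lt (α := Z)).fix (fun z ih =>
    insert v0 (⋃ z' : Iio z, range (fun x : (K → ih z'.1 z'.2) × P × K =>
      Φ (fun k => (x.1 k).1) x.2.1 x.2.2)))
  have hS : ∀ z, S z = insert v0 (⋃ z' : Iio z, range (fun x : (K → S z'.1) × P × K =>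
      Φ (fun k => (x.1 k).1) x.2.1 x.2.2)) := fun z => WellFounded.fix_eq _ _ _
  have hmono : ∀ z z', z ≤ z' → S z ⊆ S z' := by
    intro z z' h
    rw [hS z, hS z']
    refine insert_subset_insert ?_
    refine iUnion_subset fun y => ?_
    exact subset_iUnion_of_subset ⟨y.1, lt_of_lt_of_le y.2 h⟩ le_rfl
  have h2l : l ≤ 2 ^ l := (cantor l).le
  have hinf : ℵ₀ ≤ (2 : Cardinal.{u}) ^ l := hl.trans h2l
  have hcard : ∀ z, #(S z) ≤ 2 ^ l := by
    intro z
    induction z using (wellFounded_lt (α := Z)).induction with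
    | _ z ih =>
      rw [hS z]
      refine (mk_insert_le).trans ?_
      refine add_le_of_le hinf ?_ (one_le_aleph0.trans hinf)
      refine (mk_iUnion_le_mul _ (2 ^ l) (2 ^ l) ?_ ?_).trans (mul_eq_self hinf).le
      · exact (Order.lt_succ_iff.1 (J_lt z)).trans h2l
      · intro z'
        refine mk_range_le.trans ?_
        have e : #((K → S z'.1) × P × K) = #(S z'.1) ^ #K * (#P * #K) := by simp
        rw [e]
        have e1 : #(S z'.1) ^ #K ≤ 2 ^ l := by
          refine (power_le_power_right (ih z'.1 z'.2)).trans ?_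
          rw [← power_mul]
          refine power_le_power_left two_ne_zero ?_
          exact (mul_le_mul' le_rfl hK).trans (mul_eq_self hl).le
        refine (mul_le_mul' e1 (mul_le_mul' hP (hK.trans h2l))).trans ?_
        rw [mul_eq_self hinf, mul_eq_self hinf]
  have hreg : (Order.succ l).IsRegular := isRegular_succ hl
  obtain ⟨z0, -⟩ := J_bdd hreg ∅ (by simp)
  refine ⟨⋃ z, S z, mem_iUnion.2 ⟨z0, ?_⟩, ?_, ?_⟩
  · rw [hS]; exact mem_insert _ _
  · refine (mk_iUnion_le_mul _ (2 ^ l) (2 ^ l) ?_ hcard).trans (mul_eq_self hinf).le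
    have : #Z = Order.succ l := by simp [Z]
    rw [this]
    exact Order.succ_le_of_lt (cantor l)
  · intro g hg p i
    choose z hz using fun k => mem_iUnion.1 (hg k)
    obtain ⟨b, hb⟩ := J_bdd hreg (range z) (mk_range_le.trans_lt (Order.lt_succ_iff.2 hK))
    obtain ⟨b', hb'⟩ := J_noMax (hl.trans (Order.le_succ l)) b
    refine mem_iUnion.2 ⟨b', ?_⟩
    rw [hS]
    refine mem_insert_of_mem _ (mem_iUnion.2 ⟨⟨b, hb'⟩, ?_⟩)
    exact ⟨(fun k => ⟨g k, hmono _ _ (hb _ ⟨k, rfl⟩).le (hz k)⟩, p, i), rfl⟩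


theorem W_sub {κ : Cardinal.{u}} (hκ : ℵ₀ ≤ κ) (A : Set (W κ)) (hA : #A ≤ κ) :
    ∃ b, (∀ a ∈ A, a < b) ∧ ∀ x < b, ∃ a ∈ A, x ≤ a := by
  obtain ⟨b0, hb0⟩ := W_bdd hκ A hA
  have wf : WellFounded ((· < ·) : W κ → W κ → Prop) := wellFounded_lt
  have hne : {b : W κ | ∀ a ∈ A, a < b}.Nonempty := ⟨b0, hb0⟩
  refine ⟨wf.min _ hne, wf.min_mem _ hne, fun x hx => ?_⟩
  have h := wf.not_lt_min {b : W κ | ∀ a ∈ A, a < b} (x := x)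
  by_contra hcon
  push Not at hcon
  exact h hcon hx

theorem scale_h {κ : Cardinal.{u}} (hκ : ℵ₀ < κ) :
    ∃ (h : W κ → κ.ord.ToType → W κ) (k : W κ), #(Iio k) = κ ∧ (∀ α i, h α i < k) ∧
      ∀ α α', α < α' → ∃ i0 : κ.ord.ToType, ∀ i, i0 ≤ i → h α i < h α' i := by
  obtain ⟨k, hk⟩ := J_enum (Order.lt_succ κ)
  have he : ∀ α : W κ, ∃ e : Iio α → κ.ord.ToType, Function.Injective e := by
    intro α
    have : #(Iio α) ≤ #(κ.ord.ToType) := by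
      rw [Cardinal.mk_ord_toType]; exact W_Iio α
    obtain ⟨e⟩ := this
    exact ⟨e, e.injective⟩
  choose e he using he
  have hsub : ∀ A : Set (W κ), ∃ b, #A ≤ κ → (∀ a ∈ A, a < b) ∧ ∀ x < b, ∃ a ∈ A, x ≤ a := by
    intro A
    by_cases hA : #A ≤ κ
    · obtain ⟨b, hb⟩ := W_sub hκ.le A hA
      exact ⟨b, fun _ => hb⟩
    · exact ⟨k, fun h => absurd h hA⟩
  choose sub hsub using hsub
  have wf : WellFounded ((· < ·) : W κ → W κ → Prop) := wellFounded_lt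
  let F : (α : W κ) → ((η : W κ) → η < α → κ.ord.ToType → W κ) → κ.ord.ToType → W κ :=
    fun α rec i => sub {x | ∃ η : Iio α, e α η < i ∧ x = rec η.1 η.2 i}
  let h := wf.fix F
  have hfix : ∀ α i, h α i = sub {x | ∃ η : Iio α, e α η < i ∧ x = h η.1 i} := by
    intro α i
    exact congrFun (wf.fix_eq F α) i
  have hcard : ∀ α i, #{x | ∃ η : Iio α, e α η < i ∧ x = h η.1 i} ≤ #(Iio i) := by
    intro α i
    have h1 : {x | ∃ η : Iio α, e α η < i ∧ x = h η.1 i} =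
        Set.range (fun η : {η : Iio α // e α η < i} => h η.1.1 i) := by
      ext x; constructor
      · rintro ⟨η, h1, rfl⟩; exact ⟨⟨η, h1⟩, rfl⟩
      · rintro ⟨⟨η, h1⟩, rfl⟩; exact ⟨η, h1, rfl⟩
    rw [h1]
    refine Cardinal.mk_range_le.trans ?_
    refine Cardinal.mk_le_of_injective (f := fun η => (⟨e α η.1, η.2⟩ : Iio i)) ?_
    intro a b hab
    have := congrArg Subtype.val hab
    exact Subtype.ext (he α this)
  have hcardκ : ∀ α i, #{x | ∃ η : Iio α, e α η < i ∧ x = h η.1 i} ≤ κ := fun α i =>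
    (hcard α i).trans (J_lt i).le
  have hsz : ∀ α i, #(Iio (h α i)) ≤ max (#(Iio i)) ℵ₀ := by
    intro α
    induction α using wf.induction with
    | _ α ih =>
      intro i
      obtain ⟨h1, h2⟩ := hsub _ (hcardκ α i)
      rw [← hfix] at h1 h2
      have h3 : Iio (h α i) ⊆ ⋃ x : {x | ∃ η : Iio α, e α η < i ∧ x = h η.1 i}, Iic x.1 := by
        intro y hy
        obtain ⟨a, ha, hya⟩ := h2 y hy
        exact mem_iUnion.2 ⟨⟨a, ha⟩, hya⟩
      refine (Cardinal.mk_le_mk_of_subset h3).trans ?_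
      refine (mk_iUnion_le_mul _ (max (#(Iio i)) ℵ₀) (max (#(Iio i)) ℵ₀)
        ((hcard α i).trans (le_max_left _ _)) ?_).trans ?_
      · rintro ⟨x, η, h4, rfl⟩
        have h5 : Iic (h η.1 i) = insert (h η.1 i) (Iio (h η.1 i)) := by
          ext y; simp [le_iff_eq_or_lt]
        show #(Iic (h η.1 i)) ≤ _
        rw [h5]
        refine Cardinal.mk_insert_le.trans ?_
        exact Cardinal.add_le_of_le (le_max_right _ _) (ih η.1 η.2 i)
          (Cardinal.one_le_aleph0.trans (le_max_right _ _))
      · rw [Cardinal.mul_eq_self (le_max_right _ _)]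
  refine ⟨h, k, hk, ?_, ?_⟩
  · intro α i
    by_contra hcon
    have h1 : #(Iio k) ≤ #(Iio (h α i)) :=
      Cardinal.mk_le_mk_of_subset (Iio_subset_Iio (not_lt.1 hcon))
    have h2 : max (#(Iio i)) ℵ₀ < κ := max_lt (J_lt i) hκ
    rw [hk] at h1
    exact absurd (h1.trans (hsz α i)) (not_le.2 h2)
  · intro α α' hα
    obtain ⟨i0, hi0⟩ := J_noMax hκ.le (e α' ⟨α, hα⟩)
    refine ⟨i0, fun i hi => ?_⟩
    obtain ⟨h1, -⟩ := hsub _ (hcardκ α' i)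
    rw [← hfix] at h1
    exact h1 _ ⟨⟨α, hα⟩, hi0.trans_le hi, rfl⟩

def CofGt {V : Type u} [LinearOrder V] (p : V) (μ : Cardinal.{u}) : Prop :=
  ∀ A : Set V, A ⊆ Iio p → #A ≤ μ → ∃ b < p, ∀ a ∈ A, a ≤ b

/-- exact upper bound -/
theorem exists_p {κ l : Cardinal.{u}} (hκ : ℵ₀ < κ) (hl : ℵ₀ ≤ l)
    (h2l : (2 : Cardinal.{u}) ^ l < κ)
    (K : Set κ.ord.ToType) (hKl : #K ≤ l)
    (h : W κ → κ.ord.ToType → W κ) (k : W κ) (hk : ∀ α i, h α i < k)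
    (hh : ∀ α α', α < α' → ∃ i0 : κ.ord.ToType, ∀ i, i0 ≤ i → h α i < h α' i) :
    ∃ p : K → W κ, (∀ i, p i ≤ k) ∧
      (∀ α, ∃ i0 : κ.ord.ToType, ∀ i : K, i0 ≤ i.1 → h α i < p i) ∧
      ∀ (E : Set K) (q : K → W κ), (∀ b : κ.ord.ToType, ∃ i ∈ E, b ≤ i.1) →
        (∀ i ∈ E, q i < p i) →
        (∀ α, ∃ i0 : κ.ord.ToType, ∀ i ∈ E, i0 ≤ i.1 → h α i ≤ q i) → False := by
  classical
  let Q : (K → W κ) → Set K → (K → W κ) → Prop := fun g E q =>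
    (∀ i ∈ E, q i < g i) ∧ ∀ α, ∃ i0 : κ.ord.ToType, ∀ i ∈ E, i0 ≤ i.1 → h α i ≤ q i
  have hΦ : ∀ g E, ∃ q, (∃ q', Q g E q') → Q g E q := by
    intro g E
    by_cases hx : ∃ q', Q g E q'
    · obtain ⟨q, hq⟩ := hx
      exact ⟨q, fun _ => hq⟩
    · exact ⟨g, fun h => absurd h hx⟩
  choose Φ hΦ using hΦ
  have hP : #(Set K) ≤ 2 ^ l := by
    rw [Cardinal.mk_set]
    exact Cardinal.power_le_power_left two_ne_zero hKl
  obtain ⟨T, hkT, hT, hTc⟩ := closureT hl hKl hP Φ k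
  have wf : WellFounded ((· < ·) : W κ → W κ → Prop) := wellFounded_lt
  have hmin : ∀ α (i : K), ∃ x : T, h α i ≤ x.1 ∧ ∀ y ∈ T, h α i ≤ y → x.1 ≤ y := by
    intro α i
    have hne : {x : W κ | x ∈ T ∧ h α i ≤ x}.Nonempty := ⟨k, hkT, (hk α i).le⟩
    refine ⟨⟨wf.min _ hne, (wf.min_mem _ hne).1⟩, (wf.min_mem _ hne).2, fun y hy hy2 => ?_⟩
    exact not_lt.1 (wf.not_lt_min {x : W κ | x ∈ T ∧ h α i ≤ x} ⟨hy, hy2⟩)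
  choose P hP1 hP2 using hmin
  have hcnt : #(K → T) ≤ κ := by
    have : #(K → T) = #T ^ #K := by simp
    rw [this]
    have h1 : #T ^ #K ≤ (2 ^ l) ^ l :=
      (Cardinal.power_le_power_right hT).trans
        (Cardinal.power_le_power_left (Cardinal.power_ne_zero _ two_ne_zero) hKl)
    rw [← Cardinal.power_mul, Cardinal.mul_eq_self hl] at h1
    exact h1.trans h2l.le
  obtain ⟨p, hp⟩ := W_pigeon hκ.le hcnt P
  refine ⟨fun i => (p i).1, ?_, ?_, ?_⟩
  · intro i
    obtain ⟨α, -, rfl⟩ := hp k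
    exact hP2 α i k hkT (hk α i).le
  · intro α
    obtain ⟨α', h1, rfl⟩ := hp α
    obtain ⟨i0, hi0⟩ := hh _ _ h1
    exact ⟨i0, fun i hi => (hi0 i hi).trans_le (hP1 α' i)⟩
  · intro E q hE hq1 hq2
    have hq := hΦ (fun i => (p i).1) E ⟨q, hq1, hq2⟩
    have hqT := hTc (fun i => (p i).1) (fun i => (p i).2) E
    obtain ⟨α, -, rfl⟩ := hp k
    obtain ⟨i0, hi0⟩ := hq.2 α
    obtain ⟨i, hiE, hi⟩ := hE i0
    exact absurd (hP2 α i _ (hqT i) (hi0 i hiE hi)) (not_le.2 (hq.1 i hiE))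

theorem cof_p {κ l : Cardinal.{u}} (hκ : ℵ₀ < κ)
    (hlt : ∀ μ < κ, μ ^ l < κ)
    (K : Set κ.ord.ToType) (hKl : #K ≤ l) (k : W κ)
    (h : W κ → κ.ord.ToType → W κ)
    (hh : ∀ α α', α < α' → ∃ i0 : κ.ord.ToType, ∀ i, i0 ≤ i → h α i < h α' i)
    (p : K → W κ)
    (ha : ∀ α, ∃ i0 : κ.ord.ToType, ∀ i : K, i0 ≤ i.1 → h α i < p i)
    (hb : ∀ (E : Set K) (q : K → W κ), (∀ b : κ.ord.ToType, ∃ i ∈ E, b ≤ i.1) →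
        (∀ i ∈ E, q i < p i) →
        (∀ α, ∃ i0 : κ.ord.ToType, ∀ i ∈ E, i0 ≤ i.1 → h α i ≤ q i) → False)
    (μ : Cardinal.{u}) (hμ : μ < κ) :
    ∃ i0 : κ.ord.ToType, ∀ i : K, i0 ≤ i.1 → CofGt (p i) μ := by
  classical
  by_contra hcon
  push Not at hcon
  have hA : ∀ i : K, ∃ c : Option μ.out → W κ, ¬ CofGt (p i) μ →
      ∀ b < p i, ∃ x, b < c x ∧ c x < p i := by
    intro i
    by_cases hi : CofGt (p i) μ
    · exact ⟨fun _ => k, fun h => absurd hi h⟩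
    · have hi' := hi
      unfold CofGt at hi'
      push Not at hi'
      obtain ⟨A, hA1, hA2, hA3⟩ := hi'
      have : #A ≤ #μ.out := by rwa [Cardinal.mk_out]
      obtain ⟨e⟩ := this
      refine ⟨fun x => if hx : ∃ a : A, x = some (e a) then hx.choose.1 else k, fun _ b hb' => ?_⟩
      obtain ⟨a, haA, hab⟩ := hA3 b hb'
      refine ⟨some (e ⟨a, haA⟩), ?_⟩
      have hx : ∃ a' : A, some (e ⟨a, haA⟩) = some (e a') := ⟨⟨a, haA⟩, rfl⟩
      have h1 : hx.choose = ⟨a, haA⟩ := by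
        have := hx.choose_spec
        exact (e.injective (Option.some_injective _ this)).symm
      have h2 : (if hx : ∃ a' : A, some (e ⟨a, haA⟩) = some (e a') then hx.choose.1 else k) = a :=
        (dif_pos hx).trans (congrArg Subtype.val h1)
      exact ⟨hab.trans_eq h2.symm, h2.trans_lt (hA1 haA)⟩
  choose c hc using hA
  have hr : ∀ (α : W κ) (i : K), ∃ x : Option μ.out, ¬ CofGt (p i) μ → h α i < p i →
      h α i < c i x ∧ c i x < p i := by
    intro α i
    by_cases h1 : ¬ CofGt (p i) μ ∧ h α i < p i
    · obtain ⟨x, hx⟩ := hc i h1.1 _ h1.2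
      exact ⟨x, fun _ _ => hx⟩
    · exact ⟨none, fun h2 h3 => absurd ⟨h2, h3⟩ h1⟩
  choose r hr using hr
  have hcnt : #(K → Option μ.out) ≤ κ := by
    have : #(K → Option μ.out) = (μ + 1) ^ #K := by simp
    rw [this]
    refine (pow_aux le_rfl hKl).trans (hlt _ ?_).le
    exact Cardinal.add_lt_of_lt hκ.le hμ (Cardinal.one_lt_aleph0.trans hκ)
  obtain ⟨s, hs⟩ := W_pigeon hκ.le hcnt r
  have key : ∀ α, ∃ i0 : κ.ord.ToType, ∀ i : K, ¬ CofGt (p i) μ → i0 ≤ i.1 →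
      h α i < c i (s i) ∧ c i (s i) < p i := by
    intro α
    obtain ⟨α', h1, rfl⟩ := hs α
    obtain ⟨i0, hi0⟩ := hh _ _ h1
    obtain ⟨i1, hi1⟩ := ha α'
    refine ⟨max i0 i1, fun i hi hi2 => ?_⟩
    have h2 := hr α' i hi (hi1 i ((le_max_right _ _).trans hi2))
    exact ⟨(hi0 i ((le_max_left _ _).trans hi2)).trans h2.1, h2.2⟩
  refine hb {i | ¬ CofGt (p i) μ ∧ c i (s i) < p i} (fun i => c i (s i)) ?_ (fun i hi => hi.2) ?_
  · intro b
    obtain ⟨i0, hi0⟩ := key k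
    obtain ⟨i, hi, hi2⟩ := hcon (max b i0)
    exact ⟨i, ⟨hi2, (hi0 i hi2 ((le_max_right _ _).trans hi)).2⟩, (le_max_left _ _).trans hi⟩
  · intro α
    obtain ⟨i0, hi0⟩ := key α
    exact ⟨i0, fun i hi hi2 => (hi0 i hi.1 hi2).1.le⟩

theorem caseII {κ l : Cardinal.{u}} (hκ : ℵ₀ < κ) (hl : ℵ₀ ≤ l)
    (hlt : ∀ μ < κ, μ ^ l < κ)
    (K : Set κ.ord.ToType) (hK : ∀ b, ∃ i ∈ K, b < i) (hKl : #K ≤ l)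
    (U : Ultrafilter (W κ)) (hInd : Ind U)
    (B : W κ → Set (W κ)) (hB : ∀ β, #(B β) < κ)
    (hB2 : ∀ α, ∀ᶠ β in (U : Filter (W κ)), α ∈ B β)
    (t : W κ → κ.ord.ToType) (ht : ∀ b, ∀ᶠ β in (U : Filter (W κ)), b ≤ t β) : False := by
  classical
  have h2l : (2 : Cardinal.{u}) ^ l < κ :=
    hlt 2 ((Cardinal.natCast_lt_aleph0 (n := 2)).trans hκ)
  obtain ⟨h, k, hkκ, hk, hh⟩ := scale_h hκ
  obtain ⟨p, hpk, ha, hb⟩ := exists_p hκ hl h2l K hKl h k hk hh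
  have hc := cof_p hκ hlt K hKl k h hh p ha hb
  have hf : ∀ β, ∃ i : K, t β ≤ i.1 ∧ CofGt (p i) (#(B β)) := by
    intro β
    obtain ⟨i0, hi0⟩ := hc _ (hB β)
    obtain ⟨i, hiK, hi⟩ := hK (max (t β) i0)
    exact ⟨⟨i, hiK⟩, (le_max_left _ _).trans hi.le, hi0 ⟨i, hiK⟩ ((le_max_right _ _).trans hi.le)⟩
  choose f hf1 hf2 using hf
  have hH : ∀ β, ∃ b < p (f β), ∀ α ∈ B β, h α (f β) < p (f β) → h α (f β) ≤ b := by
    intro β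
    obtain ⟨b, hb1, hb2⟩ := hf2 β (((fun α => h α (f β)) '' B β) ∩ Iio (p (f β)))
      inter_subset_right
      ((Cardinal.mk_le_mk_of_subset inter_subset_left).trans Cardinal.mk_image_le)
    exact ⟨b, hb1, fun α hα h1 => hb2 _ ⟨⟨α, hα, rfl⟩, h1⟩⟩
  choose H hH1 hH2 using hH
  obtain ⟨X, hX, hXU⟩ := hInd (Iio k) (fun β => ⟨H β, (hH1 β).trans_le (hpk _)⟩) hkκ.le
  obtain ⟨i1, hi1⟩ := hc _ hX
  have hχ : ∀ i : K, ∃ b, i1 ≤ i.1 → b < p i ∧ ∀ x ∈ X, x.1 < p i → x.1 ≤ b := by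
    intro i
    by_cases hi : i1 ≤ i.1
    · obtain ⟨b, hb1, hb2⟩ := hi1 i hi ((Subtype.val '' X) ∩ Iio (p i)) inter_subset_right
        ((Cardinal.mk_le_mk_of_subset inter_subset_left).trans Cardinal.mk_image_le)
      exact ⟨b, fun _ => ⟨hb1, fun x hx h1 => hb2 _ ⟨⟨x, hx, rfl⟩, h1⟩⟩⟩
    · exact ⟨k, fun h => absurd h hi⟩
  choose χ hχ using hχ
  have hE : ∀ α, ∀ᶠ β in (U : Filter (W κ)), i1 ≤ (f β).1 ∧ h α (f β) ≤ χ (f β) := by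
    intro α
    obtain ⟨i2, hi2⟩ := ha α
    filter_upwards [hB2 α, ht (max i1 i2), hXU] with β h1 h2 h3
    have h4 : i1 ≤ (f β).1 := ((le_max_left _ _).trans h2).trans (hf1 β)
    have h5 : i2 ≤ (f β).1 := ((le_max_right _ _).trans h2).trans (hf1 β)
    exact ⟨h4, (hH2 β α h1 (hi2 _ h5)).trans ((hχ _ h4).2 _ h3 (hH1 β))⟩
  have hcnt : #(Set K) ≤ κ := by
    rw [Cardinal.mk_set]
    exact (Cardinal.power_le_power_left two_ne_zero hKl).trans h2l.le
  obtain ⟨E, hEp⟩ := W_pigeon hκ.le hcnt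
    (fun α => {i : K | i1 ≤ i.1 ∧ h α i ≤ χ i})
  refine hb E χ ?_ ?_ ?_
  · intro b
    obtain ⟨α, -, rfl⟩ := hEp k
    obtain ⟨β, h1, h2⟩ := ((hE α).and (ht b)).exists
    exact ⟨f β, h1, h2.trans (hf1 β)⟩
  · intro i hi
    obtain ⟨α, -, rfl⟩ := hEp k
    exact (hχ i hi.1).1
  · intro α
    obtain ⟨α', h1, rfl⟩ := hEp α
    obtain ⟨i0, hi0⟩ := hh _ _ h1
    exact ⟨i0, fun i hi hi2 => (hi0 i hi2).le.trans hi.2⟩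

theorem main {κ l : Cardinal.{u}} (hκ : ℵ₀ ≤ κ) (hsing : κ.ord.cof < κ)
    (hl : l < κ) (hpow : ∀ μ < κ, μ ^ l ≤ Order.succ κ)
    (U : Ultrafilter (W κ)) (hU : ∀ a, ∀ᶠ β in (U : Filter (W κ)), a < β) (hInd : Ind U) :
    κ ^ l ≤ Order.succ κ := by
  have hκ' : ℵ₀ < κ := by
    refine lt_of_le_of_ne hκ ?_
    rintro rfl
    simp at hsing
  by_cases hK : ∃ K : Set κ.ord.ToType, (∀ b, ∃ i ∈ K, b < i) ∧ #K ≤ l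
  · obtain ⟨K, hK, hKl⟩ := hK
    have hl0 : ℵ₀ ≤ l := by
      refine le_trans ?_ hKl
      rw [Cardinal.aleph0_le_mk_iff, Set.infinite_coe_iff]
      intro hfin
      obtain ⟨j, -⟩ := J_enum (lt_of_lt_of_le Cardinal.aleph0_pos hκ)
      obtain ⟨i, hi, -⟩ := hK j
      obtain ⟨m, hm⟩ := hfin.exists_maximal ⟨i, hi⟩
      obtain ⟨i', hi', h1⟩ := hK m
      exact absurd (hm.2 hi' h1.le) (not_le.2 h1)
    by_cases hlt : ∀ μ < κ, μ ^ l < κ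
    · obtain ⟨B, hB, hB2⟩ := L3 hκ hsing U hU hInd
      by_cases hbd : ∀ t : W κ → κ.ord.ToType, ∃ b, ∀ᶠ β in (U : Filter (W κ)), t β < b
      · exact caseI hκ hpow K hK hKl hκ' U B hB hB2 hbd
      · push Not at hbd
        obtain ⟨t, ht⟩ := hbd
        refine (caseII hκ' hl0 hlt K hK hKl U hInd B hB hB2 t fun b => ?_).elim
        exact ht b
    · push Not at hlt
      obtain ⟨μ, hμ, h1⟩ := hlt
      have h2 : κ ^ l ≤ (μ ^ l) ^ l := Cardinal.power_le_power_right h1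
      rw [← Cardinal.power_mul, Cardinal.mul_eq_self hl0] at h2
      exact h2.trans (hpow μ hμ)
  · push Not at hK
    refine case0 hκ hpow fun F => ?_
    by_contra hcon
    push Not at hcon
    have h1 := hK (Set.range F) (fun b => by
      obtain ⟨b', hb'⟩ := J_noMax hκ b
      obtain ⟨x, hx⟩ := hcon b'
      exact ⟨F x, ⟨x, rfl⟩, hb'.trans_le hx⟩)
    have h2 : #(Set.range F) ≤ #l.out := Cardinal.mk_range_le
    rw [Cardinal.mk_out] at h2
    exact absurd h2 (not_le.2 h1)

end St15

/-- If `κ` is singular, `λ < κ`, `μ^λ ≤ κ⁺` for all `μ < κ`, and `κ⁺` carries a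
`κ`-indecomposable uniform ultrafilter, then `κ^λ ≤ κ⁺`. -/
theorem stmt15 (κ l : Cardinal.{u}) (hκ : ℵ₀ ≤ κ) (hsing : κ.ord.cof < κ)
    (hl : l < κ) (hpow : ∀ μ < κ, μ ^ l ≤ Order.succ κ)
    (hU : ∃ U : Ultrafilter (Order.succ κ).out, Uniform U ∧ ¬ Decomposable U κ) :
    κ ^ l ≤ Order.succ κ := by
  obtain ⟨U, hu, hd⟩ := hU
  have hc : #(Order.succ κ).out = #(St15.W κ) := by
    rw [Cardinal.mk_out, Cardinal.mk_ord_toType]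
  obtain ⟨e⟩ := Cardinal.eq.1 hc
  refine St15.main hκ hsing hl hpow (U.map e) ?_ ?_
  · intro a
    by_contra hcon
    rw [← Ultrafilter.eventually_not] at hcon
    have h1 : {x | ¬ a < e x} ∈ U := hcon
    have h2 := hu _ h1
    rw [Cardinal.mk_out] at h2
    have h3 : #{x | ¬ a < e x} ≤ #(Iic a) :=
      Cardinal.mk_le_of_injective (f := fun x => (⟨e x.1, not_lt.1 x.2⟩ : Iic a))
        fun x y hxy => Subtype.ext (e.injective (congrArg Subtype.val hxy))
    obtain ⟨b, hb⟩ := St15.W_gt hκ a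
    have h4 : #(Iic a) ≤ #(Iio b) :=
      Cardinal.mk_le_mk_of_subset fun x hx => lt_of_le_of_lt hx hb
    have h5 := (h3.trans h4).trans (St15.W_Iio b)
    rw [h2] at h5
    exact absurd h5 (not_le.2 (Order.lt_succ κ))
  · intro γ t hγ
    rw [← Cardinal.mk_out κ] at hγ
    obtain ⟨g⟩ := hγ
    unfold Decomposable at hd
    push Not at hd
    obtain ⟨X, hX, hXU⟩ := hd (fun x => g (t (e x)))
    refine ⟨g ⁻¹' X, ?_, ?_⟩
    · exact lt_of_le_of_lt (Cardinal.mk_preimage_of_injective _ _ g.injective) hX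
    · exact hXU
end

section
/- If κ is a strong limit singular cardinal, then u(κ) ≤ u(κ⁺). -/
open Cardinal Set

universe u v

theorem aux_pow_lt {κ a b : Cardinal.{u}} (h : κ.IsStrongLimit) (ha : a < κ) (hb : b < κ) :
    a ^ b < κ := by
  have h1 : a ^ b ≤ (2 ^ a) ^ b := Cardinal.power_le_power_right (Cardinal.cantor a).le
  rw [← Cardinal.power_mul] at h1
  exact h1.trans_lt (h.isStrongPrelimit (Cardinal.mul_lt_of_lt h.aleph0_le ha hb))

theorem aux_iUnion_le {ι T : Type u} {c d : Cardinal.{u}} (A : ι → Set T) (hι : #ι ≤ c)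
    (hA : ∀ i, #(A i) ≤ d) : #(⋃ i, A i) ≤ c * d := by
  refine (mk_iUnion_le_sum_mk).trans ?_
  refine (Cardinal.sum_le_sum _ (fun _ => d) hA).trans ?_
  rw [Cardinal.sum_const']
  exact mul_le_mul_left hι d

/-- Nodes: subsets of some `A x`. -/
theorem aux_nodes {κ : Cardinal.{u}} (h : κ.IsStrongLimit) {K T : Type u} (hK : #K = κ)
    (A : K → Set T) (hA : ∀ x, #(A x) < κ) : #{s : Set T | ∃ x, s ⊆ A x} ≤ κ := by
  have : {s : Set T | ∃ x, s ⊆ A x} = ⋃ x, 𝒫 (A x) := by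
    ext s; simp
  rw [this]
  refine (aux_iUnion_le (c := κ) (d := κ) _ hK.le ?_).trans (Cardinal.mul_eq_self h.aleph0_le).le
  intro x
  rw [mk_powerset]
  exact (h.isStrongPrelimit (hA x)).le

def Indec {S : Type u} (U : Ultrafilter S) (κ : Cardinal.{u}) : Prop :=
  ∀ (T : Type u) (_ : #T ≤ κ) (G : S → T), ∃ Y : Set T, #Y < κ ∧ G ⁻¹' Y ∈ U

/-- The gap lemma. -/
theorem aux_gap {κ : Cardinal.{u}} (h : κ.IsStrongLimit) {S K : Type u} (U : Ultrafilter S)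
    [LinearOrder K] (hK : #K = κ) (hlow : ∀ x : K, #(Iic x) < κ)
    (hhigh : ∀ μ < κ, ∃ x : K, μ ≤ #(Iic x))
    (hU : Indec U κ) (p : S → K) (hp : ∀ x, {s | x ≤ p s} ∈ U) :
    ∃ μ < κ, ∀ (T : Type u) (_ : #T ≤ κ) (G : S → T), ∃ Y : Set T, #Y ≤ μ ∧ G ⁻¹' Y ∈ U := by
  classical
  by_contra hcon
  push Not at hcon
  -- bounded bad functions
  have hF : ∀ c : K, ∃ (F : S → K) (w : K), {s | F s ≤ w} ∈ U ∧
      ∀ Y : Set K, #Y ≤ #(Iic c) → F ⁻¹' Y ∉ U := by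
    intro c
    obtain ⟨T, hT, G, hG⟩ := hcon _ (hlow c)
    obtain ⟨Y, hY, hYU⟩ := hU T hT G
    obtain ⟨w, hw⟩ := hhigh _ hY
    obtain ⟨i⟩ : Nonempty (Y ↪ Iic w) := hw
    refine ⟨fun s => if hs : G s ∈ Y then (i ⟨G s, hs⟩ : K) else w, w, ?_, ?_⟩
    · refine Filter.univ_mem' ?_
      intro s
      by_cases hs : G s ∈ Y
      · show (if hs : G s ∈ Y then (i ⟨G s, hs⟩ : K) else w) ≤ w
        rw [dif_pos hs]
        exact (i ⟨G s, hs⟩).2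
      · simp [hs]
    · intro Z hZ hZU
      refine hG ((fun y : Y => (y : T)) '' {y : Y | (i y : K) ∈ Z}) ?_ ?_
      · refine mk_image_le.trans (le_trans ?_ hZ)
        refine ⟨⟨fun y => ⟨(i y.1 : K), y.2⟩, ?_⟩⟩
        intro a b hab
        have : (i a.1 : K) = i b.1 := congrArg (fun z : Z => (z : K)) hab
        exact Subtype.ext (i.injective (Subtype.ext this))
      · filter_upwards [hYU, hZU] with s hs hs2
        have hs' : G s ∈ Y := hs
        refine ⟨⟨G s, hs'⟩, ?_, rfl⟩
        have := hs2
        simp only [mem_preimage, hs', dif_pos] at this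
        exact this
  choose F w hw hF using hF
  let N : Set (Set (K × K)) := {t | ∃ x : K, t ⊆ Iic x ×ˢ Iic x}
  have hN : #N ≤ κ := by
    refine aux_nodes h hK _ ?_
    intro x
    rw [Cardinal.mk_setProd]
    simpa using Cardinal.mul_lt_of_lt h.aleph0_le (hlow x) (hlow x)
  let G : S → N := fun s =>
    ⟨{q | q.1 ≤ p s ∧ q.2 ≤ p s ∧ q.2 = F q.1 s}, p s, fun q hq => ⟨hq.1, hq.2.1⟩⟩
  obtain ⟨Y, hY, hYU⟩ := hU N hN G
  obtain ⟨c, hc⟩ := hhigh _ hY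
  -- read off the value
  let val : N → K := fun t => if ht : ∃ y, (c, y) ∈ t.1 then ht.choose else c
  refine hF c (val '' Y) (mk_image_le.trans hc) ?_
  filter_upwards [hYU, hp c, hp (w c), hw c] with s h1 h2 h3 h4
  refine ⟨G s, h1, ?_⟩
  have hex : ∃ y, (c, y) ∈ (G s).1 := ⟨F c s, h2, le_trans h4 h3, rfl⟩
  simp only [val, dif_pos hex]
  exact hex.choose_spec.2.2

/-- Case (b) is contradictory. -/
theorem aux_caseb {κ : Cardinal.{u}} (h : κ.IsStrongLimit) {S K : Type u} (U : Ultrafilter S)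
    [LinearOrder K] (hK : #K = κ) (hlow : ∀ x : K, #(Iic x) < κ)
    (hhigh : ∀ μ < κ, ∃ x : K, μ ≤ #(Iic x)) (hS : κ < #S) (hunif : ∀ X ∈ U, κ ≤ #X)
    (hSle : #S ≤ 2 ^ κ)
    (hU : Indec U κ) (p : S → K) (hp : ∀ x, {s | x ≤ p s} ∈ U) : False := by
  classical
  obtain ⟨μ, hμ, hgap⟩ := aux_gap h U hK hlow hhigh hU p hp
  obtain ⟨C, hC, hCU⟩ := hU K hK.le p
  have hcof : ∀ x : K, ∃ c : C, x ≤ c := by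
    intro x
    obtain ⟨s, hs1, hs2⟩ := U.nonempty_of_mem (Filter.inter_mem hCU (hp x))
    exact ⟨⟨p s, hs1⟩, hs2⟩
  have hKne : Nonempty K := by
    rw [← Cardinal.mk_ne_zero_iff, hK]; exact h.ne_zero
  have hCne : Nonempty C := ⟨(hcof hKne.some).choose⟩
  let Q := Filter.Germ (U : Filter S) C
  have hQ : #Q ≤ #C ^ μ := by
    by_contra hQ
    have hτ : Order.succ (#C ^ μ) ≤ #Q := Order.succ_le_of_lt (not_le.mp hQ)
    have hlt : Order.succ (#C ^ μ) < κ := h.isSuccLimit.succ_lt (aux_pow_lt h hC hμ)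
    obtain ⟨J, hJ⟩ := Cardinal.le_mk_iff_exists_set.mp hτ
    have hQJ : #J < κ := hJ ▸ hlt
    let P : J → S → C := fun j => Quotient.out j.1
    have hP : ∀ j : J, ((P j : S → C) : Filter.Germ (U : Filter S) C) = j.1 :=
      fun j => Quotient.out_eq j.1
    let G : S → (J → C) := fun s j => P j s
    have hT : #(J → C) ≤ κ := by
      rw [← Cardinal.power_def]; exact (aux_pow_lt h hC hQJ).le
    obtain ⟨Y, hY, hYU⟩ := hgap _ hT G
    have hinj : Function.Injective (fun (j : J) (v : Y) => v.1 j) := by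
      intro j j' hjj
      apply Subtype.ext
      rw [← hP j, ← hP j']
      apply Filter.Germ.coe_eq.mpr
      filter_upwards [hYU] with s hs
      exact congrFun hjj ⟨G s, hs⟩
    have h1 := Cardinal.mk_le_of_injective hinj
    rw [← Cardinal.power_def, hJ] at h1
    have h2 : #C ^ #Y ≤ #C ^ μ := 
      Cardinal.power_le_power_left (Cardinal.mk_ne_zero _) hY
    exact absurd (h1.trans h2) (not_le.mpr (Order.lt_succ _))
  have hQκ : #Q < κ := hQ.trans_lt (aux_pow_lt h hC hμ)
  -- distinct subsets
  have hSX : #S ≤ #(Set K) := by rw [mk_set, hK]; exact hSle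
  obtain ⟨X⟩ : Nonempty (S ↪ Set K) := hSX
  let N : Set (Set K) := {t | ∃ x : K, t ⊆ Iic x}
  have hN : #N ≤ κ := aux_nodes h hK _ hlow
  let P : Q → S → C := fun j => Quotient.out j
  have hP : ∀ j : Q, ((P j : S → C) : Filter.Germ (U : Filter S) C) = j :=
    fun j => Quotient.out_eq j
  let node : S → K → N := fun s x => ⟨X s ∩ Iic x, x, inter_subset_right⟩
  have hYq : ∀ q : Q, ∃ Y : Set N, #Y ≤ μ ∧ (fun s => node s (P q s)) ⁻¹' Y ∈ U :=
    fun q => hgap N hN _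
  choose Yq hYq hYqU using hYq
  let Y : Set N := ⋃ q, Yq q
  have hY : #Y < κ := (aux_iUnion_le Yq le_rfl hYq).trans_lt
    (Cardinal.mul_lt_of_lt h.aleph0_le hQκ hμ)
  have hgood : {s | ∀ c : C, node s c ∈ Y} ∈ U := by
    by_contra hbad
    have hbad' := Ultrafilter.compl_mem_iff_notMem.mpr hbad
    let r : S → C := fun s => if hs : ∃ c : C, node s c ∉ Y then hs.choose else hCne.some
    let q : Q := (r : Filter.Germ (U : Filter S) C)
    have hrq : P q =ᶠ[(U : Filter S)] r := Filter.Germ.coe_eq.mp (hP q)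
    have : ∀ᶠ s in (U : Filter S), False := by
      filter_upwards [hbad', hrq, hYqU q] with s h1 h2 h3
      have hs : ∃ c : C, node s c ∉ Y := by
        simpa using h1
      have h4 : node s (r s) ∉ Y := by
        simp only [r, dif_pos hs]
        exact hs.choose_spec
      apply h4
      rw [← h2]
      exact mem_iUnion.mpr ⟨q, h3⟩
    simp at this
    exact U.neBot.ne this
  have h1 := hunif _ hgood
  have hinj : Function.Injective
      (fun (s : {s | ∀ c : C, node s c ∈ Y}) (c : C) => (⟨node s c, s.2 c⟩ : Y)) := by
    intro s t hst
    apply Subtype.ext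
    apply X.injective
    have key : ∀ c : C, X s ∩ Iic (c : K) = X t ∩ Iic (c : K) := by
      intro c
      have := congrFun hst c
      exact congrArg (fun z : Y => z.1.1) this
    ext x
    obtain ⟨c, hc⟩ := hcof x
    have := Set.ext_iff.mp (key c) x
    simpa [hc] using this
  have h2 := Cardinal.mk_le_of_injective hinj
  rw [← Cardinal.power_def] at h2
  exact absurd (h1.trans h2) (not_le.mpr (aux_pow_lt h hY hC))

/-- Case (a): `2 ^ κ ≤ κ⁺`. -/
theorem aux_casea {κ : Cardinal.{u}} (h : κ.IsStrongLimit) {S K : Type u} (U : Ultrafilter S)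
    [LinearOrder K] (hK : #K = κ) (hlow : ∀ x : K, #(Iic x) < κ)
    (hhigh : ∀ μ < κ, ∃ x : K, μ ≤ #(Iic x)) (hS : #S = Order.succ κ)
    (R : S → S → Prop) (e : S → S → K) (he : ∀ α, InjOn (e α) {β | R β α})
    (hR : ∀ β, {α | R β α} ∈ U)
    (hbd : ∀ p : S → K, ∃ x, {s | p s ≤ x} ∈ U) : 2 ^ κ ≤ Order.succ κ := by
  classical
  have hx : ∀ β, ∃ x, {α | e α β ≤ x} ∈ U := fun β => hbd _
  choose x hx using hx
  obtain ⟨z, hz⟩ : ∃ z, κ ≤ #(x ⁻¹' {z}) := by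
    by_contra hcon
    push Not at hcon
    have h1 := aux_iUnion_le (fun z => x ⁻¹' {z}) hK.le (fun z => (hcon z).le)
    have h2 : (⋃ z, x ⁻¹' {z}) = Set.univ := by ext; simp
    rw [h2, mk_univ, hS, Cardinal.mul_eq_self h.aleph0_le] at h1
    exact absurd h1 (not_le.mpr (Order.lt_succ _))
  let N : Set (Set K) := {t | ∃ x : K, t ⊆ Iic x}
  have hN : #N ≤ κ := aux_nodes h hK _ hlow
  obtain ⟨i⟩ : Nonempty (N ↪ x ⁻¹' {z}) := hN.trans hz
  let A : S → Set N := fun α => {t | R (i t) α ∧ e α (i t) ≤ z}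
  have hA : ∀ α, #(A α) < κ := by
    intro α
    refine lt_of_le_of_lt ?_ (hlow z)
    refine ⟨⟨fun t => ⟨e α (i t.1), t.2.2⟩, ?_⟩⟩
    intro a b hab
    have h1 : e α (i a.1) = e α (i b.1) := congrArg Subtype.val hab
    have h2 := he α a.2.1 b.2.1 h1
    exact Subtype.ext (i.injective (Subtype.ext h2))
  have hAU : ∀ t : N, {α | t ∈ A α} ∈ U := by
    intro t
    have hxt : x (i t) = z := (i t).2
    filter_upwards [hR (i t), hx (i t)] with α h1 h2
    have h2' : e α (i t) ≤ x (i t) := h2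
    exact ⟨h1, h2'.trans hxt.le⟩
  let node : Set K → K → N := fun X y => ⟨X ∩ Iic y, y, inter_subset_right⟩
  let Cap : S → Set (Set K) := fun α => {X | ∀ y, ∃ y', y ≤ y' ∧ node X y' ∈ A α}
  have hnomax : ∀ y : K, ∃ y', y < y' := by
    intro y
    obtain ⟨y', hy'⟩ := hhigh _ (h.isSuccLimit.succ_lt (hlow y))
    refine ⟨y', ?_⟩
    by_contra hle
    have : #(Iic y') ≤ #(Iic y) := mk_le_mk_of_subset (Iic_subset_Iic.mpr (not_lt.mp hle))
    exact absurd (hy'.trans this) (not_le.mpr (Order.lt_succ _))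
  have hcap : (⋃ α, Cap α) = Set.univ := by
    rw [eq_univ_iff_forall]
    intro X
    by_contra hX
    simp only [mem_iUnion, not_exists] at hX
    have hX' : ∀ α, ∃ y, ∀ y', y ≤ y' → node X y' ∉ A α := by
      intro α
      have := hX α
      simp only [Cap, mem_ofPred_eq] at this
      push Not at this
      exact this
    choose p hp using hX'
    obtain ⟨y, hy⟩ := hbd p
    obtain ⟨α, h1, h2⟩ := U.nonempty_of_mem (Filter.inter_mem hy (hAU (node X y)))
    exact hp α y h1 h2
  have hcapc : ∀ α, #(Cap α) ≤ κ := by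
    intro α
    have hinj : Function.Injective
        (fun X : Cap α => {t : A α | ∃ y, t.1 = node X.1 y}) := by
      have key : ∀ X : Cap α, ∀ a, a ∈ X.1 ↔ ∃ t : A α, (∃ y, t.1 = node X.1 y) ∧ a ∈ t.1.1 := by
        intro X a
        constructor
        · intro ha
          obtain ⟨y', hy, hy'⟩ := X.2 a
          exact ⟨⟨_, hy'⟩, ⟨y', rfl⟩, ha, hy⟩
        · rintro ⟨t, ⟨y, hy⟩, hat⟩
          rw [hy] at hat
          exact hat.1
      intro X X' hXX
      apply Subtype.ext
      ext a
      rw [key X, key X']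
      have := fun t : A α => Set.ext_iff.mp hXX t
      simp only [mem_ofPred_eq] at this
      simp only [this]
    have h1 := Cardinal.mk_le_of_injective hinj
    rw [mk_set] at h1
    exact h1.trans (h.isStrongPrelimit (hA α)).le
  have h1 := aux_iUnion_le Cap hS.le hcapc
  rw [hcap, mk_univ, mk_set, hK] at h1
  refine h1.trans ?_
  have hs : ℵ₀ ≤ Order.succ κ := h.aleph0_le.trans (Order.le_succ _)
  exact (mul_le_mul_right (Order.le_succ κ) _).trans (Cardinal.mul_eq_self hs).le

theorem aux_charU_exists {α : Type u} (U : Ultrafilter α) :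
    ∃ B : Set (Set α), #B = charU U ∧ (∀ X ∈ B, X ∈ U) ∧ ∀ Y ∈ U, ∃ X ∈ B, X ⊆ Y := by
  have hne : {c | ∃ B : Set (Set α), #B = c ∧ (∀ X ∈ B, X ∈ U) ∧
      ∀ Y ∈ U, ∃ X ∈ B, X ⊆ Y}.Nonempty :=
    ⟨_, {X | X ∈ U}, rfl, fun X hX => hX, fun Y hY => ⟨Y, hY, subset_rfl⟩⟩
  exact csInf_mem hne

theorem aux_charU_le {α : Type u} (U : Ultrafilter α) (B : Set (Set α))
    (h1 : ∀ X ∈ B, X ∈ U) (h2 : ∀ Y ∈ U, ∃ X ∈ B, X ⊆ Y) : charU U ≤ #B :=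
  csInf_le' ⟨B, rfl, h1, h2⟩

theorem aux_uNumber_le {κ : Cardinal.{u}} (U : Ultrafilter κ.out) (hU : Uniform U) :
    uNumber κ ≤ charU U := csInf_le' ⟨U, hU, rfl⟩

theorem aux_uNumber_le_pow (κ : Cardinal.{u}) : uNumber κ ≤ 2 ^ κ := by
  by_cases hne : ∃ U : Ultrafilter κ.out, Uniform U
  · obtain ⟨U, hU⟩ := hne
    refine (aux_uNumber_le U hU).trans ?_
    refine (aux_charU_le U {X | X ∈ U} (fun X hX => hX)
      (fun Y hY => ⟨Y, hY, subset_rfl⟩)).trans ?_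
    refine (mk_set_le _).trans ?_
    rw [mk_set, mk_out]
  · have : {c | ∃ U : Ultrafilter κ.out, Uniform U ∧ charU U = c} = ∅ := by
      ext c
      simp only [mem_ofPred_eq, mem_empty_iff_false, iff_false]
      rintro ⟨U, hU, -⟩
      exact hne ⟨U, hU⟩
    unfold uNumber
    rw [this, Cardinal.sInf_empty]
    exact bot_le

theorem aux_exists_uniform (κ : Cardinal.{u}) (hκ : κ.IsRegular) :
    ∃ U : Ultrafilter κ.out, Uniform U := by
  have hne : (Filter.cocardinal κ.out hκ).NeBot := by
    rw [Filter.neBot_iff, Ne, ← Filter.empty_mem_iff_bot, Filter.mem_cocardinal]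
    simp
  refine ⟨Ultrafilter.of (Filter.cocardinal κ.out hκ), ?_⟩
  intro X hX
  by_contra hcon
  have hlt : #X < κ := by
    have := mk_set_le X
    rw [mk_out] at this hcon
    exact lt_of_le_of_ne this hcon
  have hXc : Xᶜ ∈ Filter.cocardinal κ.out hκ := Filter.compl_mem_cocardinal_of_card_lt hlt
  exact Ultrafilter.compl_mem_iff_notMem.mp (Ultrafilter.of_le _ hXc) hX

theorem aux_le_charU {κ : Cardinal.{u}} {S : Type u} (hS : #S = Order.succ κ)
    (U : Ultrafilter S) (hU : Uniform U) : Order.succ κ ≤ charU U := by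
  obtain ⟨B, hB, hB1, hB2⟩ := aux_charU_exists U
  rw [← hB]
  by_contra hlt
  have hle : #B ≤ κ := Order.lt_succ_iff.mp (not_le.mp hlt)
  have hne : ∀ X : B, ∃ a, a ∈ X.1 := fun X => U.nonempty_of_mem (hB1 X.1 X.2)
  choose a ha using hne
  have hr : #(range a) ≤ κ := mk_range_le.trans hle
  by_cases hm : range a ∈ U
  · have := hU _ hm
    rw [this, hS] at hr
    exact absurd hr (not_le.mpr (Order.lt_succ _))
  · obtain ⟨X, hX, hXs⟩ := hB2 _ (Ultrafilter.compl_mem_iff_notMem.mpr hm)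
    exact hXs (ha ⟨X, hX⟩) ⟨_, rfl⟩

theorem aux_indec {κ : Cardinal.{u}} {S : Type u} (U : Ultrafilter S)
    (hlt : charU U < uNumber κ) : Indec U κ := by
  intro T hT G
  rw [← mk_out κ] at hT
  obtain ⟨i⟩ : Nonempty (T ↪ κ.out) := hT
  by_contra hcon
  push Not at hcon
  let F : S → κ.out := fun s => i (G s)
  let V : Ultrafilter κ.out := U.map F
  have hV : Uniform V := by
    intro X hX
    rw [mk_out]
    have hle := mk_set_le X
    rw [mk_out] at hle
    refine le_antisymm hle ?_
    by_contra hX'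
    refine hcon (i ⁻¹' X) ?_ hX
    exact (mk_preimage_of_injective _ _ i.injective).trans_lt (not_le.mp hX')
  obtain ⟨B, hB, hB1, hB2⟩ := aux_charU_exists U
  have h1 : charU V ≤ #((fun X => F '' X) '' B) := by
    refine aux_charU_le V _ ?_ ?_
    · rintro _ ⟨X, hX, rfl⟩
      exact Filter.image_mem_map (hB1 X hX)
    · intro Y hY
      obtain ⟨X, hX, hXY⟩ := hB2 _ (show F ⁻¹' Y ∈ U from hY)
      exact ⟨_, ⟨X, hX, rfl⟩, image_subset_iff.mpr hXY⟩
  have h2 := (aux_uNumber_le V hV).trans (h1.trans (mk_image_le.trans hB.le))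
  exact absurd h2 (not_le.mpr hlt)

theorem aux_high {κ : Cardinal.{u}} (μ : Cardinal.{u}) (hμ : μ < κ) :
    ∃ x : κ.ord.ToType, μ ≤ #(Iic x) := by
  have h1 : μ.ord < Ordinal.type (α := κ.ord.ToType) (· < ·) := by
    rw [Ordinal.type_toType]; exact ord_lt_ord.mpr hμ
  refine ⟨Ordinal.enum (α := κ.ord.ToType) (· < ·) ⟨μ.ord, h1⟩, ?_⟩
  have h2 := Ordinal.typein_enum (α := κ.ord.ToType) (· < ·) h1
  have h3 := congrArg Ordinal.card h2
  rw [card_ord] at h3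
  refine h3.ge.trans ?_
  exact mk_le_mk_of_subset (fun y hy => mem_Iic.mpr (le_of_lt hy))

/-- If `κ` is a strong limit singular cardinal then `u(κ) ≤ u(κ⁺)`. -/
theorem stmt16 (κ : Cardinal.{u}) (hsl : κ.IsStrongLimit) (hsing : κ.ord.cof < κ) :
    uNumber κ ≤ uNumber (Order.succ κ) := by
  classical
  by_contra hcon
  have hlt := not_le.mp hcon
  have hinf := hsl.aleph0_le
  obtain ⟨U, hU, hUc⟩ : ∃ U : Ultrafilter (Order.succ κ).out,
      Uniform U ∧ charU U = uNumber (Order.succ κ) := by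
    obtain ⟨U₀, hU₀⟩ := aux_exists_uniform _ (isRegular_succ hinf)
    have hne : {c | ∃ U : Ultrafilter (Order.succ κ).out, Uniform U ∧ charU U = c}.Nonempty :=
      ⟨_, U₀, hU₀, rfl⟩
    exact csInf_mem hne
  have hS : #(Order.succ κ).out = Order.succ κ := mk_out _
  have hind : Indec U κ := aux_indec U (hUc ▸ hlt)
  have hK : #κ.ord.ToType = κ := mk_ord_toType κ
  have hlow : ∀ x : κ.ord.ToType, #(Iic x) < κ := by
    intro x
    have h1 : Iic x = insert x (Iio x) := by
      ext y; simp [le_iff_eq_or_lt]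
    rw [h1]
    exact (mk_insert_le).trans_lt (Cardinal.add_lt_of_lt hinf (mk_Iio_toType_ord_lt x)
      (one_lt_aleph0.trans_le hinf))
  have hunif : ∀ X ∈ U, Order.succ κ ≤ #X := fun X hX => by rw [hU X hX, hS]
  by_cases hbd : ∀ p : (Order.succ κ).out → κ.ord.ToType, ∃ x, {s | p s ≤ x} ∈ U
  · obtain ⟨φ⟩ : Nonempty ((Order.succ κ).out ≃ (Order.succ κ).ord.ToType) := by
      rw [← Cardinal.eq, hS, mk_ord_toType]
    have hsmall : ∀ α : (Order.succ κ).ord.ToType, #(Iio α) ≤ κ := fun α =>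
      Order.lt_succ_iff.mp (mk_Iio_toType_ord_lt α)
    have hemb : ∀ α : (Order.succ κ).ord.ToType, Nonempty (Iio α ↪ κ.ord.ToType) := fun α => by
      have := (hsmall α).trans hK.ge
      exact this
    let g : ∀ α : (Order.succ κ).ord.ToType, (Iio α ↪ κ.ord.ToType) := fun α => (hemb α).some
    obtain ⟨k₀⟩ : Nonempty κ.ord.ToType := by
      rw [← Cardinal.mk_ne_zero_iff, hK]; exact hsl.ne_zero
    have h2 := aux_casea hsl U hK hlow aux_high hS (fun β α => φ β < φ α)
      (fun α β => if hβ : φ β < φ α then g (φ α) ⟨φ β, hβ⟩ else k₀) ?_ ?_ hbd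
    · have h3 := aux_le_charU hS U hU
      rw [hUc] at h3
      exact hcon ((aux_uNumber_le_pow κ).trans (h2.trans h3))
    · intro α β hβ γ hγ hbc
      have hβ' : φ β < φ α := hβ
      have hγ' : φ γ < φ α := hγ
      simp only [hβ', hγ', dif_pos] at hbc
      have := (g (φ α)).injective hbc
      exact φ.injective (congrArg Subtype.val this)
    · intro β
      by_contra hm
      have h3 := hunif _ (Ultrafilter.compl_mem_iff_notMem.mpr hm)
      have h4 : #({α | φ β < φ α}ᶜ : Set (Order.succ κ).out) ≤ κ := by
        have h5 : ({α | φ β < φ α}ᶜ : Set (Order.succ κ).out) = φ ⁻¹' (insert (φ β) (Iio (φ β))) := by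
          ext y; simp [le_iff_eq_or_lt]
        rw [h5]
        refine (mk_preimage_of_injective _ _ φ.injective).trans (mk_insert_le.trans ?_)
        exact Cardinal.add_le_of_le hinf (hsmall _) (one_lt_aleph0.le.trans hinf)
      exact absurd (h3.trans h4) (not_le.mpr (Order.lt_succ _))
  · push Not at hbd
    obtain ⟨p, hp⟩ := hbd
    refine aux_caseb hsl U hK hlow aux_high ((Order.lt_succ κ).trans_eq hS.symm)
      (fun X hX => (Order.le_succ κ).trans (hunif X hX)) ?_ hind p ?_
    · rw [hS]; exact Order.succ_le_of_lt (cantor κ)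
    · intro x
      filter_upwards [Ultrafilter.compl_mem_iff_notMem.mpr (hp x)] with s hs
      have hs' : ¬ (p s ≤ x) := hs
      exact (not_le.mp hs').le
end
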